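/- arXiv:1509.02803 — 4 statements merged into one kernel-verified Lean document; each statement's English description precedes it below -/
import Mathlib

section
/- Let σ, M > 0 and let f : ℝ → ℂ be bandlimited with parameters (σ, M). Then for all x, y ∈ ℝ with x ≠ y and σx ∉ πℤ, the following sampling representation of the divided difference holds: (f(x) − f(y))/(x − y) = Σ_{n∈ℤ} σ·((f(x) − f(πn/σ))/(σx − πn))·(sin(σy − πn)/(σy − πn)), where sin(t)/t is understood as 1 when t = 0, and the series converges absolutely. -/
/-- `sin t / t`, understood as `1` at `t = 0`. -/
noncomputable def sinc (t : ℝ) : ℝ := if t = 0 then 1 else Real.sin t / t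

section aux
open Complex Filter Topology

theorem quot_diff (k : ℂ → ℂ) (hk : Differentiable ℂ k) (w : ℂ) (hw : sin w = 0 → k w = 0) :
    DifferentiableAt ℂ (fun z => if sin z = 0 then deriv k z / cos z else k z / sin z) w := by
  by_cases h : sin w = 0
  · have hds : Differentiable ℂ (dslope sin w) :=
      differentiableOn_univ.1 ((differentiableOn_dslope univ_mem).2 differentiable_sin.differentiableOn)
    have hdk : Differentiable ℂ (dslope k w) :=
      differentiableOn_univ.1 ((differentiableOn_dslope univ_mem).2 hk.differentiableOn)
    have hcos : dslope sin w w ≠ 0 := by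
      rw [dslope_same, Complex.deriv_sin]
      intro hc
      have := Complex.sin_sq_add_cos_sq w
      rw [h, hc] at this
      norm_num at this
    refine DifferentiableAt.congr_of_eventuallyEq ((hdk w).div (hds w) hcos) ?_
    filter_upwards [(hds w).continuousAt.eventually_ne hcos] with z hz
    by_cases hzw : z = w
    · subst hzw
      simp [h, Complex.deriv_sin]
    · have hzw' : z - w ≠ 0 := sub_ne_zero.2 hzw
      have h1 : (z - w) * dslope sin w z = sin z := by
        have := sub_smul_dslope sin w z
        rwa [h, sub_zero, smul_eq_mul] at this
      have h2 : (z - w) * dslope k w z = k z := by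
        have := sub_smul_dslope k w z
        rwa [hw h, sub_zero, smul_eq_mul] at this
      have h3 : sin z ≠ 0 := by rw [← h1]; exact mul_ne_zero hzw' hz
      rw [if_neg h3, ← h1, ← h2, Pi.div_apply]
      field_simp
  · refine DifferentiableAt.congr_of_eventuallyEq ((hk w).div (differentiable_sin w) h) ?_
    filter_upwards [continuous_sin.continuousAt.eventually_ne h] with z hz
    simp [hz]

theorem sin_lower (N : ℕ) (z : ℂ) (hz : |z.re| = (N + 1/2) * Real.pi ∨ |z.im| = (N + 1/2) * Real.pi) :
    Real.exp |z.im| ≤ 4 * ‖sin z‖ := by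
  have hs : sin z = ((Real.sin z.re * Real.cosh z.im : ℝ) : ℂ) + ((Real.cos z.re * Real.sinh z.im : ℝ) : ℂ) * I := by
    conv_lhs => rw [← re_add_im z, Complex.sin_add_mul_I]
    push_cast; ring
  have hre : (sin z).re = Real.sin z.re * Real.cosh z.im := by rw [hs]; simp [-ofReal_mul]
  have him : (sin z).im = Real.cos z.re * Real.sinh z.im := by rw [hs]; simp [-ofReal_mul]
  have hnorm : ‖sin z‖ ^ 2 = Real.sin z.re ^ 2 + Real.sinh z.im ^ 2 := by
    rw [← normSq_eq_norm_sq, normSq_apply, hre, him]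
    have h1 := Real.sin_sq_add_cos_sq z.re
    have h2 := Real.cosh_sq z.im
    have h3 : Real.cos z.re ^ 2 = 1 - Real.sin z.re ^ 2 := by linarith
    calc _ = Real.sin z.re ^ 2 * Real.cosh z.im ^2 + Real.cos z.re ^ 2 * Real.sinh z.im ^ 2 := by ring
      _ = _ := by rw [h2, h3]; ring
  have hc : Real.cosh z.im = (Real.exp |z.im| + Real.exp (-|z.im|)) / 2 := by
    rw [← Real.cosh_abs, Real.cosh_eq]
  have hpos := Real.exp_pos (-|z.im|)
  rcases hz with h | h
  · have hsin : Real.sin z.re ^ 2 = 1 := by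
      rw [← sq_abs]
      have : |Real.sin z.re| = abs (Real.sin (abs z.re)) := by
        rcases abs_cases z.re with h | h <;> simp [h.1]
      rw [this, h, show ((N:ℝ) + 1/2) * Real.pi = Real.pi / 2 + N * Real.pi by ring, Real.sin_add_nat_mul_pi]
      simp
    rw [hsin, add_comm, ← Real.cosh_sq] at hnorm
    have := (sq_eq_sq₀ (norm_nonneg _) (Real.cosh_pos _).le).1 hnorm
    rw [this, hc]
    linarith [Real.exp_pos |z.im|]
  · have hN : (1:ℝ) ≤ |z.im| := by
      rw [h]; nlinarith [Real.pi_gt_three, (Nat.cast_nonneg N : (0:ℝ) ≤ N)]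
    have hsh : |Real.sinh z.im| = (Real.exp |z.im| - Real.exp (-|z.im|)) / 2 := by
      rw [← Real.sinh_eq, Real.abs_sinh]
    have h1 : |Real.sinh z.im| ≤ ‖sin z‖ := by
      apply abs_le_of_sq_le_sq' _ (norm_nonneg _) |>.2
      rw [sq_abs, hnorm]; nlinarith [sq_nonneg (Real.sin z.re)]
    have h2 : Real.exp (-|z.im|) ≤ 1 := Real.exp_le_one_iff.2 (by linarith)
    have h3 : 2 ≤ Real.exp |z.im| := by linarith [Real.add_one_le_exp |z.im|]
    linarith

theorem sum_bound (N : ℕ) :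
    ∑ n ∈ Finset.Icc (-(N:ℤ)) N, 1 / ((1 + |(n:ℝ)|) * (N + 1 - |(n:ℝ)|)) ≤
      4 * ((N+1:ℕ):ℝ)⁻¹ * ∑ j ∈ Finset.range (N+1), (1 / ((j:ℝ) + 1)) := by
  rw [Finset.sum_Icc_of_even_eq_range (f := fun n : ℤ => 1 / ((1 + |(n:ℝ)|) * (N + 1 - |(n:ℝ)|))) (fun n => by simp)]
  have h0 : ∑ j ∈ Finset.range (N+1), (1 / ((N:ℝ) + 1 - j)) = ∑ j ∈ Finset.range (N+1), (1 / ((j:ℝ) + 1)) := by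
    rw [← Finset.sum_range_reflect]
    refine Finset.sum_congr rfl fun j hj => ?_
    have : j ≤ N := by simpa [Nat.lt_succ_iff] using hj
    congr 1
    rw [show N + 1 - 1 - j = N - j by omega]
    push_cast [this]; ring
  have h1 : ∑ j ∈ Finset.range (N+1), 1 / ((1 + |((j:ℤ):ℝ)|) * (N + 1 - |((j:ℤ):ℝ)|)) ≤
     ∑ j ∈ Finset.range (N+1), ((N+1:ℕ):ℝ)⁻¹ * (1 / ((j:ℝ) + 1) + 1 / ((N:ℝ) + 1 - j)) := by
    refine Finset.sum_le_sum fun j hj => ?_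
    have : j ≤ N := by simpa [Nat.lt_succ_iff] using hj
    have : (j:ℝ) ≤ N := by exact_mod_cast this
    have h2 : (0:ℝ) < N + 1 - j := by linarith
    have h3 : (0:ℝ) < j + 1 := by positivity
    have h4 : (0:ℝ) < N + 1 := by positivity
    simp only [Int.cast_natCast, Nat.abs_cast]
    push_cast
    rw [div_add_div _ _ h3.ne' h2.ne', inv_mul_eq_div, div_div, div_le_div_iff₀ (by positivity) (by positivity)]
    have : 0 < (j+1:ℝ) * (N+1-j) := by positivity
    nlinarith
  rw [← Finset.mul_sum, Finset.sum_add_distrib, h0] at h1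
  simp only [nsmul_eq_mul]
  have : (0:ℝ) ≤ 1 / ((1 + |((0:ℤ):ℝ)|) * (N + 1 - |((0:ℤ):ℝ)|)) := by simp; positivity
  push_cast at *
  linarith

theorem main_bound (g : ℂ → ℂ) (hg : Differentiable ℂ g) (C : ℝ)
    (hC : ∀ z, ‖g z‖ * (1 + ‖z‖) ≤ C * Real.exp |z.im|) (b : ℝ) (hb : sin (b:ℂ) ≠ 0)
    (N : ℕ) (hN : |b| ≤ N) :
    ‖g b - ∑ n ∈ Finset.Icc (-(N:ℤ)) N, g (n * Real.pi) * (cos (n * Real.pi) * sin b / (b - n * Real.pi))‖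
      ≤ (4 * C * (1 / ((N:ℝ) + 1)) + C * (4 * ((N+1:ℕ):ℝ)⁻¹ * ∑ j ∈ Finset.range (N+1), (1 / ((j:ℝ) + 1)))) * ‖sin (b:ℂ)‖ := by
  have hC0 : 0 ≤ C := by
    have := hC 0
    simp at this
    exact (norm_nonneg _).trans this
  have hNr : (0:ℝ) ≤ N := Nat.cast_nonneg N
  have hpi := Real.pi_gt_three
  set R : ℝ := (N + 1/2) * Real.pi with hR
  have hR0 : 0 < R := by positivity
  have hsn : ∀ n : ℤ, sin (n * Real.pi : ℂ) = 0 := fun n => sin_int_mul_pi n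
  have hds : ∀ (n : ℤ) (z : ℂ), (z - n * Real.pi) * dslope sin (n * Real.pi) z = sin z := by
    intro n z
    have := sub_smul_dslope sin (n * Real.pi : ℂ) z
    rwa [hsn, sub_zero, smul_eq_mul] at this
  have hds' : ∀ (n : ℤ) (z : ℂ), sin z ≠ 0 → dslope sin (n * Real.pi) z = sin z / (z - n * Real.pi) := by
    intro n z hz
    have h := hds n z
    have : z - n * Real.pi ≠ 0 := by
      intro h0; rw [h0, zero_mul] at h; exact hz h.symm
    rw [eq_div_iff this, mul_comm]; exact h
  have hcos : ∀ n : ℤ, cos (n * Real.pi : ℂ) ^ 2 = 1 := by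
    intro n
    have := Complex.sin_sq_add_cos_sq (n * Real.pi : ℂ)
    rwa [hsn, zero_pow two_ne_zero, zero_add] at this
  have hcosn : ∀ n : ℤ, ‖cos (n * Real.pi : ℂ)‖ = 1 := by
    intro n
    have := congrArg norm (hcos n)
    rw [norm_pow, norm_one] at this
    exact (pow_eq_one_iff_of_nonneg (norm_nonneg _) two_ne_zero).1 this
  set k : ℂ → ℂ := fun z => g z - ∑ n ∈ Finset.Icc (-(N:ℤ)) N,
    g (n * Real.pi) * (cos (n * Real.pi) * dslope sin (n * Real.pi) z) with hk
  have hkd : Differentiable ℂ k := by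
    refine hg.sub (Differentiable.fun_sum fun n _ => ?_)
    refine Differentiable.const_mul (Differentiable.const_mul ?_ _) _
    exact differentiableOn_univ.1 ((differentiableOn_dslope univ_mem).2 differentiable_sin.differentiableOn)
  have hk0 : ∀ m ∈ Finset.Icc (-(N:ℤ)) N, k (m * Real.pi) = 0 := by
    intro m hm
    simp only [hk]
    rw [Finset.sum_eq_single m]
    · rw [dslope_same, Complex.deriv_sin, ← sq, hcos]; ring
    · intro n _ hnm
      have h := hds n (m * Real.pi)
      rw [hsn] at h
      have h2 : ((m:ℂ) * Real.pi - n * Real.pi) ≠ 0 := by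
        rw [← sub_mul]
        refine mul_ne_zero (sub_ne_zero.2 ?_) (by exact_mod_cast Real.pi_ne_zero)
        exact_mod_cast hnm.symm
      rw [(mul_eq_zero.1 h).resolve_left h2]; ring
    · intro h; exact absurd hm h
  set U : Set ℂ := Set.Ioo (-R) R ×ℂ Set.Ioo (-R) R with hU
  have hUb : Bornology.IsBounded U := (Metric.isBounded_Ioo _ _).reProdIm (Metric.isBounded_Ioo _ _)
  have hne : -R ≠ R := by linarith
  have hlt : -R < R := by linarith
  have hcl : closure U = Set.Icc (-R) R ×ℂ Set.Icc (-R) R := by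
    rw [hU, closure_reProdIm, closure_Ioo hne]
  set h : ℂ → ℂ := fun z => if sin z = 0 then deriv k z / cos z else k z / sin z with hh
  have hhd : DiffContOnCl ℂ h U := by
    apply DifferentiableOn.diffContOnCl
    intro w hw
    refine (quot_diff k hkd w ?_).differentiableWithinAt
    intro hs
    obtain ⟨m, rfl⟩ := Complex.sin_eq_zero_iff.1 hs
    apply hk0
    rw [hcl, mem_reProdIm] at hw
    have h1 := hw.1
    simp [hR] at h1
    rw [Finset.mem_Icc]
    constructor
    · by_contra! hlt
      have : (m:ℝ) + 1 ≤ -N := by exact_mod_cast hlt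
      nlinarith
    · by_contra! hlt
      have : (N:ℝ) + 1 ≤ m := by exact_mod_cast hlt
      nlinarith
  have hfr : ∀ z ∈ frontier U, ‖h z‖ ≤ 4 * C * (1 / ((N:ℝ) + 1)) + C * (4 * ((N+1:ℕ):ℝ)⁻¹ * ∑ j ∈ Finset.range (N+1), (1 / ((j:ℝ) + 1))) := by
    intro z hz
    have hz' : |z.re| = R ∨ |z.im| = R := by
      rw [hU, frontier_reProdIm, closure_Ioo hne, frontier_Ioo hlt] at hz
      rcases hz with hz | hz
      · right
        have := (mem_reProdIm.1 hz).2
        rcases this with h | h <;> rw [show _ = _ from h] <;> simp [abs_of_pos hR0]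
      · left
        have := (mem_reProdIm.1 hz).1
        rcases this with h | h <;> rw [show _ = _ from h] <;> simp [abs_of_pos hR0]
    have hsl := sin_lower N z hz'
    have hspos : 0 < ‖sin z‖ := by linarith [Real.exp_pos |z.im|]
    have hs0 : sin z ≠ 0 := norm_pos_iff.1 hspos
    have hzR : R ≤ ‖z‖ := by
      rcases hz' with h | h
      · rw [← h]; exact abs_re_le_norm z
      · rw [← h]; exact abs_im_le_norm z
    have hval : h z = g z / sin z - ∑ n ∈ Finset.Icc (-(N:ℤ)) N, g (n * Real.pi) * (cos (n * Real.pi) / (z - n * Real.pi)) := by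
      simp only [hh, hk]
      rw [if_neg hs0, sub_div, Finset.sum_div]
      congr 1
      refine Finset.sum_congr rfl fun n _ => ?_
      rw [hds' n z hs0]
      field_simp
    rw [hval]
    refine (norm_sub_le _ _).trans (add_le_add ?_ ?_)
    · rw [norm_div, div_le_iff₀ hspos]
      have h1 := hC z
      have h2 : ‖g z‖ * (1 + N) ≤ ‖g z‖ * (1 + ‖z‖) := by
        gcongr
        nlinarith
      have h3 : C * Real.exp |z.im| ≤ C * (4 * ‖sin z‖) := by gcongr
      have h4 : ‖g z‖ ≤ C * (4 * ‖sin z‖) / (1 + N) := by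
        rw [le_div_iff₀ (by positivity)]; linarith
      calc _ ≤ _ := h4
        _ = _ := by rw [add_comm (1:ℝ)]; ring
    · refine le_trans ?_ (mul_le_mul_of_nonneg_left (sum_bound N) hC0)
      rw [Finset.mul_sum]
      refine (norm_sum_le _ _).trans (Finset.sum_le_sum fun n hn => ?_)
      have hnN : |(n:ℝ)| ≤ N := by
        rw [Finset.mem_Icc] at hn
        rw [abs_le]
        exact ⟨by exact_mod_cast hn.1, by exact_mod_cast hn.2⟩
      have hnn : ‖(n * Real.pi : ℂ)‖ = |(n:ℝ)| * Real.pi := by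
        rw [norm_mul, norm_real, Real.norm_of_nonneg Real.pi_pos.le]
        simp
      have h1 : ‖g (n * Real.pi)‖ ≤ C / (1 + |(n:ℝ)|) := by
        rw [le_div_iff₀ (by positivity)]
        have h1 := hC (n * Real.pi)
        have h0 : (n * Real.pi : ℂ).im = 0 := by simp
        rw [h0, abs_zero, Real.exp_zero, mul_one, hnn] at h1
        refine le_trans ?_ h1
        gcongr
        nlinarith [abs_nonneg (n:ℝ)]
      have h2 : (N:ℝ) + 1 - |(n:ℝ)| ≤ ‖z - n * Real.pi‖ := by
        have h3 := norm_sub_norm_le z (n * Real.pi)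
        rw [hnn] at h3
        nlinarith
      have h3 : (0:ℝ) < (N:ℝ) + 1 - |(n:ℝ)| := by linarith
      rw [norm_mul, norm_div, hcosn]
      calc _ ≤ C / (1 + |(n:ℝ)|) * (1 / ((N:ℝ) + 1 - |(n:ℝ)|)) := by gcongr
        _ = _ := by rw [div_mul_div_comm, mul_one, mul_one_div]
  have hbcl : (b:ℂ) ∈ closure U := by
    rw [hcl, mem_reProdIm]
    have hbR : |b| ≤ R := by nlinarith
    simpa using ⟨abs_le.1 hbR, hR0.le⟩
  have hfin := Complex.norm_le_of_forall_mem_frontier_norm_le hUb hhd hfr hbcl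
  have hkb : h b = k b / sin b := by simp only [hh]; rw [if_neg hb]
  rw [hkb, norm_div, div_le_iff₀ (norm_pos_iff.2 hb)] at hfin
  have hkk : g b - ∑ n ∈ Finset.Icc (-(N:ℤ)) N,
      g (n * Real.pi) * (cos (n * Real.pi) * sin b / (b - n * Real.pi)) = k b := by
    simp only [hk]
    congr 1
    refine Finset.sum_congr rfl fun n _ => ?_
    rw [hds' n b hb]
    ring
  rw [hkk]
  exact hfin

theorem main_tendsto (g : ℂ → ℂ) (hg : Differentiable ℂ g) (C : ℝ)
    (hC : ∀ z, ‖g z‖ * (1 + ‖z‖) ≤ C * Real.exp |z.im|) (b : ℝ) (hb : sin (b:ℂ) ≠ 0) :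
    Tendsto (fun N : ℕ => ∑ n ∈ Finset.Icc (-(N:ℤ)) N, g (n * Real.pi) * (cos (n * Real.pi) * sin b / (b - n * Real.pi)))
      atTop (𝓝 (g b)) := by
  rw [tendsto_iff_norm_sub_tendsto_zero]
  have h1 := tendsto_one_div_add_atTop_nhds_zero_nat (𝕜 := ℝ)
  have h2 := h1.cesaro.comp (tendsto_add_atTop_nat 1)
  have h3 : Tendsto (fun N : ℕ => (4 * C * (1 / ((N:ℝ) + 1)) + C * (4 * ((N+1:ℕ):ℝ)⁻¹ * ∑ j ∈ Finset.range (N+1), (1 / ((j:ℝ) + 1)))) * ‖sin (b:ℂ)‖) atTop (𝓝 0) := by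
    have := ((h1.const_mul (4 * C)).add ((h2.const_mul 4).const_mul C)).mul_const ‖sin (b:ℂ)‖
    simp only [mul_zero, add_zero, zero_mul] at this
    refine this.congr fun N => ?_
    simp only [Function.comp]
    ring
  refine squeeze_zero' (Eventually.of_forall fun _ => norm_nonneg _) ?_ h3
  filter_upwards [eventually_ge_atTop ⌈|b|⌉₊] with N hN
  rw [norm_sub_rev]
  exact main_bound g hg C hC b hb N (Nat.ceil_le.1 hN)

theorem dslope_bound (G : ℂ → ℂ) (hG : Differentiable ℂ G) (M : ℝ)
    (hGb : ∀ z, ‖G z‖ ≤ M * Real.exp |z.im|) (a : ℝ) :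
    ∃ C : ℝ, ∀ z, ‖dslope G a z‖ * (1 + ‖z‖) ≤ C * Real.exp |z.im| := by
  have hgd : Differentiable ℂ (dslope G a) :=
    differentiableOn_univ.1 ((differentiableOn_dslope univ_mem).2 hG.differentiableOn)
  have hcont : Continuous fun z => ‖dslope G a z‖ * (1 + ‖z‖) :=
    hgd.continuous.norm.mul (continuous_const.add continuous_norm)
  obtain ⟨B, hB⟩ := (isCompact_closedBall (a:ℂ) 1).bddAbove_image hcont.continuousOn
  have hM : 0 ≤ M := by
    have := hGb 0
    simp at this
    exact (norm_nonneg _).trans this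
  refine ⟨max B (2 * M * (2 + |a|)), fun z => ?_⟩
  have he : 1 ≤ Real.exp |z.im| := Real.one_le_exp (abs_nonneg _)
  have hmax0 : 0 ≤ max B (2 * M * (2 + |a|)) := le_max_of_le_right (by positivity)
  by_cases hz : z ∈ Metric.closedBall (a:ℂ) 1
  · have h1 : ‖dslope G a z‖ * (1 + ‖z‖) ≤ B := hB ⟨z, hz, rfl⟩
    calc _ ≤ max B (2 * M * (2 + |a|)) * 1 := by rw [mul_one]; exact h1.trans (le_max_left _ _)
      _ ≤ _ := by gcongr
  · rw [Metric.mem_closedBall, not_le, dist_eq_norm] at hz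
    have h1 := congrArg norm (sub_smul_dslope G (a:ℂ) z)
    rw [norm_smul] at h1
    have h2 : ‖G z - G a‖ ≤ 2 * M * Real.exp |z.im| := by
      have h3 := hGb a
      simp only [ofReal_im, abs_zero, Real.exp_zero, mul_one] at h3
      have h4 := hGb z
      have h5 := norm_sub_le (G z) (G a)
      nlinarith
    have h6 : ‖z‖ ≤ ‖z - a‖ + |a| := by
      have := norm_add_le (z - a) (a:ℂ)
      rwa [sub_add_cancel, norm_real, Real.norm_eq_abs] at this
    have h7 : 1 + ‖z‖ ≤ (2 + |a|) * ‖z - a‖ := by nlinarith [abs_nonneg a]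
    calc _ ≤ ‖dslope G a z‖ * ((2 + |a|) * ‖z - a‖) := by gcongr
      _ = (2 + |a|) * ‖G z - G a‖ := by rw [← h1]; ring
      _ ≤ (2 + |a|) * (2 * M * Real.exp |z.im|) := by gcongr
      _ = (2 * M * (2 + |a|)) * Real.exp |z.im| := by ring
      _ ≤ _ := by gcongr; exact le_max_right _ _

theorem summable_aux : Summable (fun n : ℤ => 1 / (1 + |(n:ℝ)|) ^ 2) := by
  refine Summable.of_norm_bounded_eventually (g := fun n : ℤ => 1 / (n:ℝ) ^ 2)
    (Real.summable_one_div_int_pow.2 one_lt_two) ?_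
  have : ∀ᶠ n : ℤ in cofinite, n ≠ 0 := by
    rw [eventually_cofinite]
    simp
  filter_upwards [this] with n hn
  have hn' : 0 < |(n:ℝ)| := abs_pos.2 (by exact_mod_cast hn)
  rw [Real.norm_of_nonneg (by positivity), ← sq_abs (n:ℝ)]
  gcongr
  linarith

theorem sinc_bound (t : ℝ) : |sinc t| * (1 + |t|) ≤ 2 := by
  unfold sinc
  split_ifs with h
  · simp [h]
  · have ht : 0 < |t| := abs_pos.2 h
    rw [abs_div]
    have h1 := Real.abs_sin_le_one t
    have h2 : |Real.sin t| ≤ |t| := Real.abs_sin_le_abs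
    rw [div_mul_eq_mul_div, div_le_iff₀ ht]
    nlinarith

theorem sinc_summable (g : ℂ → ℂ) (C : ℝ)
    (hC : ∀ z, ‖g z‖ * (1 + ‖z‖) ≤ C * Real.exp |z.im|) (b : ℝ) :
    Summable (fun n : ℤ => ‖g (n * Real.pi) * ((sinc (b - Real.pi * n) : ℝ) : ℂ)‖) := by
  refine Summable.of_nonneg_of_le (fun _ => norm_nonneg _) (fun n => ?_)
    (summable_aux.mul_left (C * (2 * (1 + |b|))))
  have hpi := Real.pi_gt_three
  have hn0 := abs_nonneg (n:ℝ)
  have hnn : ‖(n * Real.pi : ℂ)‖ = |(n:ℝ)| * Real.pi := by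
    rw [norm_mul, norm_real, Real.norm_of_nonneg Real.pi_pos.le]
    simp
  have h1 : ‖g (n * Real.pi)‖ ≤ C / (1 + |(n:ℝ)|) := by
    rw [le_div_iff₀ (by positivity)]
    have h1 := hC (n * Real.pi)
    have h0 : (n * Real.pi : ℂ).im = 0 := by simp
    rw [h0, abs_zero, Real.exp_zero, mul_one, hnn] at h1
    refine le_trans ?_ h1
    gcongr
    nlinarith
  have h2 : |sinc (b - Real.pi * n)| ≤ 2 * (1 + |b|) / (1 + |(n:ℝ)|) := by
    rw [le_div_iff₀ (by positivity)]
    have h3 := sinc_bound (b - Real.pi * n)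
    have h4 : 1 + |(n:ℝ)| ≤ (1 + |b - Real.pi * n|) * (1 + |b|) := by
      have h5 : |Real.pi * n| ≤ |b - Real.pi * n| + |b| := by
        have := abs_sub b (b - Real.pi * n)
        rw [sub_sub_cancel] at this
        linarith
      rw [abs_mul, abs_of_pos Real.pi_pos] at h5
      nlinarith [abs_nonneg b, abs_nonneg (b - Real.pi * n)]
    calc _ ≤ |sinc (b - Real.pi * n)| * ((1 + |b - Real.pi * n|) * (1 + |b|)) := by gcongr
      _ = (|sinc (b - Real.pi * n)| * (1 + |b - Real.pi * n|)) * (1 + |b|) := by ring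
      _ ≤ _ := by gcongr
  rw [norm_mul, norm_real, Real.norm_eq_abs]
  calc _ ≤ C / (1 + |(n:ℝ)|) * (2 * (1 + |b|) / (1 + |(n:ℝ)|)) := by
        gcongr
        exact (norm_nonneg _).trans h1
    _ = _ := by field_simp

theorem sampling (g : ℂ → ℂ) (hg : Differentiable ℂ g) (C : ℝ)
    (hC : ∀ z, ‖g z‖ * (1 + ‖z‖) ≤ C * Real.exp |z.im|) (b : ℝ) :
    HasSum (fun n : ℤ => g (n * Real.pi) * ((sinc (b - Real.pi * n) : ℝ) : ℂ)) (g b) := by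
  have hs := (sinc_summable g C hC b).of_norm
  by_cases hb : sin (b:ℂ) = 0
  · obtain ⟨m, hm⟩ := Complex.sin_eq_zero_iff.1 hb
    have hm' : b = m * Real.pi := by exact_mod_cast hm
    convert hasSum_single m ?_ using 1
    · simp [hm', sinc, mul_comm]
    · intro n hn
      have h1 : b - Real.pi * n = ((m - n : ℤ) : ℝ) * Real.pi := by rw [hm']; push_cast; ring
      have h2 : ((m - n : ℤ) : ℝ) * Real.pi ≠ 0 :=
        mul_ne_zero (by exact_mod_cast sub_ne_zero.2 hn.symm) Real.pi_ne_zero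
      rw [h1, sinc, if_neg h2, Real.sin_int_mul_pi]
      simp
  · have h1 := main_tendsto g hg C hC b hb
    have h2 := hs.hasSum.comp (Finset.tendsto_Icc_neg (R := ℤ))
    have h3 := tendsto_nhds_unique h1 (h2.congr fun N => ?_)
    · rw [h3]; exact hs.hasSum
    · simp only [Function.comp]
      refine Finset.sum_congr rfl fun n _ => ?_
      congr 1
      have hbn : b - Real.pi * n ≠ 0 := by
        intro h0
        apply hb
        rw [show b = n * Real.pi by linarith]
        push_cast
        exact sin_int_mul_pi n
      rw [sinc, if_neg hbn, Real.sin_sub, mul_comm Real.pi, Real.sin_int_mul_pi]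
      push_cast
      ring

end aux

/-- Sampling representation of the divided difference of a bandlimited function
(`f` is the restriction to `ℝ` of an entire `F` with `|F z| ≤ M·exp(σ|Im z|)`):
for `x ≠ y` with `σx ∉ πℤ`,
`(f(x)−f(y))/(x−y) = Σ_{n∈ℤ} σ·((f(x)−f(πn/σ))/(σx−πn))·sinc(σy−πn)`,
with absolute convergence. -/
theorem divided_difference_sampling
    (σ M : ℝ) (hσ : 0 < σ) (hM : 0 < M)
    (f : ℝ → ℂ) (F : ℂ → ℂ) (hF : Differentiable ℂ F)
    (hFbound : ∀ z : ℂ, ‖F z‖ ≤ M * Real.exp (σ * |z.im|))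
    (hfF : ∀ x : ℝ, f x = F x)
    (x y : ℝ) (hxy : x ≠ y) (hx : ∀ n : ℤ, σ * x ≠ Real.pi * n) :
    Summable (fun n : ℤ =>
      ‖(σ : ℂ) * ((f x - f (Real.pi * n / σ)) / ((σ * x - Real.pi * n : ℝ) : ℂ)) *
        ((sinc (σ * y - Real.pi * n) : ℝ) : ℂ)‖) ∧
    ∑' n : ℤ,
        (σ : ℂ) * ((f x - f (Real.pi * n / σ)) / ((σ * x - Real.pi * n : ℝ) : ℂ)) *
          ((sinc (σ * y - Real.pi * n) : ℝ) : ℂ)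
      = (f x - f y) / ((x : ℂ) - (y : ℂ)) := by
  set G : ℂ → ℂ := fun w => F (w / σ) with hGdef
  have hσc : (σ : ℂ) ≠ 0 := by exact_mod_cast hσ.ne'
  have hGd : Differentiable ℂ G := hF.comp (differentiable_id.div_const _)
  have hGb : ∀ z, ‖G z‖ ≤ M * Real.exp |z.im| := by
    intro z
    have h := hFbound (z / σ)
    have h1 : σ * |(z / σ).im| = |z.im| := by
      rw [Complex.div_ofReal_im, abs_div, abs_of_pos hσ]
      field_simp
    rwa [h1] at h
  obtain ⟨C, hC⟩ := dslope_bound G hGd M hGb (σ * x)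
  have hgd : Differentiable ℂ (dslope G ((σ * x : ℝ) : ℂ)) :=
    differentiableOn_univ.1 ((Complex.differentiableOn_dslope Filter.univ_mem).2 hGd.differentiableOn)
  have hS := sampling _ hgd C hC (σ * y)
  have hN := sinc_summable _ C hC (σ * y)
  have hGf : ∀ t : ℝ, G ((t : ℝ) : ℂ) = f (t / σ) := by
    intro t
    rw [hfF]
    simp [hGdef]
  have hsl : ∀ t : ℝ, t ≠ σ * x → dslope G ((σ * x : ℝ) : ℂ) (t : ℂ)
      = (f x - f (t / σ)) / ((σ * x - t : ℝ) : ℂ) := by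
    intro t ht
    have ht' : (t : ℂ) ≠ ((σ * x : ℝ) : ℂ) := by exact_mod_cast ht
    rw [dslope_of_ne _ ht', slope_def_field, hGf, hGf, mul_div_cancel_left₀ _ hσ.ne', ← neg_sub (f x),
      ← neg_sub ((σ * x : ℝ) : ℂ) (t : ℂ), neg_div_neg_eq]
    push_cast
    rfl
  have hterm : ∀ n : ℤ, (σ : ℂ) * ((f x - f (Real.pi * n / σ)) / ((σ * x - Real.pi * n : ℝ) : ℂ)) *
        ((sinc (σ * y - Real.pi * n) : ℝ) : ℂ) =
      (σ : ℂ) * (dslope G ((σ * x : ℝ) : ℂ) (n * Real.pi) * ((sinc (σ * y - Real.pi * n) : ℝ) : ℂ)) := by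
    intro n
    have h := hsl (Real.pi * n) (hx n).symm
    rw [← h]
    push_cast
    rw [mul_comm (Real.pi : ℂ) n]
    ring
  simp_rw [hterm]
  refine ⟨?_, ?_⟩
  · simp_rw [norm_mul (σ : ℂ)]
    exact hN.mul_left _
  · rw [(hS.mul_left (σ : ℂ)).tsum_eq, hsl (σ * y) (fun h => hxy (mul_left_cancel₀ hσ.ne' h).symm),
      mul_div_cancel_left₀ _ hσ.ne']
    have hxyc : (x : ℂ) - y ≠ 0 := sub_ne_zero.2 (by exact_mod_cast hxy)
    push_cast
    rw [← mul_sub]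
    field_simp
end

section
/- Let σ, M > 0 and let f : ℝ → ℂ be bandlimited with parameters (σ, M). Then for every x ∈ ℝ with σx ∉ πℤ, Σ_{n∈ℤ} |f(x) − f(πn/σ)|²/(σx − πn)² ≤ 3·(sup_{t∈ℝ} |f(t)|)² ≤ 3M². -/
open scoped ENNReal

lemma aux_tail_fin (c : ℝ) (hc : Real.pi / 2 < c) (N : ℕ) :
    ∑ i ∈ Finset.range N, 1 / (c + Real.pi * i) ^ 2 ≤
      1 / Real.pi * (1 / (c - Real.pi / 2) - 1 / (c - Real.pi / 2 + Real.pi * N)) := by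
  have hp := Real.pi_pos
  induction N with
  | zero => simp
  | succ k ih =>
    rw [Finset.sum_range_succ]
    refine (add_le_add_left ih _).trans ?_
    have hk : 0 ≤ Real.pi * k := by positivity
    set u := c + Real.pi * k with hu
    have h1 : c - Real.pi / 2 + Real.pi * k = u - Real.pi / 2 := by rw [hu]; ring
    have h2 : c - Real.pi / 2 + Real.pi * ((k + 1 : ℕ) : ℝ) = u + Real.pi / 2 := by
      rw [hu]; push_cast; ring
    rw [h1, h2]
    have hu1 : 0 < u - Real.pi / 2 := by linarith
    have hu2 : 0 < u + Real.pi / 2 := by linarith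
    have h3 : 1 / u ^ 2 ≤ 1 / Real.pi * (1 / (u - Real.pi / 2) - 1 / (u + Real.pi / 2)) := by
      have : 1 / Real.pi * (1 / (u - Real.pi / 2) - 1 / (u + Real.pi / 2))
          = 1 / ((u - Real.pi / 2) * (u + Real.pi / 2)) := by
        rw [div_sub_div _ _ hu1.ne' hu2.ne', div_mul_div_comm]
        rw [div_eq_div_iff (by positivity) (by positivity)]
        ring
      rw [this]
      apply one_div_le_one_div_of_le (by positivity)
      nlinarith [sq_nonneg Real.pi]
    have h4 := h3
    rw [mul_sub] at h4 ⊢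
    rw [mul_sub]
    linarith

lemma aux_tail (K : ℝ) (hK : 0 ≤ K) (c : ℝ) (hc : Real.pi / 2 < c) (f : ℕ → ℝ)
    (hf : ∀ n : ℕ, f n ≤ K / (c + Real.pi * n) ^ 2) :
    ∑' n : ℕ, ENNReal.ofReal (f n) ≤ ENNReal.ofReal (K * (1 / (Real.pi * (c - Real.pi / 2)))) := by
  have hp := Real.pi_pos
  refine (ENNReal.tsum_le_tsum (g := fun n : ℕ => ENNReal.ofReal (K / (c + Real.pi * n) ^ 2))
    fun n => ENNReal.ofReal_le_ofReal (hf n)).trans ?_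
  refine ENNReal.tsum_le_of_sum_range_le fun N => ?_
  rw [← ENNReal.ofReal_sum_of_nonneg (fun i _ => by positivity)]
  apply ENNReal.ofReal_le_ofReal
  have h := aux_tail_fin c hc N
  have h5 : 0 ≤ 1 / Real.pi * (1 / (c - Real.pi / 2 + Real.pi * N)) := by
    have : 0 < c - Real.pi / 2 := by linarith
    positivity
  have h6 : 1 / (Real.pi * (c - Real.pi / 2)) = 1 / Real.pi * (1 / (c - Real.pi / 2)) := by
    rw [one_div_mul_one_div]
  calc _ = K * ∑ i ∈ Finset.range N, 1 / (c + Real.pi * i) ^ 2 := by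
        rw [Finset.mul_sum]; apply Finset.sum_congr rfl; intros; ring
    _ ≤ _ := by
        apply mul_le_mul_of_nonneg_left _ hK
        rw [h6]; rw [mul_sub] at h; linarith

lemma aux_split (q : ℤ → ℝ≥0∞) :
    ∑' n : ℤ, q n = q 0 + q 1 + ∑' n : ℕ, q ((n : ℤ) + 2) + ∑' n : ℕ, q (-((n : ℤ) + 1)) := by
  have h : HasSum q (∑' n : ℕ, q (n : ℤ) + ∑' n : ℕ, q (-((n : ℤ) + 1))) :=
    HasSum.of_nat_of_neg_add_one (f := q) ENNReal.summable.hasSum ENNReal.summable.hasSum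
  have h1 : ∑' n : ℕ, q (n : ℤ) = q 0 + ∑' n : ℕ, q ((n : ℤ) + 1) := by
    have := tsum_eq_zero_add' (f := fun n : ℕ => q (n : ℤ)) ENNReal.summable
    simpa using this
  have h2 : ∑' n : ℕ, q ((n : ℤ) + 1) = q 1 + ∑' n : ℕ, q ((n : ℤ) + 2) := by
    have := tsum_eq_zero_add' (f := fun n : ℕ => q ((n : ℤ) + 1)) ENNReal.summable
    simpa [add_assoc] using this
  rw [h.tsum_eq, h1, h2, ← add_assoc (q 0)]

lemma aux_main (S r : ℝ) (hS : 0 ≤ S) (hr : 0 ≤ r) (hr2 : r ≤ Real.pi / 2) (D : ℤ → ℝ)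
    (h0 : ∀ n, 0 ≤ D n) (h1 : ∀ n, D n ≤ 2 * S) (h2 : ∀ n, D n ≤ S * |r - Real.pi * n|) :
    ∑' n : ℤ, ENNReal.ofReal (D n ^ 2 / (r - Real.pi * n) ^ 2) ≤ ENNReal.ofReal (3 * S ^ 2) := by
  have hp := Real.pi_pos
  have hp1 := Real.pi_gt_d2
  have hp2 := Real.pi_lt_d2
  have hb : ∀ n, D n ^ 2 / (r - Real.pi * n) ^ 2 ≤ S ^ 2 := by
    intro n
    apply div_le_of_le_mul₀ (by positivity) (by positivity)
    have := pow_le_pow_left₀ (h0 n) (h2 n) 2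
    rwa [mul_pow, sq_abs] at this
  have hb2 : ∀ n, D n ^ 2 / (r - Real.pi * n) ^ 2 ≤ 4 * S ^ 2 / (r - Real.pi * n) ^ 2 := by
    intro n
    apply div_le_div_of_nonneg_right _ (by positivity)
    nlinarith [h0 n, h1 n]
  have hK : 0 ≤ 4 * S ^ 2 := by positivity
  have t1 := aux_tail (4 * S ^ 2) hK (2 * Real.pi - r) (by linarith)
    (fun n : ℕ => D ((n : ℤ) + 2) ^ 2 / (r - Real.pi * (((n : ℤ) + 2 : ℤ) : ℝ)) ^ 2) (by
      intro n
      refine (hb2 _).trans (le_of_eq ?_)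
      congr 1; push_cast; ring)
  have t2 := aux_tail (4 * S ^ 2) hK (Real.pi + r) (by linarith)
    (fun n : ℕ => D (-((n : ℤ) + 1)) ^ 2 / (r - Real.pi * ((-((n : ℤ) + 1) : ℤ) : ℝ)) ^ 2) (by
      intro n
      refine (hb2 _).trans (le_of_eq ?_)
      congr 1; push_cast; ring)
  rw [aux_split]
  have key : ∀ m : ℝ, 0 ≤ m → D 1 ^ 2 / (r - Real.pi * ((1 : ℤ) : ℝ)) ^ 2 ≤ m * S ^ 2 →
      m + 4 * (1 / (Real.pi * (2 * Real.pi - r - Real.pi / 2)) +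
        1 / (Real.pi * (Real.pi + r - Real.pi / 2))) ≤ 2 →
      ENNReal.ofReal (D 0 ^ 2 / (r - Real.pi * ((0 : ℤ) : ℝ)) ^ 2) +
      ENNReal.ofReal (D 1 ^ 2 / (r - Real.pi * ((1 : ℤ) : ℝ)) ^ 2) +
      ∑' n : ℕ, ENNReal.ofReal (D ((n : ℤ) + 2) ^ 2 / (r - Real.pi * (((n : ℤ) + 2 : ℤ) : ℝ)) ^ 2) +
      ∑' n : ℕ, ENNReal.ofReal
        (D (-((n : ℤ) + 1)) ^ 2 / (r - Real.pi * ((-((n : ℤ) + 1) : ℤ) : ℝ)) ^ 2) ≤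
      ENNReal.ofReal (3 * S ^ 2) := by
    intro m hm hD hle
    have e1 : 0 < 2 * Real.pi - r - Real.pi / 2 := by linarith
    have e2 : 0 < Real.pi + r - Real.pi / 2 := by linarith
    refine (add_le_add (add_le_add (add_le_add (ENNReal.ofReal_le_ofReal (hb 0))
      (ENNReal.ofReal_le_ofReal hD)) t1) t2).trans ?_
    rw [← ENNReal.ofReal_add (by positivity) (by positivity),
      ← ENNReal.ofReal_add (by positivity) (by positivity),
      ← ENNReal.ofReal_add (by positivity) (by positivity)]
    apply ENNReal.ofReal_le_ofReal
    nlinarith [mul_le_mul_of_nonneg_right hle (sq_nonneg S)]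
  have inv : ∀ a b c : ℝ, 0 < a → a ≤ b → 1 / a ≤ c → 1 / b ≤ c := fun a b c ha hab h =>
    (one_div_le_one_div_of_le ha hab).trans h
  rcases le_total r 1.15 with hrA | hrB
  · refine key (4 * (1 / (Real.pi - r) ^ 2)) (by positivity) ?_ ?_
    · refine (hb2 1).trans (le_of_eq ?_)
      push_cast
      rw [show (r - Real.pi * 1) ^ 2 = (Real.pi - r) ^ 2 by ring]; ring
    · rcases le_total r 0.7 with h7 | h7
      · have a1 := inv (2.44 ^ 2) ((Real.pi - r) ^ 2) 0.1681 (by norm_num)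
          (by apply pow_le_pow_left₀ <;> linarith) (by norm_num)
        have a2 := inv (3.14 * 4.01) (Real.pi * (2 * Real.pi - r - Real.pi / 2)) 0.08 (by norm_num)
          (by apply mul_le_mul <;> linarith) (by norm_num)
        have a3 := inv (3.14 * 1.57) (Real.pi * (Real.pi + r - Real.pi / 2)) 0.203 (by norm_num)
          (by apply mul_le_mul <;> linarith) (by norm_num)
        linarith
      · have a1 := inv (1.99 ^ 2) ((Real.pi - r) ^ 2) 0.253 (by norm_num)
          (by apply pow_le_pow_left₀ <;> linarith) (by norm_num)
        have a2 := inv (3.14 * 3.56) (Real.pi * (2 * Real.pi - r - Real.pi / 2)) 0.09 (by norm_num)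
          (by apply mul_le_mul <;> linarith) (by norm_num)
        have a3 := inv (3.14 * 2.27) (Real.pi * (Real.pi + r - Real.pi / 2)) 0.1405 (by norm_num)
          (by apply mul_le_mul <;> linarith) (by norm_num)
        linarith
  · refine key 1 (by positivity) (by simpa using hb 1) ?_
    have a2 := inv (3.14 * 3.13) (Real.pi * (2 * Real.pi - r - Real.pi / 2)) 0.11 (by norm_num)
      (by apply mul_le_mul <;> linarith) (by norm_num)
    have a3 := inv (3.14 * 2.72) (Real.pi * (Real.pi + r - Real.pi / 2)) 0.12 (by norm_num)
      (by apply mul_le_mul <;> linarith) (by norm_num)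
    linarith

/-- Phragmen-Lindelof for bounded functions on the upper half plane. -/
lemma aux_PL (G : ℂ → ℂ) (hG : ∀ z : ℂ, 0 ≤ z.im → DifferentiableAt ℂ G z) (B C : ℝ)
    (hB : ∀ z : ℂ, 0 ≤ z.im → ‖G z‖ ≤ B) (hC : ∀ x : ℝ, ‖G x‖ ≤ C) (z : ℂ) (hz : 0 ≤ z.im) :
    ‖G z‖ ≤ C := by
  have him : ∀ w : ℂ, (Complex.I * w).im = w.re := by intro w; simp
  have h := PhragmenLindelof.right_half_plane_of_bounded_on_real
    (f := fun w => G (Complex.I * w)) (C := C) (z := -Complex.I * z) ?_ ?_ ?_ ?_ ?_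
  · simpa [← mul_assoc] using h
  · apply DifferentiableOn.diffContOnCl
    rw [Complex.closure_setOfPred_lt_re]
    intro w hw
    apply DifferentiableAt.differentiableWithinAt
    apply DifferentiableAt.comp (g := G) w (hG _ (by rw [him]; exact hw)) (by fun_prop)
  · refine ⟨1, by norm_num, 0, ?_⟩
    apply Asymptotics.IsBigO.of_bound B
    refine Filter.Eventually.filter_mono inf_le_right ?_
    refine Filter.eventually_principal.2 fun w hw => ?_
    have : 0 < w.re := hw
    simpa using hB (Complex.I * w) (by rw [him]; exact this.le)
  · refine Filter.isBoundedUnder_of_eventually_le (a := B) ?_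
    filter_upwards [Filter.eventually_ge_atTop 0] with t ht
    exact hB _ (by rw [him]; simpa using ht)
  · intro t
    have : Complex.I * (t * Complex.I) = ((-t : ℝ) : ℂ) := by
      push_cast; linear_combination (t : ℂ) * Complex.I_mul_I
    simp only [this]
    exact hC _
  · simpa using hz

lemma aux_upper (F : ℂ → ℂ) (hF : Differentiable ℂ F) (M S : ℝ)
    (hb : ∀ z : ℂ, ‖F z‖ ≤ M * Real.exp |z.im|) (hS : ∀ x : ℝ, ‖F x‖ ≤ S)
    (z : ℂ) (hz : 0 ≤ z.im) : ‖F z‖ ≤ S * Real.exp z.im := by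
  have hn : ∀ w : ℂ, ‖Complex.exp (Complex.I * w)‖ = Real.exp (-w.im) := by
    intro w; rw [Complex.norm_exp]; simp
  have h := aux_PL (fun w => F w * Complex.exp (Complex.I * w)) (fun w _ => by fun_prop) M S
    ?_ ?_ z hz
  · rw [norm_mul, hn, Real.exp_neg] at h
    have := Real.exp_pos z.im
    rwa [← div_eq_mul_inv, div_le_iff₀ this] at h
  · intro w hw
    have h := hb w
    rw [abs_of_nonneg hw] at h
    rw [norm_mul, hn, Real.exp_neg, ← div_eq_mul_inv, div_le_iff₀ (Real.exp_pos _)]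
    exact h
  · intro t
    rw [norm_mul, hn]
    simpa using hS t

lemma aux_all (F : ℂ → ℂ) (hF : Differentiable ℂ F) (M S : ℝ)
    (hb : ∀ z : ℂ, ‖F z‖ ≤ M * Real.exp |z.im|) (hS : ∀ x : ℝ, ‖F x‖ ≤ S)
    (z : ℂ) : ‖F z‖ ≤ S * Real.exp |z.im| := by
  rcases le_total 0 z.im with h | h
  · rw [abs_of_nonneg h]; exact aux_upper F hF M S hb hS z h
  · rw [abs_of_nonpos h]
    have := aux_upper (fun w => F (-w)) (by fun_prop) M S (fun w => by simpa using hb (-w))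
      (fun t => by simpa using hS (-t)) (-z) (by simpa using h)
    simpa using this

lemma aux_E (F : ℂ → ℂ) (hF : Differentiable ℂ F) (S : ℝ) (hS0 : 0 ≤ S)
    (hb : ∀ z : ℂ, ‖F z‖ ≤ S * Real.exp |z.im|) (l : ℂ) (hl : S < ‖l‖) (z : ℂ) (hz : 0 ≤ z.im) :
    ‖l * Complex.exp (-Complex.I * (starRingEnd ℂ z)) - F (starRingEnd ℂ z)‖ ≤
      ‖l * Complex.exp (-Complex.I * z) - F z‖ := by
  set E : ℂ → ℂ := fun w => l * Complex.exp (-Complex.I * w) - F w with hE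
  have hEd : Differentiable ℂ E := by fun_prop
  have hn : ∀ w : ℂ, ‖Complex.exp (-Complex.I * w)‖ = Real.exp (w.im) := by
    intro w; rw [Complex.norm_exp]; simp
  have hlow : ∀ w : ℂ, 0 ≤ w.im → (‖l‖ - S) * Real.exp w.im ≤ ‖E w‖ := by
    intro w hw
    have h1 := norm_sub_norm_le (l * Complex.exp (-Complex.I * w)) (F w)
    rw [norm_mul, hn] at h1
    have h2 := hb w
    rw [abs_of_nonneg hw] at h2
    simp only [hE]
    linarith
  have hup : ∀ w : ℂ, 0 ≤ w.im → ‖E (starRingEnd ℂ w)‖ ≤ (‖l‖ + S) * Real.exp w.im := by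
    intro w hw
    have h1 := norm_sub_le (l * Complex.exp (-Complex.I * (starRingEnd ℂ w))) (F (starRingEnd ℂ w))
    rw [norm_mul, hn, Complex.conj_im] at h1
    have h2 := hb (starRingEnd ℂ w)
    rw [Complex.conj_im, abs_neg, abs_of_nonneg hw] at h2
    have h3 : Real.exp (-w.im) ≤ Real.exp w.im := Real.exp_le_exp.2 (by linarith)
    have h4 := mul_le_mul_of_nonneg_left h3 (norm_nonneg l)
    simp only [hE]
    linarith
  have hpos : ∀ w : ℂ, 0 ≤ w.im → 0 < ‖E w‖ := fun w hw =>
    lt_of_lt_of_le (mul_pos (by linarith) (Real.exp_pos _)) (hlow w hw)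
  have h := aux_PL (fun w => starRingEnd ℂ (E (starRingEnd ℂ w)) / E w) ?_
    ((‖l‖ + S) / (‖l‖ - S)) 1 ?_ ?_ z hz
  · rw [norm_div, RCLike.norm_conj, div_le_one (hpos z hz)] at h
    exact h
  · intro w hw
    have h1 : DifferentiableAt ℂ (fun w => starRingEnd ℂ (E (starRingEnd ℂ w))) w := by
      have := (hEd (starRingEnd ℂ w)).conj_conj
      simpa [Function.comp_def] using this
    exact h1.div (hEd w) (norm_pos_iff.1 (hpos w hw))
  · intro w hw
    rw [norm_div, RCLike.norm_conj, div_le_div_iff₀ (hpos w hw) (by linarith)]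
    have e1 := mul_le_mul_of_nonneg_right (hup w hw) (by linarith : 0 ≤ ‖l‖ - S)
    have e2 := mul_le_mul_of_nonneg_left (hlow w hw) (by linarith : 0 ≤ ‖l‖ + S)
    linarith
  · intro t
    rw [norm_div, RCLike.norm_conj, Complex.conj_ofReal]
    exact div_self_le_one _

lemma aux_im (E : ℂ → ℂ) (x : ℝ) (E' : ℂ) (hE : HasDerivAt E E' x)
    (h : ∀ z : ℂ, 0 ≤ z.im → ‖E (starRingEnd ℂ z)‖ ≤ ‖E z‖) :
    (E' * starRingEnd ℂ (E x)).im ≤ 0 := by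
  have hd : ∀ c : ℝ, HasDerivAt (fun y : ℝ => E (x + (c * y : ℝ) * Complex.I))
      (E' * (c * Complex.I)) 0 := by
    intro c
    have h1 : HasDerivAt (fun y : ℝ => ((x : ℂ) + (c * y : ℝ) * Complex.I)) (c * Complex.I) 0 := by
      have h2 : HasDerivAt (fun y : ℝ => c * y) c 0 := by
        simpa using (hasDerivAt_id (0 : ℝ)).const_mul c
      exact (h2.ofReal_comp.mul_const Complex.I).const_add _
    exact HasDerivAt.comp (h₂ := E) (0 : ℝ) (by simpa using hE) h1
  have hd1 := (hd 1).norm_sq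
  have hd2 := (hd (-1)).norm_sq
  have hd3 := hd1.sub hd2
  by_contra hcon
  push Not at hcon
  have hneg : ∀ᶠ y in nhdsWithin (0 : ℝ) (Set.Ioi 0), slope (fun y : ℝ => ‖E (x + (1 * y : ℝ) * Complex.I)‖ ^ 2 - ‖E (x + (-1 * y : ℝ) * Complex.I)‖ ^ 2) 0 y < 0 := by
    have ht := (hasDerivAt_iff_tendsto_slope.1 hd3).mono_left
      (nhdsWithin_mono (0 : ℝ) (fun y (hy : y ∈ Set.Ioi 0) => ne_of_gt hy))
    refine ht.eventually_lt_const ?_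
    simp [Complex.inner, Complex.mul_re, Complex.mul_im] at hcon ⊢
    nlinarith
  obtain ⟨y, hy, hy0⟩ := (hneg.and self_mem_nhdsWithin).exists
  have hy0 : 0 < y := hy0
  have h1 := h (x + (1 * y : ℝ) * Complex.I) (by simpa using hy0.le)
  have h2 : starRingEnd ℂ (x + (1 * y : ℝ) * Complex.I) = x + (-1 * y : ℝ) * Complex.I := by
    simp
  rw [h2] at h1
  have h3 := pow_le_pow_left₀ (norm_nonneg _) h1 2
  rw [slope_def_field] at hy
  have : (0 : ℝ) ≤ (fun y : ℝ => ‖E (x + (1 * y : ℝ) * Complex.I)‖ ^ 2 - ‖E (x + (-1 * y : ℝ) * Complex.I)‖ ^ 2) y := by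
    simp only; linarith
  have h0 : (fun y : ℝ => ‖E (x + (1 * y : ℝ) * Complex.I)‖ ^ 2 - ‖E (x + (-1 * y : ℝ) * Complex.I)‖ ^ 2) 0 = 0 := by simp
  have := div_nonneg (sub_nonneg.2 (h0.le.trans this)) (sub_nonneg.2 hy0.le)
  simp only at this
  linarith

lemma aux_bernstein (F : ℂ → ℂ) (hF : Differentiable ℂ F) (S : ℝ) (hS0 : 0 ≤ S)
    (hb : ∀ z : ℂ, ‖F z‖ ≤ S * Real.exp |z.im|) (x : ℝ) : ‖deriv F x‖ ≤ S := by
  by_contra hcon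
  push Not at hcon
  set b := deriv F x with hbdef
  set a := F x with ha
  have haS : ‖a‖ ≤ S := by simpa using hb x
  have hne : Complex.I * b - a ≠ 0 := by
    intro h
    have : ‖Complex.I * b‖ = ‖a‖ := by rw [sub_eq_zero.1 h]
    simp at this
    linarith
  have key : ∀ w : ℂ, S < ‖w‖ → ((-Complex.I * w - b) * starRingEnd ℂ (w - a)).im ≤ 0 := by
    intro w hw
    have hexp : Complex.exp (Complex.I * x) * Complex.exp (-Complex.I * x) = 1 := by
      rw [← Complex.exp_add]; simp
    have hlw : (w * Complex.exp (Complex.I * x)) * Complex.exp (-Complex.I * x) = w := by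
      rw [mul_assoc, hexp, mul_one]
    have := aux_im (fun z => (w * Complex.exp (Complex.I * x)) * Complex.exp (-Complex.I * z) - F z)
      x (-Complex.I * w - b) ?_ ?_
    · simp only [hlw] at this
      exact this
    · have h1 : HasDerivAt (fun z : ℂ => -Complex.I * z) (-Complex.I) (x : ℂ) := by
        simpa using (hasDerivAt_id (x : ℂ)).const_mul (-Complex.I)
      have h2 := (h1.cexp.const_mul (w * Complex.exp (Complex.I * x))).sub (hF x).hasDerivAt
      rw [← mul_assoc, hlw, mul_comm w (-Complex.I)] at h2
      exact h2
    · intro z hz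
      refine aux_E F hF S hS0 hb _ ?_ z hz
      rw [norm_mul, Complex.norm_exp]
      simpa using hw
  -- perturb around w = I * b
  set c := Complex.I * b - a with hc
  have hcont : Filter.Tendsto (fun e : ℝ => ‖Complex.I * b - e * c‖) (nhdsWithin 0 (Set.Ioi 0))
      (nhds ‖b‖) := by
    have : Continuous (fun e : ℝ => ‖Complex.I * b - e * c‖) := by fun_prop
    have h := this.tendsto 0
    simp at h
    exact h.mono_left nhdsWithin_le_nhds
  have h1 := hcont.eventually_const_lt hcon
  have h2 : ∀ᶠ e in nhdsWithin (0 : ℝ) (Set.Ioi 0), e < 1 :=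
    (Filter.Tendsto.mono_left Filter.tendsto_id nhdsWithin_le_nhds).eventually_lt_const
      (by norm_num : (0 : ℝ) < 1)
  obtain ⟨e, ⟨he1, he2⟩, he0⟩ := ((h1.and h2).and self_mem_nhdsWithin).exists
  have he0 : 0 < e := he0
  have h3 := key _ he1
  have h4 : (-Complex.I * (Complex.I * b - e * c) - b) * starRingEnd ℂ (Complex.I * b - e * c - a)
      = ((e * (1 - e) * Complex.normSq c : ℝ) : ℂ) * Complex.I := by
    have e1 : Complex.I * b - e * c - a = ((1 - e : ℝ) : ℂ) * c := by
      rw [hc]; push_cast; ring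
    have e2 : -Complex.I * (Complex.I * b - e * c) - b = e * Complex.I * c := by
      linear_combination (-b) * Complex.I_mul_I
    rw [e1, e2, map_mul, Complex.conj_ofReal]
    push_cast
    rw [← Complex.mul_conj]
    ring
  rw [h4] at h3
  simp at h3
  have h5 : 0 < Complex.normSq c := Complex.normSq_pos.2 hne
  have h6 : 0 < e * (1 - e) * Complex.normSq c := mul_pos (mul_pos he0 (by linarith)) h5
  linarith

lemma aux_lip (F : ℂ → ℂ) (hF : Differentiable ℂ F) (S : ℝ) (hS0 : 0 ≤ S)
    (hb : ∀ z : ℂ, ‖F z‖ ≤ S * Real.exp |z.im|) (x t : ℝ) : ‖F x - F t‖ ≤ S * |x - t| := by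
  have hd : ∀ y : ℝ, HasDerivAt (fun y : ℝ => F y) (deriv F y) y := fun y =>
    (hF y).hasDerivAt.comp_ofReal
  have := Convex.norm_image_sub_le_of_norm_hasDerivWithin_le (s := Set.univ) (x := t) (y := x)
    (fun y _ => (hd y).hasDerivWithinAt) (fun y _ => aux_bernstein F hF S hS0 hb y)
    convex_univ (Set.mem_univ _) (Set.mem_univ _)
  simpa using this

lemma aux_f
    (σ M : ℝ) (hσ : 0 < σ)
    (f : ℝ → ℂ) (F : ℂ → ℂ) (hF : Differentiable ℂ F)
    (hFbound : ∀ z : ℂ, ‖F z‖ ≤ M * Real.exp (σ * |z.im|))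
    (hfF : ∀ x : ℝ, f x = F x) :
    (∀ t, ‖f t‖ ≤ ⨆ t : ℝ, ‖f t‖) ∧ (⨆ t : ℝ, ‖f t‖) ≤ M ∧
    ∀ x t, ‖f x - f t‖ ≤ (⨆ t : ℝ, ‖f t‖) * |σ * x - σ * t| := by
  have hM' : ∀ t, ‖f t‖ ≤ M := fun t => by rw [hfF]; simpa using hFbound t
  have h1 : ∀ t, ‖f t‖ ≤ ⨆ t : ℝ, ‖f t‖ := fun t =>
    le_ciSup (f := fun t => ‖f t‖) ⟨M, by rintro _ ⟨t, rfl⟩; exact hM' t⟩ t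
  refine ⟨h1, ciSup_le hM', fun x t => ?_⟩
  set S := ⨆ t : ℝ, ‖f t‖
  have hS0 : 0 ≤ S := (norm_nonneg _).trans (h1 0)
  have hσ' : (σ : ℂ) ≠ 0 := by exact_mod_cast hσ.ne'
  have hd : Differentiable ℂ (fun z => F (z / σ)) := by fun_prop
  have hb := aux_all (fun z => F (z / σ)) hd M S (fun z => by
      have := hFbound (z / σ)
      rw [Complex.div_ofReal_im, abs_div, abs_of_pos hσ, mul_div_cancel₀ _ hσ.ne'] at this
      exact this) (fun y => by
      have := h1 (y / σ)
      rw [hfF] at this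
      simpa using this)
  have := aux_lip _ hd S hS0 hb (σ * x) (σ * t)
  simp only [Complex.ofReal_mul, mul_div_cancel_left₀ _ hσ'] at this
  rwa [hfF, hfF]

/-- For a bandlimited function `f` (restriction to `ℝ` of an entire `F` with
`|F z| ≤ M·exp(σ|Im z|)`) and `x` with `σx ∉ πℤ`:
`Σ_{n∈ℤ} |f(x) − f(πn/σ)|²/(σx − πn)² ≤ 3·(sup|f|)² ≤ 3M²` (the sum computed
in `[0,∞]`). -/
theorem bandlimited_sampling_square_sum
    (σ M : ℝ) (hσ : 0 < σ) (hM : 0 < M)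
    (f : ℝ → ℂ) (F : ℂ → ℂ) (hF : Differentiable ℂ F)
    (hFbound : ∀ z : ℂ, ‖F z‖ ≤ M * Real.exp (σ * |z.im|))
    (hfF : ∀ x : ℝ, f x = F x)
    (x : ℝ) (hx : ∀ n : ℤ, σ * x ≠ Real.pi * n) :
    (∑' n : ℤ, ENNReal.ofReal
        (‖f x - f (Real.pi * n / σ)‖ ^ 2 / (σ * x - Real.pi * n) ^ 2))
      ≤ ENNReal.ofReal (3 * (⨆ t : ℝ, ‖f t‖) ^ 2) ∧
    3 * (⨆ t : ℝ, ‖f t‖) ^ 2 ≤ 3 * M ^ 2 := by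
  obtain ⟨h1, h2, h3⟩ := aux_f σ M hσ f F hF hFbound hfF
  set S := ⨆ t : ℝ, ‖f t‖ with hSdef
  have hS0 : 0 ≤ S := (norm_nonneg _).trans (h1 0)
  refine ⟨?_, by nlinarith⟩
  have hp := Real.pi_pos
  have hD1 : ∀ n : ℤ, ‖f x - f (Real.pi * n / σ)‖ ≤ 2 * S := fun n => by
    have := norm_sub_le (f x) (f (Real.pi * n / σ))
    linarith [h1 x, h1 (Real.pi * n / σ)]
  have hD2 : ∀ n : ℤ, ‖f x - f (Real.pi * n / σ)‖ ≤ S * |σ * x - Real.pi * n| := fun n => by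
    have := h3 x (Real.pi * n / σ)
    rwa [mul_div_cancel₀ _ hσ.ne'] at this
  set k := round (σ * x / Real.pi) with hk
  have hr : |σ * x - Real.pi * k| ≤ Real.pi / 2 := by
    have h := abs_sub_round (σ * x / Real.pi)
    have e : σ * x - Real.pi * k = Real.pi * (σ * x / Real.pi - k) := by field_simp
    rw [e, abs_mul, abs_of_pos hp]
    nlinarith
  have hr' := abs_le.1 hr
  rcases le_total 0 (σ * x - Real.pi * k) with hd | hd
  · rw [← (Equiv.addRight k).tsum_eq]
    have := aux_main S (σ * x - Real.pi * k) hS0 hd hr'.2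
      (fun n => ‖f x - f (Real.pi * ((n + k : ℤ) : ℝ) / σ)‖) (fun n => norm_nonneg _)
      (fun n => hD1 _) (fun n => by
        have := hD2 (n + k)
        rwa [show σ * x - Real.pi * ((n + k : ℤ) : ℝ) = σ * x - Real.pi * k - Real.pi * n by
          push_cast; ring] at this)
    refine le_of_eq_of_le (tsum_congr fun n => ?_) this
    simp only [Equiv.coe_addRight]
    rw [show σ * x - Real.pi * ((n + k : ℤ) : ℝ) = σ * x - Real.pi * k - Real.pi * n by
          push_cast; ring]
  · rw [← (Equiv.subLeft k).tsum_eq]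
    have := aux_main S (-(σ * x - Real.pi * k)) hS0 (by linarith) (by linarith)
      (fun n => ‖f x - f (Real.pi * ((k - n : ℤ) : ℝ) / σ)‖) (fun n => norm_nonneg _)
      (fun n => hD1 _) (fun n => by
        have := hD2 (k - n)
        rwa [show σ * x - Real.pi * ((k - n : ℤ) : ℝ) = -(-(σ * x - Real.pi * k) - Real.pi * n) by
          push_cast; ring, abs_neg] at this)
    refine le_of_eq_of_le (tsum_congr fun n => ?_) this
    simp only [Equiv.subLeft_apply]
    rw [show σ * x - Real.pi * ((k - n : ℤ) : ℝ) = -(-(σ * x - Real.pi * k) - Real.pi * n) by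
          push_cast; ring, neg_sq]
end

section
/- Let M > 0 and let f : ℝ² → ℂ be the restriction to ℝ² of an entire function F : ℂ² → ℂ satisfying |F(z₁, z₂)| ≤ M·exp(√((Im z₁)² + (Im z₂)²)) for all (z₁, z₂) ∈ ℂ². For y ∈ ℝ define a_{jk}(y) = (f(jπ, y) − f(kπ, y))/(jπ − kπ) for j ≠ k and a_{jj}(y) = ∂f/∂x (jπ, y). Then for every y ∈ ℝ and all x₁, x₂ ∈ ℝ with x₁ ≠ x₂, x₁ ∉ πℤ and x₂ ∉ πℤ, the family (sin(x₁ − jπ)/(x₁ − jπ))·(sin(x₂ − kπ)/(x₂ − kπ))·a_{jk}(y) indexed by (j, k) ∈ ℤ² is absolutely summable and (f(x₁, y) − f(x₂, y))/(x₁ − x₂) = Σ_{(j,k)∈ℤ²} (sin(x₁ − jπ)/(x₁ − jπ))·(sin(x₂ − kπ)/(x₂ − kπ))·a_{jk}(y). -/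
section
open Filter Topology Finset

theorem dd_sum_tendsto : Tendsto (fun N : ℕ => ∑ j ∈ Finset.Icc (-(N:ℤ)) N,
    1 / ((1 + |(j:ℝ)|) * ((N:ℝ) + 1 - |(j:ℝ)|))) atTop (𝓝 0) := by
  have hle : ∀ N : ℕ, ∑ j ∈ Finset.Icc (-(N:ℤ)) N,
      1 / ((1 + |(j:ℝ)|) * ((N:ℝ) + 1 - |(j:ℝ)|)) ≤
      4 * ((((N+1 : ℕ):ℝ))⁻¹ * ∑ i ∈ Finset.range (N+1), 1 / ((i:ℝ) + 1)) := by
    intro N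
    have hcov : ∑ j ∈ Finset.Icc (-(N:ℤ)) N, 1 / ((1 + |(j:ℝ)|) * ((N:ℝ) + 1 - |(j:ℝ)|)) ≤
        2 * ∑ i ∈ Finset.range (N+1), 1 / ((1 + (i:ℝ)) * ((N:ℝ) + 1 - (i:ℝ))) := by
      have := Finset.sum_Icc_of_even_eq_range
        (f := fun j : ℤ => 1 / ((1 + |(j:ℝ)|) * ((N:ℝ) + 1 - |(j:ℝ)|))) (by intro j; simp) N
      rw [this]
      have h0 : 0 ≤ 1 / ((1 + |((0:ℤ):ℝ)|) * ((N:ℝ) + 1 - |((0:ℤ):ℝ)|)) := by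
        simp; positivity
      simp only [Int.cast_natCast, Nat.abs_cast, nsmul_eq_mul, Nat.cast_ofNat] at *
      linarith
    have hrefl := Finset.sum_range_reflect (fun i : ℕ => 1 / ((i:ℝ) + 1)) (N+1)
    have hpf : ∑ i ∈ Finset.range (N+1), 1 / ((1 + (i:ℝ)) * ((N:ℝ) + 1 - (i:ℝ))) =
        ((N:ℝ)+2)⁻¹ * (∑ i ∈ Finset.range (N+1), 1 / ((i:ℝ) + 1) +
          ∑ i ∈ Finset.range (N+1), 1 / (((N + 1 - 1 - i : ℕ):ℝ) + 1)) := by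
      rw [← Finset.sum_add_distrib, Finset.mul_sum]
      apply Finset.sum_congr rfl
      intro i hi
      have hi' : i ≤ N := by simpa [Nat.lt_succ_iff] using hi
      have hc : ((N + 1 - 1 - i : ℕ):ℝ) = N - i := by
        rw [Nat.add_sub_cancel, Nat.cast_sub hi']
      have hi'' : (i:ℝ) ≤ N := by exact_mod_cast hi'
      rw [hc]
      have : (i:ℝ) + 1 ≠ 0 := by positivity
      have : 1 + (i:ℝ) ≠ 0 := by positivity
      have : (N:ℝ) - i + 1 ≠ 0 := by linarith
      have : (N:ℝ) + 1 - i ≠ 0 := by linarith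
      have : (N:ℝ) + 2 ≠ 0 := by positivity
      field_simp
      ring
    rw [hrefl] at hpf
    refine hcov.trans ?_
    rw [hpf]
    have hpos : 0 ≤ ∑ i ∈ Finset.range (N+1), 1 / ((i:ℝ) + 1) :=
      Finset.sum_nonneg fun i _ => by positivity
    have : ((N:ℝ)+2)⁻¹ ≤ (((N+1 : ℕ):ℝ))⁻¹ := by
      push_cast
      gcongr; norm_num
    nlinarith [mul_le_mul_of_nonneg_right this hpos]
  have hces := (tendsto_one_div_add_atTop_nhds_zero_nat (𝕜 := ℝ)).cesaro
  have h1 := ((tendsto_add_atTop_iff_nat 1).2 hces).const_mul 4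
  rw [mul_zero] at h1
  refine squeeze_zero (fun N => Finset.sum_nonneg fun j hj => ?_) hle h1
  have : |(j:ℝ)| ≤ N := by
    rw [Finset.mem_Icc] at hj
    rw [abs_le]; constructor <;> exact_mod_cast (by omega)
  have : 0 ≤ (N:ℝ) + 1 - |(j:ℝ)| := by linarith
  positivity

theorem dd_abs_summable : Summable (fun j : ℤ => (Real.sqrt (1 / (1 + |(j:ℝ)|)))^3) := by
  have h := (Real.summable_abs_int_rpow (b := 3/2) (by norm_num))
  refine h.of_norm_bounded_eventually ?_
  have : ({0}ᶜ : Set ℤ) ∈ (cofinite : Filter ℤ) := (Set.finite_singleton 0).compl_mem_cofinite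
  filter_upwards [this] with j hj
  have hj0 : 0 < |(j:ℝ)| := by simpa using hj
  rw [Real.norm_of_nonneg (by positivity), Real.sqrt_eq_rpow, ← Real.rpow_natCast,
    ← Real.rpow_mul (by positivity), Real.rpow_neg hj0.le, one_div, Real.inv_rpow (by positivity)]
  norm_num
  gcongr
  linarith

theorem dd_double_summable : Summable (fun p : ℤ × ℤ =>
    (1 / (1 + |(p.1:ℝ)|)) * (1 / (1 + |(p.2:ℝ)|)) * (1 / (1 + |((p.1 - p.2 : ℤ):ℝ)|))) := by
  set v : ℤ → ℝ := fun j => Real.sqrt (1 / (1 + |(j:ℝ)|)) with hv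
  have hv0 : ∀ j, 0 ≤ v j := fun j => Real.sqrt_nonneg _
  have hsq : ∀ j : ℤ, 1 / (1 + |(j:ℝ)|) = v j ^ 2 := fun j => (Real.sq_sqrt (by positivity)).symm
  have hs : Summable fun j => v j ^ 3 := dd_abs_summable
  have hP : Summable (fun p : ℤ × ℤ => v p.1 ^ 3 * v p.2 ^ 3) :=
    hs.mul_of_nonneg hs (fun j => pow_nonneg (hv0 j) 3) (fun j => pow_nonneg (hv0 j) 3)
  have hi1 : Function.Injective (fun p : ℤ × ℤ => (p.1, p.1 - p.2)) := by
    rintro ⟨a, b⟩ ⟨c, d⟩ h; simp at h; ext <;> simp <;> omega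
  have hi2 : Function.Injective (fun p : ℤ × ℤ => (p.2, p.1 - p.2)) := by
    rintro ⟨a, b⟩ ⟨c, d⟩ h; simp at h; ext <;> simp <;> omega
  have hP1 := hP.comp_injective hi1
  have hP2 := hP.comp_injective hi2
  refine Summable.of_nonneg_of_le (fun p => by positivity) (fun p => ?_) ((hP.add hP1).add hP2)
  simp only [hsq, Function.comp]
  have ha := hv0 p.1
  have hb := hv0 p.2
  have hc := hv0 (p.1 - p.2)
  generalize v p.1 = a at *
  generalize v p.2 = b at *
  generalize v (p.1 - p.2) = c at *
  have key : ∀ X Y Z : ℝ, 0 ≤ X → 0 ≤ Y → 0 ≤ Z → X * Y * Z ≤ X^3 + Y^3 + Z^3 := by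
    intro X Y Z hX hY hZ
    have h1 : X^3 + Y^3 + Z^3 - 3 * (X*Y*Z) = (X+Y+Z) * ((X-Y)^2 + (Y-Z)^2 + (Z-X)^2) / 2 := by ring
    have h2 : 0 ≤ (X+Y+Z) * ((X-Y)^2 + (Y-Z)^2 + (Z-X)^2) / 2 := by positivity
    have h3 : 0 ≤ X*Y*Z := by positivity
    linarith
  have := key (a*b) (a*c) (b*c) (by positivity) (by positivity) (by positivity)
  calc _ = a*b*(a*c)*(b*c) := by ring
    _ ≤ _ := this
    _ = _ := by ring

theorem dd_diff_dslope {g : ℂ → ℂ} (hg : Differentiable ℂ g) (w : ℂ) :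
    Differentiable ℂ (dslope g w) := by
  rw [← differentiableOn_univ]
  exact (Complex.differentiableOn_dslope univ_mem).2 hg.differentiableOn

theorem dd_sin_zero_deriv {c : ℂ} (hc : Complex.sin c = 0) : Complex.cos c ≠ 0 := by
  intro h
  have := Complex.sin_sq_add_cos_sq c
  rw [h, hc] at this
  norm_num at this

/-- removable quotient by sine -/
noncomputable def ddQ (D : ℂ → ℂ) (z : ℂ) : ℂ :=
  open Classical in if Complex.sin z = 0 then deriv D z / Complex.cos z else D z / Complex.sin z

theorem dd_Q_diff {D : ℂ → ℂ} (hD : Differentiable ℂ D) (c : ℂ)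
    (h : Complex.sin c = 0 → D c = 0) : DifferentiableAt ℂ (ddQ D) c := by
  by_cases hc : Complex.sin c = 0
  · have hDc := h hc
    have hds : dslope Complex.sin c c ≠ 0 := by
      rw [dslope_same, Complex.deriv_sin]; exact dd_sin_zero_deriv hc
    have hd1 := dd_diff_dslope hD c
    have hd2 := dd_diff_dslope Complex.differentiable_sin c
    have hev : ddQ D =ᶠ[𝓝 c] fun z => dslope D c z / dslope Complex.sin c z := by
      filter_upwards [hd2.continuous.continuousAt.eventually_ne hds] with z hz
      by_cases hzc : z = c
      · subst hzc
        simp [ddQ, hc, dslope_same, Complex.deriv_sin]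
      · have hzc' : z - c ≠ 0 := sub_ne_zero.2 hzc
        have e1 := sub_smul_dslope Complex.sin c z
        have e2 := sub_smul_dslope D c z
        rw [hc, sub_zero, smul_eq_mul] at e1
        rw [hDc, sub_zero, smul_eq_mul] at e2
        have hs : Complex.sin z ≠ 0 := by rw [← e1]; exact mul_ne_zero hzc' hz
        simp only [ddQ, hs, if_false]
        rw [← e1, ← e2, mul_div_mul_left _ _ hzc']
    exact (((hd1 c).div (hd2 c) hds)).congr_of_eventuallyEq hev
  · have hev : ddQ D =ᶠ[𝓝 c] fun z => D z / Complex.sin z := by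
      filter_upwards [Complex.continuous_sin.continuousAt.eventually_ne hc] with z hz
      simp [ddQ, hz]
    exact ((hD c).div (Complex.differentiable_sin c) hc).congr_of_eventuallyEq hev

/-- entire sinc kernel -/
noncomputable def ddK (j : ℤ) (z : ℂ) : ℂ := dslope Complex.sin 0 (z - j * Real.pi)

theorem dd_K_diff (j : ℤ) : Differentiable ℂ (ddK j) :=
  (dd_diff_dslope Complex.differentiable_sin 0).comp (differentiable_id.sub_const _)

theorem dd_K_of_ne (j : ℤ) (z : ℂ) (h : z ≠ j * Real.pi) :
    ddK j z = Complex.sin (z - j * Real.pi) / (z - j * Real.pi) := by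
  rw [ddK, dslope_of_ne _ (sub_ne_zero.2 h), slope_def_field]
  simp

theorem dd_K_self (j : ℤ) : ddK j (j * Real.pi) = 1 := by
  simp [ddK]

theorem dd_sin_sub (j : ℤ) (z : ℂ) : Complex.sin (z - j * Real.pi) = (-1)^j * Complex.sin z := by
  rw [Complex.sin_antiperiodic.sub_int_mul_eq j, Int.cast_negOnePow]

theorem dd_K_int (j m : ℤ) (h : m ≠ j) : ddK j (m * Real.pi) = 0 := by
  rw [dd_K_of_ne]
  · rw [dd_sin_sub, Complex.sin_int_mul_pi]; simp
  · have : (Real.pi : ℂ) ≠ 0 := by exact_mod_cast Real.pi_ne_zero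
    intro h'
    exact h (by exact_mod_cast mul_right_cancel₀ this h')

theorem dd_K_norm (j : ℤ) (z : ℂ) (h : z ≠ j * Real.pi) :
    ‖ddK j z‖ = ‖Complex.sin z‖ / ‖z - j * Real.pi‖ := by
  rw [dd_K_of_ne j z h, dd_sin_sub]
  simp

theorem dd_sin_normSq (z : ℂ) : ‖Complex.sin z‖ ^ 2 =
    (Real.sin z.re * Real.cosh z.im)^2 + (Real.cos z.re * Real.sinh z.im)^2 := by
  rw [← Complex.normSq_eq_norm_sq, Complex.sin_eq, ← Complex.ofReal_sin, ← Complex.ofReal_cos,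
    ← Complex.ofReal_sinh, ← Complex.ofReal_cosh, ← Complex.ofReal_mul, ← Complex.ofReal_mul,
    Complex.normSq_add_mul_I]

theorem dd_sin_lower (N : ℕ) (z : ℂ)
    (h : |z.re| = (N + 1/2) * Real.pi ∨ |z.im| = (N + 1/2) * Real.pi) :
    Real.exp |z.im| / 4 ≤ ‖Complex.sin z‖ := by
  refine (pow_le_pow_iff_left₀ (by positivity) (norm_nonneg _) two_ne_zero).1 ?_
  rw [dd_sin_normSq]
  have hexp : 0 < Real.exp |z.im| := Real.exp_pos _
  have hexn : 0 < Real.exp (-|z.im|) := Real.exp_pos _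
  have hsc := Real.sin_sq_add_cos_sq z.re
  have hch : Real.cosh z.im = (Real.exp |z.im| + Real.exp (-|z.im|)) / 2 := by
    rw [← Real.cosh_abs, Real.cosh_eq]
  have hcs := Real.cosh_sq z.im
  rcases h with h | h
  · have hcos : Real.cos z.re = 0 := by
      rw [← Real.cos_abs, h, Real.cos_eq_zero_iff]
      exact ⟨N, by push_cast; ring⟩
    rw [hcos] at hsc ⊢
    have : Real.sin z.re ^ 2 = 1 := by linarith
    rw [mul_pow, this, hch]
    nlinarith
  · have h2 : (2:ℝ) ≤ Real.exp |z.im| := by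
      have := Real.add_one_le_exp |z.im|
      have : 1 ≤ |z.im| := by
        rw [h]; nlinarith [Real.pi_gt_three, (Nat.cast_nonneg N : (0:ℝ) ≤ N)]
      linarith
    have h3 : Real.exp (-|z.im|) ≤ 1/2 := by
      rw [Real.exp_neg, one_div]; gcongr
    have h1 : Real.sinh z.im ^ 2 ≤ (Real.sin z.re * Real.cosh z.im)^2 + (Real.cos z.re * Real.sinh z.im)^2 := by
      have : (Real.sin z.re * Real.cosh z.im)^2 + (Real.cos z.re * Real.sinh z.im)^2 =
        Real.sinh z.im ^ 2 + Real.sin z.re ^ 2 := by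
        rw [mul_pow, mul_pow, hcs]
        linear_combination (Real.sinh z.im ^2) * hsc
      rw [this]; nlinarith [sq_nonneg (Real.sin z.re)]
    refine le_trans ?_ h1
    have : Real.sinh z.im ^ 2 = ((Real.exp |z.im| - Real.exp (-|z.im|)) / 2)^2 := by
      rw [← Real.sinh_eq, ← sq_abs, Real.abs_sinh]
    rw [this]
    refine pow_le_pow_left₀ (by positivity) ?_ 2
    linarith

theorem dd_partial_bound {h : ℂ → ℂ} (hh : Differentiable ℂ h) {C : ℝ} (hC : 0 ≤ C)
    (hb : ∀ z, ‖h z‖ ≤ C * Real.exp |z.im| / (1 + ‖z‖)) (x : ℝ)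
    (hx : Complex.sin x ≠ 0) (N : ℕ) (hN : |x| < (N + 1/2) * Real.pi) :
    ‖h x - ∑ j ∈ Finset.Icc (-(N:ℤ)) N, ddK j x * h (j * Real.pi)‖ ≤
      ‖Complex.sin x‖ * (4 * C * (1 / ((N:ℝ)+1)) + C * ∑ j ∈ Finset.Icc (-(N:ℤ)) N,
    1 / ((1 + |(j:ℝ)|) * ((N:ℝ) + 1 - |(j:ℝ)|))) := by
  have hpi := Real.pi_gt_three
  have hN0 : (0:ℝ) ≤ N := Nat.cast_nonneg N
  set R : ℝ := (N + 1/2) * Real.pi with hR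
  have hR0 : 0 < R := by positivity
  set D : ℂ → ℂ := fun z => h z - ∑ j ∈ Finset.Icc (-(N:ℤ)) N, ddK j z * h (j * Real.pi) with hDdef
  have hD : Differentiable ℂ D :=
    hh.sub (Differentiable.fun_sum fun j _ => (dd_K_diff j).mul_const _)
  set U : Set ℂ := Set.Ioo (-R) R ×ℂ Set.Ioo (-R) R with hU
  have hcl : closure U = Set.Icc (-R) R ×ℂ Set.Icc (-R) R := by
    rw [hU, Complex.closure_reProdIm, closure_Ioo (by linarith)]
  have hUo : IsOpen U := isOpen_Ioo.reProdIm isOpen_Ioo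
  have hdiff : ∀ z ∈ closure U, DifferentiableAt ℂ (ddQ D) z := by
    intro z hz
    apply dd_Q_diff hD
    intro hs
    obtain ⟨m, rfl⟩ := Complex.sin_eq_zero_iff.1 hs
    rw [hcl, Complex.mem_reProdIm] at hz
    have hre : ((m:ℂ) * Real.pi).re = m * Real.pi := by simp
    rw [hre] at hz
    have hm1 := hz.1.1
    have hm2 := hz.1.2
    have hm1' : -((N:ℝ) + 1) < m := by
      by_contra hc; push Not at hc; nlinarith
    have hm2' : (m:ℝ) < (N:ℝ) + 1 := by
      by_contra hc; push Not at hc; nlinarith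
    have hmem : m ∈ Finset.Icc (-(N:ℤ)) N := by
      rw [Finset.mem_Icc]
      have a1 : -((N:ℤ) + 1) < m := by exact_mod_cast hm1'
      have a2 : m < (N:ℤ) + 1 := by exact_mod_cast hm2'
      omega
    simp only [hDdef]
    rw [Finset.sum_eq_single_of_mem m hmem, dd_K_self]
    · simp
    · intro j _ hj
      rw [dd_K_int j m (Ne.symm hj), zero_mul]
  have hfr : ∀ z ∈ frontier U, ‖ddQ D z‖ ≤ 4 * C * (1 / ((N:ℝ)+1)) +
      C * ∑ j ∈ Finset.Icc (-(N:ℤ)) N, 1 / ((1 + |(j:ℝ)|) * ((N:ℝ) + 1 - |(j:ℝ)|)) := by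
    intro z hz
    rw [hUo.frontier_eq, hcl] at hz
    obtain ⟨hz1, hz2⟩ := hz
    rw [Complex.mem_reProdIm] at hz1
    simp only [hU, Complex.mem_reProdIm, Set.mem_Ioo, ← abs_lt] at hz2
    have hza : |z.re| ≤ R := abs_le.2 hz1.1
    have hzb : |z.im| ≤ R := abs_le.2 hz1.2
    have hor : |z.re| = R ∨ |z.im| = R := by
      by_contra hc
      push Not at hc
      exact hz2 ⟨lt_of_le_of_ne hza hc.1, lt_of_le_of_ne hzb hc.2⟩
    have hnz : R ≤ ‖z‖ := by
      rcases hor with h | h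
      · rw [← h]; exact Complex.abs_re_le_norm z
      · rw [← h]; exact Complex.abs_im_le_norm z
    have hsl := dd_sin_lower N z hor
    have hexp : 0 < Real.exp |z.im| := Real.exp_pos _
    have hspos : 0 < ‖Complex.sin z‖ := lt_of_lt_of_le (by positivity) hsl
    have hs0 : Complex.sin z ≠ 0 := norm_pos_iff.1 hspos
    have hQ : ddQ D z = D z / Complex.sin z := by simp [ddQ, hs0]
    rw [hQ, norm_div, div_le_iff₀ hspos, add_mul]
    refine (norm_sub_le _ _).trans (add_le_add ?_ ?_)
    · refine (hb z).trans ?_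
      have : (N:ℝ) + 1 ≤ 1 + ‖z‖ := by nlinarith
      calc C * Real.exp |z.im| / (1 + ‖z‖) ≤ C * Real.exp |z.im| / (N + 1) := by gcongr
        _ = 4 * C * (1 / ((N:ℝ)+1)) * (Real.exp |z.im| / 4) := by ring
        _ ≤ _ := by gcongr
    · refine (norm_sum_le _ _).trans ?_
      rw [Finset.mul_sum, Finset.sum_mul]
      apply Finset.sum_le_sum
      intro j hj
      have hjN : |(j:ℝ)| ≤ N := by
        rw [Finset.mem_Icc] at hj
        rw [abs_le]; constructor <;> exact_mod_cast (by omega)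
      have hjn : ‖(j:ℂ) * Real.pi‖ = |(j:ℝ)| * Real.pi := by
        rw [norm_mul, Complex.norm_real, Real.norm_of_nonneg Real.pi_pos.le, Complex.norm_intCast]
      have hdist : (N:ℝ) + 1 - |(j:ℝ)| ≤ ‖z - j * Real.pi‖ := by
        have := norm_sub_norm_le z (j * Real.pi)
        rw [hjn] at this
        nlinarith [abs_nonneg (j:ℝ)]
      have hdpos : 0 < (N:ℝ) + 1 - |(j:ℝ)| := by linarith
      have hne : z ≠ j * Real.pi := by
        intro h'; rw [h', sub_self, norm_zero] at hdist; linarith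
      rw [norm_mul, dd_K_norm j z hne]
      have hhj : ‖h (j * Real.pi)‖ ≤ C / (1 + |(j:ℝ)|) := by
        refine (hb _).trans ?_
        rw [hjn]
        have : ((j:ℂ) * Real.pi).im = 0 := by simp
        rw [this]
        simp only [abs_zero, Real.exp_zero, mul_one]
        gcongr
        nlinarith [abs_nonneg (j:ℝ)]
      calc _ ≤ ‖Complex.sin z‖ / ((N:ℝ) + 1 - |(j:ℝ)|) * (C / (1 + |(j:ℝ)|)) := by gcongr
        _ = _ := by field_simp
  have hbU : Bornology.IsBounded U :=
    (Metric.isBounded_Ioo _ _).reProdIm (Metric.isBounded_Ioo _ _)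
  have hxU : (x:ℂ) ∈ closure U := by
    apply subset_closure
    rw [hU, Complex.mem_reProdIm]
    simp only [Complex.ofReal_re, Complex.ofReal_im, Set.mem_Ioo, ← abs_lt, abs_zero]
    exact ⟨hN, hR0⟩
  have hmain := Complex.norm_le_of_forall_mem_frontier_norm_le hbU
    (DifferentiableOn.diffContOnCl (fun z hz => (hdiff z hz).differentiableWithinAt)) hfr hxU
  have hQ : ddQ D x = D x / Complex.sin x := by simp [ddQ, hx]
  rw [hQ, norm_div, div_le_iff₀ (norm_pos_iff.2 hx)] at hmain
  linarith [hmain]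

theorem dd_sampling {h : ℂ → ℂ} (hh : Differentiable ℂ h) {C : ℝ} (hC : 0 ≤ C)
    (hb : ∀ z, ‖h z‖ ≤ C * Real.exp |z.im| / (1 + ‖z‖)) (x : ℝ)
    (hx : Complex.sin x ≠ 0) :
    Tendsto (fun N : ℕ => ∑ j ∈ Finset.Icc (-(N:ℤ)) N, ddK j x * h (j * Real.pi))
      atTop (𝓝 (h x)) := by
  rw [tendsto_iff_norm_sub_tendsto_zero]
  have hlim : Tendsto (fun N : ℕ => ‖Complex.sin x‖ * (4 * C * (1 / ((N:ℝ)+1)) +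
      C * ∑ j ∈ Finset.Icc (-(N:ℤ)) N,
      1 / ((1 + |(j:ℝ)|) * ((N:ℝ) + 1 - |(j:ℝ)|)))) atTop (𝓝 0) := by
    have := (((tendsto_one_div_add_atTop_nhds_zero_nat (𝕜 := ℝ)).const_mul (4 * C)).add
      (dd_sum_tendsto.const_mul C)).const_mul ‖Complex.sin x‖
    simpa using this
  refine tendsto_of_tendsto_of_tendsto_of_le_of_le' tendsto_const_nhds hlim
    (Eventually.of_forall fun N => norm_nonneg _) ?_
  filter_upwards [(tendsto_natCast_atTop_atTop (R := ℝ)).eventually_gt_atTop |x|] with N hN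
  rw [norm_sub_rev]
  apply dd_partial_bound hh hC hb x hx N
  nlinarith [Real.pi_gt_three, (Nat.cast_nonneg N : (0:ℝ) ≤ N)]

theorem dd_dslope_bound {g : ℂ → ℂ} (hg : Differentiable ℂ g) {M : ℝ} (hM : 0 < M)
    (hb : ∀ z, ‖g z‖ ≤ M * Real.exp |z.im|) (w : ℝ) :
    ∃ C, 0 ≤ C ∧ ∀ z, ‖dslope g w z‖ ≤ C * Real.exp |z.im| / (1 + ‖z‖) := by
  obtain ⟨C1, hC1⟩ := (isCompact_closedBall (w:ℂ) 1).exists_bound_of_continuousOn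
    (dd_diff_dslope hg w).continuous.continuousOn
  have hC0 : 0 ≤ C1 := (norm_nonneg _).trans (hC1 w (by simp))
  refine ⟨(C1 + 2 * M) * (2 + |w|), by positivity, fun z => ?_⟩
  have hone : 1 ≤ Real.exp |z.im| := Real.one_le_exp (abs_nonneg _)
  have hw : ‖(w:ℂ)‖ = |w| := by simp
  have htri : ‖z‖ ≤ |w| + ‖z - w‖ := by
    have := norm_add_le (w:ℂ) (z - w)
    rw [hw] at this
    simpa using this
  have hw0 := abs_nonneg w
  rw [le_div_iff₀ (by positivity)]
  rcases le_total ‖z - w‖ 1 with h | h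
  · have h1 := hC1 z (by simpa [dist_eq_norm] using h)
    calc _ ≤ C1 * (2 + |w|) := mul_le_mul h1 (by linarith) (by positivity) hC0
      _ ≤ (C1 + 2 * M) * (2 + |w|) * 1 := by rw [mul_one]; gcongr; linarith
      _ ≤ _ := by gcongr
  · have e := sub_smul_dslope g (w:ℂ) z
    have e' : ‖z - w‖ * ‖dslope g w z‖ ≤ 2 * M * Real.exp |z.im| := by
      rw [← norm_mul, ← smul_eq_mul, e]
      refine (norm_sub_le _ _).trans ?_
      have a1 := hb z
      have a2 := hb w
      simp only [Complex.ofReal_im, abs_zero, Real.exp_zero, mul_one] at a2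
      nlinarith
    have hd := norm_nonneg (dslope g w z)
    calc _ ≤ ‖dslope g w z‖ * ((2 + |w|) * ‖z - w‖) := by gcongr; nlinarith
      _ = (‖z - w‖ * ‖dslope g w z‖) * (2 + |w|) := by ring
      _ ≤ (2 * M * Real.exp |z.im|) * (2 + |w|) := by gcongr
      _ ≤ ((C1 + 2 * M) * Real.exp |z.im|) * (2 + |w|) := by gcongr; linarith
      _ = _ := by ring

theorem dd_sinc_bound (x : ℝ) (j : ℤ) :
    |Real.sin (x - j * Real.pi) / (x - j * Real.pi)| ≤ 2 * (1 + |x|) * (1 / (1 + |(j:ℝ)|)) := by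
  set t := x - j * Real.pi with ht
  have hpi := Real.pi_gt_three
  have h1 : |Real.sin t / t| * (1 + |t|) ≤ 2 := by
    rw [abs_div]
    rcases eq_or_ne t 0 with h | h
    · simp [h]
    · have htp : 0 < |t| := abs_pos.2 h
      rw [div_mul_eq_mul_div, div_le_iff₀ htp]
      have := Real.abs_sin_le_one t
      have : |Real.sin t| ≤ |t| := Real.abs_sin_le_abs
      nlinarith
  have h2 : 1 + |(j:ℝ)| ≤ (1 + |x|) * (1 + |t|) := by
    have : |(j:ℝ) * Real.pi| ≤ |x| + |t| := by
      have := abs_sub x t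
      have e : (j:ℝ) * Real.pi = x - t := by rw [ht]; ring
      rw [e]; exact this
    rw [abs_mul, abs_of_pos Real.pi_pos] at this
    nlinarith [abs_nonneg (j:ℝ), abs_nonneg x, abs_nonneg t, mul_nonneg (abs_nonneg x) (abs_nonneg t)]
  rw [mul_one_div, le_div_iff₀ (by positivity)]
  calc _ ≤ |Real.sin t / t| * ((1 + |x|) * (1 + |t|)) := by gcongr
    _ = (|Real.sin t / t| * (1 + |t|)) * (1 + |x|) := by ring
    _ ≤ _ := by gcongr

theorem dd_a_bound {g : ℂ → ℂ} (hg : Differentiable ℂ g) {M : ℝ} (hM : 0 < M)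
    (hb : ∀ z, ‖g z‖ ≤ M * Real.exp |z.im|) (j k : ℤ) :
    ‖dslope g (j * Real.pi) (k * Real.pi)‖ ≤ 4 * M * (1 / (1 + |((j - k : ℤ):ℝ)|)) := by
  have hreal : ∀ m : ℤ, ‖g (m * Real.pi)‖ ≤ M := fun m => by
    have := hb (m * Real.pi)
    simpa using this
  rcases eq_or_ne j k with rfl | hjk
  · rw [dslope_same]
    have : ‖deriv g (j * Real.pi)‖ ≤ (M * Real.exp 1) / 1 := by
      refine Complex.norm_deriv_le_of_forall_mem_sphere_norm_le one_pos hg.diffContOnCl ?_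
      intro z hz
      refine (hb z).trans ?_
      gcongr
      have h1 := Complex.abs_im_le_norm (z - j * Real.pi)
      rw [mem_sphere_iff_norm] at hz
      rw [hz] at h1
      simpa using h1
    refine this.trans ?_
    have := Real.exp_one_lt_d9
    simp
    nlinarith
  · have e := sub_smul_dslope g ((j:ℂ) * Real.pi) (k * Real.pi)
    have hpi := Real.pi_gt_three
    have hn : ‖(k:ℂ) * Real.pi - j * Real.pi‖ = |((j - k : ℤ):ℝ)| * Real.pi := by
      rw [← sub_mul, norm_mul, Complex.norm_real, Real.norm_of_nonneg Real.pi_pos.le,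
        ← Int.cast_sub, Complex.norm_intCast, ← abs_neg]
      push_cast; ring_nf
    have h1 : (1:ℝ) ≤ |((j - k : ℤ):ℝ)| := by
      rw [← Int.cast_abs]
      exact_mod_cast Int.one_le_abs (sub_ne_zero.2 hjk)
    have e' : |((j - k : ℤ):ℝ)| * Real.pi * ‖dslope g (j * Real.pi) (k * Real.pi)‖ ≤ 2 * M := by
      rw [← hn, ← norm_mul, ← smul_eq_mul, e]
      refine (norm_sub_le _ _).trans ?_
      linarith [hreal j, hreal k]
    rw [mul_one_div, le_div_iff₀ (by positivity)]
    have hd := norm_nonneg (dslope g (j * Real.pi) (k * Real.pi))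
    generalize ‖dslope g (j * Real.pi) (k * Real.pi)‖ = d at *
    generalize |((j - k : ℤ):ℝ)| = a at *
    have : d * a ≤ 2 * M := by nlinarith [mul_nonneg hd (by linarith : 0 ≤ a)]
    nlinarith

theorem dd_dslope_comm {g : ℂ → ℂ} (a b : ℂ) : dslope g a b = dslope g b a := by
  rcases eq_or_ne a b with rfl | h
  · rfl
  · rw [dslope_of_ne _ h, dslope_of_ne _ h.symm, slope_comm]


end

/-- Double sampling representation of the divided difference in the first variable of a
function on `ℝ²` that is the restriction of an entire `F` on `ℂ²` with
`|F z| ≤ M·exp(‖Im z‖)`: for `x₁ ≠ x₂` with `x₁, x₂ ∉ πℤ`,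
`(f(x₁,y) − f(x₂,y))/(x₁ − x₂)
  = Σ_{(j,k)∈ℤ²} (sin(x₁−jπ)/(x₁−jπ))·(sin(x₂−kπ)/(x₂−kπ))·a_{jk}(y)`,
the family being absolutely summable, where `a_{jk}(y)` is the divided difference
`(f(jπ,y) − f(kπ,y))/(jπ − kπ)` for `j ≠ k` and `∂f/∂x(jπ, y)` for `j = k`. -/
theorem divided_difference_double_sampling
    (M : ℝ) (hM : 0 < M)
    (f : ℝ → ℝ → ℂ) (F : ℂ × ℂ → ℂ) (hF : Differentiable ℂ F)
    (hFbound : ∀ z : ℂ × ℂ, ‖F z‖ ≤ M * Real.exp (Real.sqrt (z.1.im ^ 2 + z.2.im ^ 2)))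
    (hfF : ∀ x y : ℝ, f x y = F ((x : ℂ), (y : ℂ)))
    (y x₁ x₂ : ℝ) (hx : x₁ ≠ x₂)
    (h₁ : ∀ n : ℤ, x₁ ≠ Real.pi * n) (h₂ : ∀ n : ℤ, x₂ ≠ Real.pi * n) :
    Summable (fun p : ℤ × ℤ =>
      ‖((Real.sin (x₁ - p.1 * Real.pi) / (x₁ - p.1 * Real.pi) : ℝ) : ℂ) *
        ((Real.sin (x₂ - p.2 * Real.pi) / (x₂ - p.2 * Real.pi) : ℝ) : ℂ) *
        (if p.1 = p.2 then deriv (fun x : ℝ => f x y) ((p.1 : ℝ) * Real.pi)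
          else (f ((p.1 : ℝ) * Real.pi) y - f ((p.2 : ℝ) * Real.pi) y) /
            (((p.1 : ℝ) * Real.pi - (p.2 : ℝ) * Real.pi : ℝ) : ℂ))‖) ∧
    ∑' p : ℤ × ℤ,
        ((Real.sin (x₁ - p.1 * Real.pi) / (x₁ - p.1 * Real.pi) : ℝ) : ℂ) *
          ((Real.sin (x₂ - p.2 * Real.pi) / (x₂ - p.2 * Real.pi) : ℝ) : ℂ) *
          (if p.1 = p.2 then deriv (fun x : ℝ => f x y) ((p.1 : ℝ) * Real.pi)
            else (f ((p.1 : ℝ) * Real.pi) y - f ((p.2 : ℝ) * Real.pi) y) /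
              (((p.1 : ℝ) * Real.pi - (p.2 : ℝ) * Real.pi : ℝ) : ℂ))
      = (f x₁ y - f x₂ y) / ((x₁ : ℂ) - (x₂ : ℂ)) := by
  set g : ℂ → ℂ := fun z => F (z, (y:ℂ)) with hgdef
  have hg : Differentiable ℂ g :=
    hF.comp (differentiable_id.prodMk (differentiable_const _))
  have hb : ∀ z, ‖g z‖ ≤ M * Real.exp |z.im| := by
    intro z
    have := hFbound (z, (y:ℂ))
    simpa [Real.sqrt_sq_eq_abs] using this
  have hfg : ∀ x : ℝ, f x y = g x := fun x => hfF x y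
  have hsin : ∀ x : ℝ, (∀ n : ℤ, x ≠ Real.pi * n) → Complex.sin x ≠ 0 := by
    intro x hx h
    rw [← Complex.ofReal_sin, Complex.ofReal_eq_zero, Real.sin_eq_zero_iff] at h
    obtain ⟨n, hn⟩ := h
    exact hx n (by rw [← hn]; ring)
  have hK : ∀ x : ℝ, (∀ n : ℤ, x ≠ Real.pi * n) → ∀ j : ℤ,
      ((Real.sin (x - j * Real.pi) / (x - j * Real.pi) : ℝ) : ℂ) = ddK j x := by
    intro x hx j
    rw [dd_K_of_ne]
    · push_cast; rfl
    · intro h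
      apply hx j
      have : x = j * Real.pi := by exact_mod_cast h
      rw [this]; ring
  have ha : ∀ j k : ℤ, (if j = k then deriv (fun x : ℝ => f x y) ((j : ℝ) * Real.pi)
          else (f ((j : ℝ) * Real.pi) y - f ((k : ℝ) * Real.pi) y) /
            (((j : ℝ) * Real.pi - (k : ℝ) * Real.pi : ℝ) : ℂ)) =
      dslope g (j * Real.pi) (k * Real.pi) := by
    intro j k
    have hfun : (fun x : ℝ => f x y) = fun x : ℝ => g x := funext hfg
    split_ifs with hjk
    · subst hjk
      rw [dslope_same, hfun]
      have := (hg ((j * Real.pi : ℝ) : ℂ)).hasDerivAt.comp_ofReal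
      rw [this.deriv]
      push_cast; rfl
    · rw [dd_dslope_comm, dslope_of_ne, slope_def_field, hfg, hfg]
      · push_cast; rfl
      · have : (Real.pi : ℂ) ≠ 0 := by exact_mod_cast Real.pi_ne_zero
        intro h'
        exact hjk (by exact_mod_cast mul_right_cancel₀ this h')
  have hterm : ∀ p : ℤ × ℤ,
      ((Real.sin (x₁ - p.1 * Real.pi) / (x₁ - p.1 * Real.pi) : ℝ) : ℂ) *
        ((Real.sin (x₂ - p.2 * Real.pi) / (x₂ - p.2 * Real.pi) : ℝ) : ℂ) *
        (if p.1 = p.2 then deriv (fun x : ℝ => f x y) ((p.1 : ℝ) * Real.pi)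
          else (f ((p.1 : ℝ) * Real.pi) y - f ((p.2 : ℝ) * Real.pi) y) /
            (((p.1 : ℝ) * Real.pi - (p.2 : ℝ) * Real.pi : ℝ) : ℂ)) =
      ddK p.1 x₁ * (ddK p.2 x₂ * dslope g (p.1 * Real.pi) (p.2 * Real.pi)) := by
    intro p
    rw [ha, hK x₁ h₁, hK x₂ h₂, mul_assoc]
  simp only [hterm]
  have hKb : ∀ x : ℝ, (∀ n : ℤ, x ≠ Real.pi * n) → ∀ j : ℤ,
      ‖ddK j x‖ ≤ 2 * (1 + |x|) * (1 / (1 + |(j:ℝ)|)) := by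
    intro x hx j
    rw [← hK x hx, Complex.norm_real]
    exact dd_sinc_bound x j
  have hsum : Summable (fun p : ℤ × ℤ =>
      ‖ddK p.1 x₁ * (ddK p.2 x₂ * dslope g (p.1 * Real.pi) (p.2 * Real.pi))‖) := by
    refine Summable.of_nonneg_of_le (fun p => norm_nonneg _) (fun p => ?_)
      (dd_double_summable.mul_left (2 * (1 + |x₁|) * (2 * (1 + |x₂|)) * (4 * M)))
    rw [norm_mul, norm_mul]
    calc _ ≤ (2 * (1 + |x₁|) * (1 / (1 + |(p.1:ℝ)|))) * ((2 * (1 + |x₂|) * (1 / (1 + |(p.2:ℝ)|))) *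
          (4 * M * (1 / (1 + |((p.1 - p.2 : ℤ):ℝ)|)))) := by
            gcongr
            · exact hKb x₁ h₁ _
            · exact hKb x₂ h₂ _
            · exact dd_a_bound hg hM hb _ _
      _ = _ := by ring
  refine ⟨hsum, ?_⟩
  have hs := hsum.of_norm
  rw [hs.tsum_prod]
  have hinner : ∀ j : ℤ, ∑' k : ℤ, ddK j x₁ * (ddK k x₂ * dslope g (j * Real.pi) (k * Real.pi)) =
      ddK j x₁ * dslope g x₂ (j * Real.pi) := by
    intro j
    have hsj := hs.prod_factor j
    have t1 := hsj.hasSum.comp (Finset.tendsto_Icc_neg (R := ℤ))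
    obtain ⟨C, hC0, hC⟩ := dd_dslope_bound hg hM hb ((j:ℝ) * Real.pi)
    have t2 := (dd_sampling (dd_diff_dslope hg _) hC0 hC x₂ (hsin x₂ h₂)).const_mul (ddK j x₁)
    rw [dd_dslope_comm (x₂ : ℂ)]
    refine tendsto_nhds_unique t1 ?_
    simpa [Function.comp_def, Finset.mul_sum] using t2
  simp only [hinner]
  have hso : Summable fun j : ℤ => ddK j x₁ * dslope g x₂ (j * Real.pi) :=
    hs.prod.congr hinner
  have t1 := hso.hasSum.comp (Finset.tendsto_Icc_neg (R := ℤ))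
  obtain ⟨C, hC0, hC⟩ := dd_dslope_bound hg hM hb x₂
  have t2 := dd_sampling (dd_diff_dslope hg _) hC0 hC x₁ (hsin x₁ h₁)
  have := tendsto_nhds_unique t1 t2
  rw [this, dslope_of_ne _ (by exact_mod_cast hx), slope_def_field, hfg, hfg]
end

section
/- Let 0 < α < 1 and 1 < p < ∞. There exists a constant c > 0, depending only on α and p, such that whenever f : ℝ → ℝ satisfies |f(x) − f(y)| ≤ C·|x − y|^α for all x, y ∈ ℝ, and A, B are bounded self-adjoint operators on a complex Hilbert space with Σ_{j∈ℕ} s_j(A − B)^p < ∞, then Σ_{j∈ℕ} s_j(f(A) − f(B))^{p/α} < ∞ and (Σ_{j∈ℕ} s_j(f(A) − f(B))^{p/α})^{α/p} ≤ c·C·(Σ_{j∈ℕ} s_j(A − B)^p)^{α/p}. That is, A − B ∈ S_p implies f(A) − f(B) ∈ S_{p/α} with the corresponding norm estimate. -/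
/-- The `j`-th singular value of a bounded operator `T`:
`s_j(T) = inf { ‖T − R‖ : rank R ≤ j }`. -/
noncomputable def singularValue {H : Type*} [NormedAddCommGroup H]
    [InnerProductSpace ℂ H] (T : H →L[ℂ] H) (j : ℕ) : ℝ :=
  sInf {r : ℝ | ∃ R : H →L[ℂ] H,
    Module.rank ℂ (LinearMap.range (R : H →ₗ[ℂ] H)) ≤ (j : Cardinal) ∧ r = ‖T - R‖}




namespace SHE
open scoped InnerProductSpace

section KFsec
variable {H : Type*} [NormedAddCommGroup H] [InnerProductSpace ℂ H]

/-- Ky Fan type bound. -/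
inductive KF (j : ℕ) : (H →L[ℂ] H) → ℝ → Prop
  | bd (Y : H →L[ℂ] H) (κ : ℝ) (h : ((j : ℝ) + 1) * ‖Y‖ ≤ κ) : KF j Y κ
  | one (x y : H) (κ : ℝ) (h : ‖x‖ * ‖y‖ ≤ κ) : KF j (InnerProductSpace.rankOne ℂ x y) κ
  | add (X Y : H →L[ℂ] H) (κ μ : ℝ) (hX : KF j X κ) (hY : KF j Y μ) : KF j (X + Y) (κ + μ)

lemma KF.nonneg {j : ℕ} {X : H →L[ℂ] H} {κ : ℝ} (h : KF j X κ) : 0 ≤ κ := by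
  induction h with
  | bd Y κ h => exact le_trans (by positivity) h
  | one x y κ h => exact le_trans (by positivity) h
  | add X Y κ μ hX hY h1 h2 => linarith

lemma KF.zero (j : ℕ) : KF j (0 : H →L[ℂ] H) 0 := KF.bd _ _ (by simp)

lemma KF.mono {j : ℕ} {X : H →L[ℂ] H} {κ μ : ℝ} (h : KF j X κ) (hm : κ ≤ μ) : KF j X μ := by
  have := KF.add X 0 κ (μ - κ) h (KF.bd _ _ (by simpa using hm))
  simpa using this

lemma KF.sum {j : ℕ} {ι : Type*} (s : Finset ι) (X : ι → (H →L[ℂ] H)) (κ : ι → ℝ)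
    (h : ∀ i ∈ s, KF j (X i) (κ i)) : KF j (∑ i ∈ s, X i) (∑ i ∈ s, κ i) := by
  classical
  induction s using Finset.induction_on with
  | empty => simpa using KF.zero j
  | insert a s ha ih =>
    rw [Finset.sum_insert ha, Finset.sum_insert ha]
    exact KF.add _ _ _ _ (h _ (by simp)) (ih fun i hi => h i (by simp [hi]))

/-- Schur-type maps preserve Ky Fan type bounds. -/
lemma KF.schur [CompleteSpace H] {j : ℕ} {X : H →L[ℂ] H} {κ : ℝ} (h : KF j X κ) {ι : Type*} (s : Finset ι)
    (u v : ι → (H →L[ℂ] H)) (M N : ℝ) (hM : 0 ≤ M) (hN : 0 ≤ N)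
    (hu : ∀ x, ∑ l ∈ s, ‖u l x‖ ^ 2 ≤ (M * ‖x‖) ^ 2)
    (hu' : ∀ x, ∑ l ∈ s, ‖(star (u l)) x‖ ^ 2 ≤ (M * ‖x‖) ^ 2)
    (hv : ∀ x, ∑ l ∈ s, ‖v l x‖ ^ 2 ≤ (N * ‖x‖) ^ 2)
    (hv' : ∀ x, ∑ l ∈ s, ‖(star (v l)) x‖ ^ 2 ≤ (N * ‖x‖) ^ 2) :
    KF j (∑ l ∈ s, u l * X * v l) (M * N * κ) := by
  have cs : ∀ a b : ι → ℝ, ∀ A B : ℝ, 0 ≤ A → 0 ≤ B → ∑ l ∈ s, a l ^ 2 ≤ A ^ 2 → 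
      ∑ l ∈ s, b l ^ 2 ≤ B ^ 2 → ∑ l ∈ s, a l * b l ≤ A * B := by
    intro a b A B hA hB h1 h2
    have h3 := Finset.sum_mul_sq_le_sq_mul_sq s a b
    apply le_of_sq_le_sq _ (by positivity)
    calc _ ≤ _ := h3
      _ ≤ A ^ 2 * B ^ 2 := by gcongr
      _ = _ := by ring
  induction h with
  | bd Y κ h =>
    apply KF.bd
    have : ‖∑ l ∈ s, u l * Y * v l‖ ≤ M * N * ‖Y‖ := by
      apply ContinuousLinearMap.opNorm_le_of_re_inner_le (by positivity)
      intro x y hx1 hy1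
      rw [sum_apply, sum_inner, map_sum]
      calc ∑ l ∈ s, RCLike.re ⟪(u l * Y * v l) x, y⟫_ℂ 
          ≤ ∑ l ∈ s, ‖Y‖ * (‖v l x‖ * ‖(star (u l)) y‖) := by
            gcongr with l hl
            refine (RCLike.re_le_norm _).trans ?_
            rw [mul_apply_eq_comp, mul_apply_eq_comp, 
              ContinuousLinearMap.star_eq_adjoint, ← ContinuousLinearMap.adjoint_inner_right]
            refine (norm_inner_le_norm _ _).trans ?_
            rw [← mul_assoc]
            gcongr
            exact Y.le_opNorm _
        _ ≤ ‖Y‖ * ((N * ‖x‖) * (M * ‖y‖)) := by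
            rw [← Finset.mul_sum]
            gcongr
            exact cs _ _ _ _ (by positivity) (by positivity) (hv x) (hu' y)
        _ = _ := by rw [hx1, hy1]; ring
    calc _ ≤ ((j:ℝ) + 1) * (M * N * ‖Y‖) := by gcongr
      _ = M * N * (((j:ℝ) + 1) * ‖Y‖) := by ring
      _ ≤ _ := by gcongr
  | one x y κ h =>
    have e : ∀ l, u l * InnerProductSpace.rankOne ℂ x y * v l = 
        InnerProductSpace.rankOne ℂ (u l x) ((star (v l)) y) := by
      intro l
      ext z
      simp [ContinuousLinearMap.star_eq_adjoint, ContinuousLinearMap.adjoint_inner_left]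
    simp_rw [e]
    refine KF.mono (KF.sum s _ (fun l => ‖u l x‖ * ‖(star (v l)) y‖) 
      fun l _ => KF.one _ _ _ le_rfl) ?_
    refine (cs _ _ _ _ (by positivity) (by positivity) (hu x) (hv' y)).trans ?_
    calc _ = M * N * (‖x‖ * ‖y‖) := by ring
      _ ≤ _ := by gcongr
  | add X Y κ μ hX hY h1 h2 =>
    have := KF.add _ _ _ _ h1 h2
    rw [← Finset.sum_add_distrib, ← mul_add] at this
    simpa only [mul_add, add_mul] using this

lemma KF.mul [CompleteSpace H] {j : ℕ} {X : H →L[ℂ] H} {κ : ℝ} (h : KF j X κ) (a b : H →L[ℂ] H) (M N : ℝ)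
    (hM : ‖a‖ ≤ M) (hN : ‖b‖ ≤ N) : KF j (a * X * b) (M * N * κ) := by
  have hM0 := (norm_nonneg a).trans hM
  have hN0 := (norm_nonneg b).trans hN
  have := h.schur ({()} : Finset Unit) (fun _ => a) (fun _ => b) M N hM0 hN0
    (fun x => by 
      simp only [Finset.sum_singleton]; gcongr; exact a.le_of_opNorm_le hM x) 
    (fun x => by
      simp only [Finset.sum_singleton]; gcongr; exact (star a).le_of_opNorm_le (by rwa [norm_star]) x) 
    (fun x => by
      simp only [Finset.sum_singleton]; gcongr; exact b.le_of_opNorm_le hN x) 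
    (fun x => by
      simp only [Finset.sum_singleton]; gcongr; exact (star b).le_of_opNorm_le (by rwa [norm_star]) x)
  simpa using this

lemma KF.pair {j : ℕ} {X : H →L[ℂ] H} {κ : ℝ} (h : KF j X κ) {r : ℕ} (hr : r ≤ j + 1)
    (e f : Fin r → H) (he : Orthonormal ℂ e) (hf : Orthonormal ℂ f) :
    ∑ k, RCLike.re ⟪f k, X (e k)⟫_ℂ ≤ κ := by
  induction h with
  | bd Y κ h =>
    calc ∑ k, RCLike.re ⟪f k, Y (e k)⟫_ℂ ≤ ∑ k : Fin r, ‖Y‖ := by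
          gcongr with k
          refine (RCLike.re_le_norm _).trans ((norm_inner_le_norm _ _).trans ?_)
          rw [hf.1 k, one_mul]
          simpa [he.1 k] using Y.le_opNorm (e k)
      _ = r * ‖Y‖ := by simp
      _ ≤ ((j:ℝ) + 1) * ‖Y‖ := by gcongr; exact_mod_cast hr
      _ ≤ κ := h
  | one x y κ h =>
    refine le_trans ?_ h
    have h1 := hf.sum_inner_products_le x (s := Finset.univ)
    have h2 := he.sum_inner_products_le y (s := Finset.univ)
    have h3 := Finset.sum_mul_sq_le_sq_mul_sq Finset.univ (fun k => ‖⟪f k, x⟫_ℂ‖) (fun k => ‖⟪e k, y⟫_ℂ‖)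
    calc _ ≤ ∑ k, ‖⟪f k, x⟫_ℂ‖ * ‖⟪e k, y⟫_ℂ‖ := by
          gcongr with k
          refine (RCLike.re_le_norm _).trans ?_
          rw [InnerProductSpace.rankOne_apply, inner_smul_right, norm_mul, norm_inner_symm, mul_comm]
      _ ≤ ‖x‖ * ‖y‖ := by
          apply le_of_sq_le_sq _ (by positivity)
          refine h3.trans ?_
          rw [mul_pow]
          gcongr
  | add X Y κ μ hX hY h1 h2 =>
    simp only [add_apply, inner_add_right, map_add, Finset.sum_add_distrib]
    linarith

lemma sv_bdd (T : H →L[ℂ] H) (j : ℕ) : BddBelow {r : ℝ | ∃ R : H →L[ℂ] H,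
    Module.rank ℂ (LinearMap.range (R : H →ₗ[ℂ] H)) ≤ (j : Cardinal) ∧ r = ‖T - R‖} :=
  ⟨0, by rintro r ⟨R, -, rfl⟩; positivity⟩

lemma sv_ne (T : H →L[ℂ] H) (j : ℕ) : {r : ℝ | ∃ R : H →L[ℂ] H,
    Module.rank ℂ (LinearMap.range (R : H →ₗ[ℂ] H)) ≤ (j : Cardinal) ∧ r = ‖T - R‖}.Nonempty :=
  ⟨‖T - 0‖, 0, by simp, rfl⟩

lemma sv_nonneg (T : H →L[ℂ] H) (j : ℕ) : 0 ≤ singularValue T j :=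
  le_csInf (sv_ne T j) (by rintro r ⟨R, -, rfl⟩; positivity)

lemma sv_le (T R : H →L[ℂ] H) (j : ℕ) 
    (h : Module.rank ℂ (LinearMap.range (R : H →ₗ[ℂ] H)) ≤ (j : Cardinal)) : 
    singularValue T j ≤ ‖T - R‖ := csInf_le (sv_bdd T j) ⟨R, h, rfl⟩

lemma sv_le_norm (T : H →L[ℂ] H) (j : ℕ) : singularValue T j ≤ ‖T‖ := by
  simpa using sv_le T 0 j (by simp)

lemma sv_zero (T : H →L[ℂ] H) : singularValue T 0 = ‖T‖ := by
  apply le_antisymm (sv_le_norm _ _)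
  apply le_csInf (sv_ne T 0)
  rintro r ⟨R, h, rfl⟩
  have : R = 0 := by
    have h0 : Module.rank ℂ (LinearMap.range (R : H →ₗ[ℂ] H)) = 0 := by simpa using h
    rw [Submodule.rank_eq_zero, LinearMap.range_eq_bot] at h0
    ext x
    simpa using congrArg (fun L : H →ₗ[ℂ] H => L x) h0
  simp [this]

lemma sv_exists (T : H →L[ℂ] H) (j : ℕ) (ε : ℝ) (hε : 0 < ε) : ∃ R : H →L[ℂ] H,
    Module.rank ℂ (LinearMap.range (R : H →ₗ[ℂ] H)) ≤ (j : Cardinal) ∧ 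
      ‖T - R‖ ≤ singularValue T j + ε := by
  obtain ⟨r, ⟨R, h, rfl⟩, hr⟩ := exists_lt_of_csInf_lt (sv_ne T j) 
    (show sInf _ < singularValue T j + ε by unfold singularValue; linarith)
  exact ⟨R, h, hr.le⟩

lemma sv_anti (T : H →L[ℂ] H) {i j : ℕ} (h : i ≤ j) : singularValue T j ≤ singularValue T i := by
  apply le_csInf (sv_ne T i)
  rintro r ⟨R, hR, rfl⟩
  exact sv_le _ _ _ (hR.trans (by exact_mod_cast h))

lemma sv_add_le (X Y : H →L[ℂ] H) (j : ℕ) : singularValue (X + Y) j ≤ singularValue X j + ‖Y‖ := by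
  rw [← sub_le_iff_le_add]
  apply le_csInf (sv_ne X j)
  rintro r ⟨R, hR, rfl⟩
  rw [sub_le_iff_le_add]
  refine (sv_le _ _ _ hR).trans ?_
  rw [show X + Y - R = (X - R) + Y by abel]
  exact norm_add_le _ _

end KFsec
end SHE



namespace SHE
open scoped InnerProductSpace

section Greedy
variable {H : Type*} [NormedAddCommGroup H] [InnerProductSpace ℂ H]

lemma greedy (X : H →L[ℂ] H) (j : ℕ) (δ : ℝ) (hδ : 0 ≤ δ) (h : δ < singularValue X j) :
    ∀ k : ℕ, 2 * k ≤ j + 2 → ∃ e f : Fin k → H, Orthonormal ℂ e ∧ Orthonormal ℂ f ∧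
      ∀ i, δ ≤ RCLike.re ⟪f i, X (e i)⟫_ℂ := by
  classical
  intro k
  induction k with
  | zero => 
    intro _
    exact ⟨Fin.elim0, Fin.elim0, ⟨fun i => i.elim0, fun i => i.elim0⟩, ⟨fun i => i.elim0, fun i => i.elim0⟩, fun i => i.elim0⟩
  | succ k ih =>
    intro hk
    obtain ⟨e, f, he, hf, hef⟩ := ih (by omega)
    set K := Submodule.span ℂ (Set.range f) with hK
    set K' := Submodule.span ℂ (Set.range e) with hK'
    have : FiniteDimensional ℂ K := FiniteDimensional.span_of_finite ℂ (Set.finite_range f)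
    have : FiniteDimensional ℂ K' := FiniteDimensional.span_of_finite ℂ (Set.finite_range e)
    have rK : Module.rank ℂ K ≤ (k : Cardinal) := by
      have := rank_span_finset_le (R := ℂ) (Finset.univ.image f)
      rw [Finset.coe_image, Finset.coe_univ, Set.image_univ] at this
      refine this.trans ?_
      have h2 := Finset.card_image_le (s := Finset.univ) (f := f)
      simp only [Finset.card_univ, Fintype.card_fin] at h2
      exact_mod_cast h2
    have rK' : Module.rank ℂ K' ≤ (k : Cardinal) := by
      have := rank_span_finset_le (R := ℂ) (Finset.univ.image e)
      rw [Finset.coe_image, Finset.coe_univ, Set.image_univ] at this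
      refine this.trans ?_
      have h2 := Finset.card_image_le (s := Finset.univ) (f := e)
      simp only [Finset.card_univ, Fintype.card_fin] at h2
      exact_mod_cast h2
    set Y : H →L[ℂ] H := Kᗮ.starProjection * X * K'ᗮ.starProjection with hY
    have hYn : δ < ‖Y‖ := by
      refine h.trans_le ?_
      have := sv_le X (X - Y) j ?_
      · simpa using this
      have hsub : LinearMap.range ((X - Y : H →L[ℂ] H) : H →ₗ[ℂ] H) ≤ 
          K ⊔ K'.map ((Kᗮ.starProjection * X : H →L[ℂ] H) : H →ₗ[ℂ] H) := by
        rintro _ ⟨x, rfl⟩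
        have : (X - Y) x = K.starProjection (X x) + (Kᗮ.starProjection * X) (K'.starProjection x) := by
          simp [hY, Submodule.starProjection_orthogonal]
          abel
        rw [ContinuousLinearMap.coe_coe, this]
        exact Submodule.add_mem_sup (Submodule.starProjection_apply_mem _ _) 
          (Submodule.mem_map_of_mem (Submodule.starProjection_apply_mem _ _))
      refine (Submodule.rank_mono hsub).trans ?_
      refine (Submodule.rank_add_le_rank_add_rank _ _).trans ?_
      have h3 : Module.rank ℂ (K'.map ((Kᗮ.starProjection * X : H →L[ℂ] H) : H →ₗ[ℂ] H)) ≤ (k : Cardinal) :=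
        (rank_map_le _ _).trans rK'
      refine (add_le_add rK h3).trans ?_
      have : k + k ≤ j := by omega
      exact_mod_cast this
    obtain ⟨x, hx1, hx⟩ := Y.exists_lt_apply_of_lt_opNorm hYn
    set y := K'ᗮ.starProjection x with hy
    set z := Kᗮ.starProjection (X y) with hz
    have hYz : Y x = z := rfl
    rw [hYz] at hx
    have hz0 : 0 < ‖z‖ := hδ.trans_lt hx
    have hyn : ‖y‖ ≤ 1 := (Submodule.norm_starProjection_apply_le _ _).trans hx1.le
    have hy0 : 0 < ‖y‖ := by
      rw [norm_pos_iff]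
      intro h0
      rw [hz, h0] at hz0
      simp at hz0
    have hyK : y ∈ K'ᗮ := Submodule.starProjection_apply_mem _ _
    have hzK : z ∈ Kᗮ := Submodule.starProjection_apply_mem _ _
    refine ⟨Matrix.vecCons (((‖y‖⁻¹ : ℝ) : ℂ) • y) e, Matrix.vecCons (((‖z‖⁻¹ : ℝ) : ℂ) • z) f, ?_, ?_, ?_⟩
    · rw [orthonormal_vecCons_iff]
      refine ⟨?_, ?_, he⟩
      · rw [norm_smul]; simp [hy0.ne']
      · intro i
        rw [inner_smul_left, Submodule.inner_left_of_mem_orthogonal (Submodule.subset_span (Set.mem_range_self i)) hyK, mul_zero]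
    · rw [orthonormal_vecCons_iff]
      refine ⟨?_, ?_, hf⟩
      · rw [norm_smul]; simp [hz0.ne']
      · intro i
        rw [inner_smul_left, Submodule.inner_left_of_mem_orthogonal (Submodule.subset_span (Set.mem_range_self i)) hzK, mul_zero]
    · intro i
      refine Fin.cases ?_ (fun i => ?_) i
      · simp only [Matrix.cons_val_zero, map_smul, inner_smul_left, inner_smul_right, Complex.conj_ofReal]
        have h1 := Submodule.re_inner_starProjection_eq_normSq Kᗮ (X y)
        rw [← hz] at h1
        rw [← mul_assoc, ← Complex.ofReal_mul]
        have h5 : RCLike.re (((‖y‖⁻¹ * ‖z‖⁻¹ : ℝ) : ℂ) * ⟪z, X y⟫_ℂ) = (‖y‖⁻¹ * ‖z‖⁻¹) * RCLike.re ⟪z, X y⟫_ℂ :=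
          Complex.re_ofReal_mul _ _
        rw [h5, h1]
        have : ‖Kᗮ.orthogonalProjectionOnto (X y)‖ = ‖z‖ := rfl
        have h2 : ‖z‖ ≤ ‖z‖⁻¹ * ‖y‖⁻¹ * ‖z‖ ^ 2 := by
          have : 1 ≤ ‖y‖⁻¹ := (one_le_inv₀ hy0).2 hyn
          calc ‖z‖ = ‖z‖ * 1 := by ring
            _ ≤ ‖z‖ * ‖y‖⁻¹ := by gcongr
            _ = _ := by field_simp
        have h3 : δ ≤ ‖z‖⁻¹ * ‖y‖⁻¹ * ‖z‖ ^ 2 := hx.le.trans h2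
        rw [mul_comm (‖z‖⁻¹)] at h3
        first | exact h3 | (rw [mul_comm (‖y‖⁻¹)] at h3; exact h3)
      · simpa using hef i

lemma KF.sv {j : ℕ} {X : H →L[ℂ] H} {κ : ℝ} (h : KF j X κ) : 
    singularValue X j ≤ 2 * κ / (j + 1) := by
  apply le_of_forall_lt_imp_le_of_dense
  intro δ hδ
  by_cases h0 : δ < 0
  · exact h0.le.trans (by have := h.nonneg; positivity)
  push Not at h0
  obtain ⟨e, f, he, hf, hef⟩ := greedy X j δ h0 hδ (j / 2 + 1) (by omega)
  have h1 := h.pair (by omega) e f he hf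
  have h2 : ∑ i : Fin (j / 2 + 1), δ ≤ κ := (Finset.sum_le_sum fun i _ => hef i).trans h1
  simp only [Finset.sum_const, Finset.card_univ, Fintype.card_fin, nsmul_eq_mul] at h2
  rw [le_div_iff₀ (by positivity)]
  have h3 : ((j:ℝ) + 1) ≤ 2 * ((j / 2 + 1 : ℕ) : ℝ) := by
    have : j + 1 ≤ 2 * (j / 2 + 1) := by omega
    exact_mod_cast this
  nlinarith

lemma KF.rank [CompleteSpace H] {j r : ℕ} {X : H →L[ℂ] H} {t : ℝ} (ht : ‖X‖ ≤ t)
    (h : Module.rank ℂ (LinearMap.range (X : H →ₗ[ℂ] H)) ≤ (r : Cardinal)) : KF j X (r * t) := by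
  set K := LinearMap.range (X : H →ₗ[ℂ] H) with hK
  have : FiniteDimensional ℂ K := by
    apply Module.rank_lt_aleph0_iff.1
    exact h.trans_lt (Cardinal.natCast_lt_aleph0)
  have hr : Module.finrank ℂ K ≤ r := Module.finrank_le_of_rank_le h
  set b := stdOrthonormalBasis ℂ K
  have e1 : X = K.starProjection * X := by
    ext x
    symm
    exact Submodule.starProjection_eq_self_iff.2 ⟨x, rfl⟩
  rw [e1, b.starProjection_eq_sum_rankOne, Finset.sum_mul]
  have := KF.sum (j := j) Finset.univ (fun i => InnerProductSpace.rankOne ℂ (b i : H) (b i : H) * X) (fun _ => t) 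
    (fun i _ => by
      have e2 : InnerProductSpace.rankOne ℂ (b i : H) (b i : H) * X = 
          InnerProductSpace.rankOne ℂ (b i : H) ((star X) (b i : H)) := by
        ext z
        simp [ContinuousLinearMap.star_eq_adjoint, ContinuousLinearMap.adjoint_inner_left]
      rw [e2]
      apply KF.one
      have hb : ‖(b i : H)‖ = 1 := b.orthonormal.1 i
      rw [hb, one_mul]
      refine ((star X).le_opNorm _).trans ?_
      rw [norm_star, hb, mul_one]; exact ht)
  refine this.mono ?_
  simp only [Finset.sum_const, Finset.card_univ, Fintype.card_fin, nsmul_eq_mul]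
  have : 0 ≤ t := (norm_nonneg _).trans ht
  gcongr

lemma rank_sub_le (R S : H →L[ℂ] H) (m n : ℕ) 
    (h : Module.rank ℂ (LinearMap.range (R : H →ₗ[ℂ] H)) ≤ (m : Cardinal)) 
    (h' : Module.rank ℂ (LinearMap.range (S : H →ₗ[ℂ] H)) ≤ (n : Cardinal)) :
    Module.rank ℂ (LinearMap.range ((R - S : H →L[ℂ] H) : H →ₗ[ℂ] H)) ≤ ((m + n : ℕ) : Cardinal) := by
  have hsub : LinearMap.range ((R - S : H →L[ℂ] H) : H →ₗ[ℂ] H) ≤ 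
      LinearMap.range (R : H →ₗ[ℂ] H) ⊔ LinearMap.range (S : H →ₗ[ℂ] H) := by
    rintro _ ⟨x, rfl⟩
    rw [ContinuousLinearMap.coe_coe, sub_apply, sub_eq_add_neg]
    exact Submodule.add_mem_sup ⟨x, rfl⟩ (Submodule.neg_mem _ ⟨x, rfl⟩)
  refine (Submodule.rank_mono hsub).trans ((Submodule.rank_add_le_rank_add_rank _ _).trans ?_)
  push_cast
  exact add_le_add h h'

lemma KF.dyad [CompleteSpace H] (T : H →L[ℂ] H) (j : ℕ) (ε : ℝ) (hε : 0 < ε) (J : ℕ) :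
    ∃ R : H →L[ℂ] H, Module.rank ℂ (LinearMap.range (R : H →ₗ[ℂ] H)) ≤ ((2 ^ J - 1 : ℕ) : Cardinal) ∧
      ‖T - R‖ ≤ singularValue T (2 ^ J - 1) + ε ∧ 
      KF j R (6 * ∑ i ∈ Finset.range J, 2 ^ i * (singularValue T (2 ^ i - 1) + ε)) := by
  induction J with
  | zero => 
    refine ⟨0, by simp, ?_, ?_⟩
    · simp [sv_zero, hε.le]
    · simpa using KF.zero j
  | succ J ih =>
    obtain ⟨R, h1, h2, h3⟩ := ih
    obtain ⟨S, g1, g2⟩ := sv_exists T (2 ^ (J + 1) - 1) ε hε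
    refine ⟨S, g1, g2, ?_⟩
    have hn : ‖S - R‖ ≤ 2 * (singularValue T (2 ^ J - 1) + ε) := by
      have a1 : S - R = (T - R) - (T - S) := by abel
      have a2 := norm_sub_le (T - R) (T - S)
      have a3 := sv_anti T (show 2 ^ J - 1 ≤ 2 ^ (J + 1) - 1 by gcongr <;> omega)
      rw [a1]; linarith
    have := KF.add _ _ _ _ h3 (KF.rank (j := j) hn (rank_sub_le S R _ _ g1 h1))
    rw [add_sub_cancel] at this
    refine this.mono ?_
    rw [Finset.sum_range_succ, mul_add]
    have hc : ((2 ^ (J + 1) - 1 + (2 ^ J - 1) : ℕ) : ℝ) ≤ 3 * 2 ^ J := by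
      have : 2 ^ (J + 1) - 1 + (2 ^ J - 1) ≤ 3 * 2 ^ J := by rw [pow_succ]; omega
      exact_mod_cast this
    have h0 : 0 ≤ singularValue T (2 ^ J - 1) + ε := by have := sv_nonneg T (2 ^ J - 1); linarith
    have : ((2 ^ (J + 1) - 1 + (2 ^ J - 1) : ℕ) : ℝ) * (2 * (singularValue T (2 ^ J - 1) + ε)) ≤ 
      3 * 2 ^ J * (2 * (singularValue T (2 ^ J - 1) + ε)) := by gcongr
    linarith

lemma sum_dyad (s : ℕ → ℝ) (hs : Antitone s) (h0 : ∀ i, 0 ≤ s i) (J : ℕ) :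
    ∑ i ∈ Finset.range (J + 1), 2 ^ i * s (2 ^ i - 1) ≤ 2 * ∑ m ∈ Finset.range (2 ^ J), s m := by
  induction J with
  | zero => simp; linarith [h0 0]
  | succ J ih =>
    rw [Finset.sum_range_succ]
    have e : ∑ m ∈ Finset.range (2 ^ (J + 1)), s m = ∑ m ∈ Finset.range (2 ^ J), s m + 
        ∑ m ∈ Finset.range (2 ^ J), s (2 ^ J + m) := by
      rw [pow_succ, mul_two, Finset.sum_range_add]
    have h2 : ∑ m ∈ Finset.range (2 ^ J), s (2 ^ (J + 1) - 1) ≤ ∑ m ∈ Finset.range (2 ^ J), s (2 ^ J + m) := by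
      gcongr with m hm
      apply hs
      have := Finset.mem_range.1 hm
      rw [pow_succ]; omega
    simp only [Finset.sum_const, Finset.card_range, nsmul_eq_mul] at h2
    push_cast at h2
    rw [e]
    have e3 : (2:ℝ) ^ (J + 1) * s (2 ^ (J + 1) - 1) = 2 * (2 ^ J * s (2 ^ (J + 1) - 1)) := by ring
    rw [e3]
    linarith

lemma KF.init [CompleteSpace H] (T : H →L[ℂ] H) (j : ℕ) : 
    KF j T (24 * ∑ m ∈ Finset.range (j + 1), singularValue T m) := by
  by_cases hT : T = 0
  · subst hT
    exact (KF.zero j).mono (mul_nonneg (by norm_num) (Finset.sum_nonneg fun i _ => sv_nonneg _ _))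
  have hT' : 0 < ‖T‖ := norm_pos_iff.2 hT
  obtain ⟨J, hJ1, hJ2⟩ := exists_nat_pow_near (x := j + 1) (y := 2) (by omega) (by norm_num)
  set ε : ℝ := ‖T‖ / (j + 1) with hε
  obtain ⟨R, h1, h2, h3⟩ := KF.dyad T j ε (by positivity) J
  have h4 := KF.add _ _ _ _ h3 (KF.bd (T - R) _ le_rfl)
  rw [add_sub_cancel] at h4
  refine h4.mono ?_
  have h0 : 0 ≤ singularValue T (2 ^ J - 1) + ε := by have := sv_nonneg T (2 ^ J - 1); positivity
  have b1 : ((j:ℝ) + 1) * ‖T - R‖ ≤ 6 * (2 ^ J * (singularValue T (2 ^ J - 1) + ε)) := by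
    have : (j:ℝ) + 1 ≤ 2 * 2 ^ J := by
      rw [pow_succ] at hJ2
      have : j + 1 ≤ 2 * 2 ^ J := by omega
      exact_mod_cast this
    have hJ : (0:ℝ) < 2 ^ J := by positivity
    calc _ ≤ (2 * 2 ^ J) * (singularValue T (2 ^ J - 1) + ε) := by gcongr
      _ ≤ _ := by nlinarith [mul_nonneg hJ.le h0]
  have b2 := sum_dyad (singularValue T) (fun i j h => sv_anti T h) (sv_nonneg T) J
  have b3 : ∑ m ∈ Finset.range (2 ^ J), singularValue T m ≤ ∑ m ∈ Finset.range (j + 1), singularValue T m :=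
    Finset.sum_le_sum_of_subset_of_nonneg (by simpa using hJ1) (fun i _ _ => sv_nonneg _ _)
  have b4 : ∑ i ∈ Finset.range (J + 1), (2:ℝ) ^ i * ε ≤ 2 * ‖T‖ := by
    rw [← Finset.sum_mul, geom_sum_eq (by norm_num)]
    have : (2:ℝ) ^ J ≤ j + 1 := by exact_mod_cast hJ1
    have e : ‖T‖ = (j + 1) * ε := by rw [hε]; field_simp
    rw [e, ← mul_assoc]
    have : 0 < ε := by positivity
    gcongr
    rw [pow_succ]; linarith
  have b5 : ‖T‖ ≤ ∑ m ∈ Finset.range (j + 1), singularValue T m := by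
    rw [← sv_zero]
    exact Finset.single_le_sum (f := singularValue T) (fun i _ => sv_nonneg _ _) (by simp)
  have b6 : ∑ i ∈ Finset.range (J + 1), 2 ^ i * (singularValue T (2 ^ i - 1) + ε) = 
    ∑ i ∈ Finset.range (J + 1), 2 ^ i * singularValue T (2 ^ i - 1) + ∑ i ∈ Finset.range (J + 1), (2:ℝ) ^ i * ε := by
    rw [← Finset.sum_add_distrib]; simp [mul_add]
  have b7 := Finset.sum_range_succ (fun i => 2 ^ i * (singularValue T (2 ^ i - 1) + ε)) J
  linarith

end Greedy
end SHE


namespace SHE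
open Polynomial ComplexConjugate

lemma conj_mul_self_of_norm {z : ℂ} (hz : ‖z‖ = 1) : conj z * z = 1 := by
  rw [mul_comm, Complex.mul_conj, Complex.normSq_eq_norm_sq, hz]; simp

lemma orth (M : ℕ) (ω : ℂ) (hω : IsPrimitiveRoot ω M) (hM : M ≠ 0) (l m : ℕ) (hl : l < M) (hm : m < M) :
    ∑ k ∈ Finset.range M, (ω ^ k) ^ l * conj ((ω ^ k) ^ m) = if l = m then (M : ℂ) else 0 := by
  have hn : ‖ω‖ = 1 := hω.norm'_eq_one hM
  have hc := conj_mul_self_of_norm hn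
  have e : ∀ k, (ω ^ k) ^ l * conj ((ω ^ k) ^ m) = (ω ^ l * conj ω ^ m) ^ k := by
    intro k; simp only [map_pow]; ring
  simp_rw [e]
  split_ifs with h
  · subst h
    have : ω ^ l * conj ω ^ l = 1 := by rw [← mul_pow, mul_comm, hc, one_pow]
    simp [this]
  · have hne : ω ^ l * conj ω ^ m ≠ 1 := by
      intro h1
      apply h
      apply hω.pow_inj hl hm
      calc ω ^ l = ω ^ l * (conj ω * ω) ^ m := by rw [hc]; simp
        _ = (ω ^ l * conj ω ^ m) * ω ^ m := by ring
        _ = _ := by rw [h1, one_mul]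
    rw [geom_sum_eq hne]
    have : (ω ^ l * conj ω ^ m) ^ M = 1 := by
      calc _ = (ω ^ M) ^ l * (conj (ω ^ M)) ^ m := by rw [map_pow]; ring
        _ = 1 := by rw [hω.pow_eq_one]; simp
    rw [this]; simp

lemma parseval (M L : ℕ) (hL : L ≤ M) (hM : M ≠ 0) (ω ξ : ℂ) (hω : IsPrimitiveRoot ω M) (hξ : ‖ξ‖ = 1) (c : ℕ → ℂ) :
    ∑ k ∈ Finset.range M, ‖∑ l ∈ Finset.range L, c l * (ξ * ω ^ k) ^ l‖ ^ 2 = 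
      M * ∑ l ∈ Finset.range L, ‖c l‖ ^ 2 := by
  have hsq : ∀ z : ℂ, ((‖z‖ ^ 2 : ℝ) : ℂ) = z * conj z := by
    intro z; rw [Complex.mul_conj, Complex.normSq_eq_norm_sq]
  apply Complex.ofReal_injective
  simp only [Complex.ofReal_sum, Complex.ofReal_mul, hsq, Complex.ofReal_natCast]
  have hb : ∀ l, c l * conj (c l) = (c l * ξ ^ l) * conj (c l * ξ ^ l) := by
    intro l
    have := conj_mul_self_of_norm hξ
    rw [map_mul, map_pow]
    calc _ = c l * conj (c l) * (conj ξ * ξ) ^ l := by rw [this]; simp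
      _ = _ := by ring
  have hd : ∀ l k, c l * (ξ * ω ^ k) ^ l = (c l * ξ ^ l) * (ω ^ k) ^ l := by intro l k; ring
  simp_rw [hb, hd]
  set b : ℕ → ℂ := fun l => c l * ξ ^ l
  change ∑ k ∈ Finset.range M, (∑ l ∈ Finset.range L, b l * (ω ^ k) ^ l) * conj (∑ l ∈ Finset.range L, b l * (ω ^ k) ^ l) = M * ∑ l ∈ Finset.range L, b l * conj (b l)
  simp_rw [map_sum, Finset.sum_mul_sum]
  rw [Finset.sum_comm, Finset.mul_sum]
  apply Finset.sum_congr rfl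
  intro l hl
  have hl' := Finset.mem_range.1 hl
  rw [Finset.sum_comm]
  have : ∀ m ∈ Finset.range L, ∑ k ∈ Finset.range M, b l * (ω ^ k) ^ l * conj (b m * (ω ^ k) ^ m) = 
      if l = m then b l * conj (b m) * M else 0 := by
    intro m hm
    have hm' := Finset.mem_range.1 hm
    have h1 := orth M ω hω hM l m (by omega) (by omega)
    have h2 : ∀ k, b l * (ω ^ k) ^ l * conj (b m * (ω ^ k) ^ m) = b l * conj (b m) * ((ω ^ k) ^ l * conj ((ω ^ k) ^ m)) := by
      intro k; rw [map_mul]; ring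
    simp_rw [h2]
    rw [← Finset.mul_sum, h1]
    split_ifs <;> simp
  rw [Finset.sum_congr rfl this]
  simp [hl', mul_comm]

lemma telescope {R : Type*} [Ring R] [Algebra ℂ R] (U V : R) (N : ℕ) : ∀ p : ℂ[X], p.natDegree ≤ N → 
    aeval U p - aeval V p = ∑ l ∈ Finset.range N, aeval U (divX^[l + 1] p) * (U - V) * V ^ l := by
  induction N with
  | zero =>
    intro p hp
    rw [eq_C_of_natDegree_le_zero hp]; simp
  | succ N ih =>
    intro p hp
    have h1 := ih (divX p) (by rw [natDegree_divX_eq_natDegree_tsub_one]; omega)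
    rw [Finset.sum_range_succ']
    have h2 : ∀ l ∈ Finset.range N, aeval U (divX^[l + 1 + 1] p) * (U - V) * V ^ (l + 1) = 
        (aeval U (divX^[l + 1] (divX p)) * (U - V) * V ^ l) * V := by
      intro l _
      rw [Function.iterate_succ_apply divX (l + 1) p, pow_succ]; simp only [mul_assoc]
    rw [Finset.sum_congr rfl h2, ← Finset.sum_mul, ← h1]
    have h3 : ∀ W : R, aeval W p = aeval W (divX p) * W + algebraMap ℂ R (p.coeff 0) := by
      intro W
      conv_lhs => rw [← divX_mul_X_add p]
      simp
    rw [h3 U, h3 V]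
    simp only [zero_add, Function.iterate_one, pow_zero, mul_one]
    noncomm_ring

lemma bern_scalar (N : ℕ) (p : ℂ[X]) (hp : p.natDegree ≤ N) (M : ℝ) 
    (hM : ∀ z : ℂ, ‖z‖ = 1 → ‖p.eval z‖ ≤ M) (z : ℂ) (hz : ‖z‖ = 1) :
    ∑ l ∈ Finset.range N, ‖(divX^[l + 1] p).eval z‖ ^ 2 ≤ M ^ 2 * N := by
  rcases Nat.eq_zero_or_pos N with rfl | hN
  · simp
  have hω := Complex.isPrimitiveRoot_exp N hN.ne'
  set ω := Complex.exp (2 * Real.pi * Complex.I / N)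
  set η := Complex.exp (((Real.pi / N : ℝ) : ℂ) * Complex.I) with hη
  have hη1 : ‖η‖ = 1 := Complex.norm_exp_ofReal_mul_I _
  have hηN : η ^ N = -1 := by
    rw [hη, ← Complex.exp_nat_mul, ← Complex.exp_pi_mul_I]
    congr 1
    have : (N : ℂ) ≠ 0 := by exact_mod_cast hN.ne'
    push_cast
    field_simp
  have hω1 : ‖ω‖ = 1 := hω.norm'_eq_one hN.ne'
  have hξ : ‖z * η‖ = 1 := by rw [norm_mul, hz, hη1, one_mul]
  have P1 := parseval N N le_rfl hN.ne' ω (z * η) hω hξ (fun l => (divX^[l + 1] p).eval z)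
  have P2 := parseval N N le_rfl hN.ne' ω (z * η) hω hξ (fun l => z ^ (N - 1 - l))
  have e2 : ∑ l ∈ Finset.range N, ‖z ^ (N - 1 - l)‖ ^ 2 = (N : ℝ) := by
    simp [hz]
  rw [e2] at P2
  have key : ∀ k ∈ Finset.range N, ‖∑ l ∈ Finset.range N, (divX^[l + 1] p).eval z * (z * η * ω ^ k) ^ l‖ ^ 2 ≤ 
      M ^ 2 * ‖∑ l ∈ Finset.range N, z ^ (N - 1 - l) * (z * η * ω ^ k) ^ l‖ ^ 2 := by
    intro k _
    set ζ := z * η * ω ^ k with hζ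
    have hζ1 : ‖ζ‖ = 1 := by rw [hζ, norm_mul, hξ, norm_pow, hω1]; simp
    have hζN : ζ ^ N = - z ^ N := by
      rw [hζ, mul_pow, mul_pow, hηN, ← pow_mul, mul_comm k N, pow_mul, hω.pow_eq_one]; simp
    have t1 := telescope z ζ N p hp
    have t1' : p.eval z - p.eval ζ = (∑ l ∈ Finset.range N, (divX^[l + 1] p).eval z * ζ ^ l) * (z - ζ) := by
      rw [Finset.sum_mul]
      simp only [coe_aeval_eq_eval] at t1
      rw [t1]
      apply Finset.sum_congr rfl
      intro l _; ring
    have t2 : (∑ l ∈ Finset.range N, z ^ (N - 1 - l) * ζ ^ l) * (z - ζ) = 2 * z ^ N := by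
      have := (Commute.all ζ z).geom_sum₂_mul N
      rw [hζN] at this
      have h3 : ∑ l ∈ Finset.range N, z ^ (N - 1 - l) * ζ ^ l = ∑ i ∈ Finset.range N, ζ ^ i * z ^ (N - 1 - i) :=
        Finset.sum_congr rfl fun l _ => mul_comm _ _
      rw [h3]
      linear_combination -this
    have n2 : ‖∑ l ∈ Finset.range N, z ^ (N - 1 - l) * ζ ^ l‖ * ‖z - ζ‖ = 2 := by
      rw [← norm_mul, t2]; simp [hz]
    have n1 : ‖∑ l ∈ Finset.range N, (divX^[l + 1] p).eval z * ζ ^ l‖ * ‖z - ζ‖ ≤ 2 * M := by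
      rw [← norm_mul, ← t1']
      refine (norm_sub_le _ _).trans ?_
      linarith [hM z hz, hM ζ hζ1]
    have hpos : 0 < ‖z - ζ‖ := by
      rcases (norm_nonneg (z - ζ)).eq_or_lt with h | h
      · rw [← h] at n2; norm_num at n2
      · exact h
    have n3 : ‖∑ l ∈ Finset.range N, (divX^[l + 1] p).eval z * ζ ^ l‖ ≤ 
        M * ‖∑ l ∈ Finset.range N, z ^ (N - 1 - l) * ζ ^ l‖ := by
      apply le_of_mul_le_mul_right _ hpos
      rw [mul_assoc, n2]; linarith
    rw [← mul_pow]
    gcongr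
  have := Finset.sum_le_sum key
  rw [← Finset.mul_sum, P1, P2] at this
  have hN' : (0:ℝ) < N := by exact_mod_cast hN
  apply le_of_mul_le_mul_left _ hN'
  linarith

lemma rpow_aux (α t : ℝ) (h0 : 0 < α) (h1 : α < 1) (ht : 0 ≤ t) : t ^ α ≤ 1 + t ^ 2 := by
  rcases le_total t 1 with h | h
  · have := Real.rpow_le_one ht h h0.le
    nlinarith
  · have : t ^ α ≤ t ^ (1:ℝ) := Real.rpow_le_rpow_of_exponent_le h h1.le
    rw [Real.rpow_one] at this
    nlinarith

lemma jackson (F : ℂ → ℝ) (L α : ℝ) (hα0 : 0 < α) (hα1 : α < 1) (hL : 0 ≤ L) 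
    (hF : ∀ z w : ℂ, ‖z‖ = 1 → ‖w‖ = 1 → |F z - F w| ≤ L * ‖z - w‖ ^ α) (n : ℕ) (hn : 1 ≤ n) :
    ∃ P : ℂ[X], P.natDegree ≤ 4 * (n - 1) ∧ ∀ z : ℂ, ‖z‖ = 1 → 
      ‖(F z : ℂ) - conj z ^ (2 * (n - 1)) * P.eval z‖ ≤ 9 * L * (n : ℝ) ^ (-α) := by
  have hn0 : (0:ℝ) < n := by exact_mod_cast hn
  have hM : 2 * n ≠ 0 := by omega
  have hω := Complex.isPrimitiveRoot_exp (2 * n) hM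
  set ω := Complex.exp (2 * Real.pi * Complex.I / (2 * n : ℕ))
  have hω1 : ‖ω‖ = 1 := hω.norm'_eq_one hM
  set D : ℂ[X] := ∑ k ∈ Finset.range n, X ^ k with hD
  have hDdeg : D.natDegree ≤ n - 1 := by
    apply natDegree_sum_le_of_forall_le
    intro k hk
    have := Finset.mem_range.1 hk
    rw [natDegree_X_pow]; omega
  have hDe : ∀ x, D.eval x = ∑ k ∈ Finset.range n, x ^ k := by
    intro x; simp [hD, eval_finsetSum]
  set c : ℕ → ℂ := fun l => (D ^ 2).coeff l
  have hE : ∀ x, (D.eval x) ^ 2 = ∑ l ∈ Finset.range (2 * n), c l * x ^ l := by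
    intro x
    rw [← eval_pow]
    apply eval_eq_sum_range'
    have := natDegree_pow_le (p := D) (n := 2)
    omega
  set S : ℝ := ∑ l ∈ Finset.range (2 * n), ‖c l‖ ^ 2 with hS
  have hS1 : (n:ℝ) ^ 4 ≤ 2 * n * S := by
    have h1 := hE 1
    rw [hDe] at h1
    simp only [one_pow, Finset.sum_const, Finset.card_range, nsmul_eq_mul, mul_one] at h1
    have h2 : (n:ℝ) ^ 2 ≤ ∑ l ∈ Finset.range (2 * n), ‖c l‖ := by
      have : ‖(n:ℂ) ^ 2‖ = (n:ℝ) ^ 2 := by simp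
      rw [← this, h1]
      exact norm_sum_le _ _
    have h3 := sq_sum_le_card_mul_sum_sq (s := Finset.range (2 * n)) (f := fun l => ‖c l‖)
    simp only [Finset.card_range] at h3
    push_cast at h3
    calc (n:ℝ) ^ 4 = ((n:ℝ) ^ 2) ^ 2 := by ring
      _ ≤ (∑ l ∈ Finset.range (2 * n), ‖c l‖) ^ 2 := by gcongr
      _ ≤ _ := h3
  have hS2 : (n:ℝ) ^ 3 ≤ 2 * S := by
    apply le_of_mul_le_mul_left _ hn0
    linarith
  have hS0 : 0 < S := by have := pow_pos hn0 3; linarith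
  set Z : ℝ := 2 * n * S with hZ
  have hZ0 : 0 < Z := by positivity
  set ζ : ℕ → ℂ := fun j => conj (ω ^ j) with hζ
  have hζ1 : ∀ j, ‖ζ j‖ = 1 := by intro j; simp [hζ, hω1]
  refine ⟨∑ j ∈ Finset.range (2 * n), C ((F (ζ j) : ℂ) * ζ j ^ (2 * (n - 1)) / (Z : ℂ)) * (D.comp (C (ω ^ j) * X)) ^ 4, ?_, ?_⟩
  · apply natDegree_sum_le_of_forall_le
    intro j _
    refine (natDegree_C_mul_le _ _).trans (natDegree_pow_le.trans ?_)
    gcongr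
    refine natDegree_comp_le.trans ?_
    have : (C (ω ^ j) * X : ℂ[X]).natDegree ≤ 1 := (natDegree_C_mul_le _ _).trans natDegree_X_le
    calc _ ≤ D.natDegree * 1 := by gcongr
      _ ≤ _ := by omega
  intro z hz
  have hx1 : ∀ j, ‖z * ω ^ j‖ = 1 := by intro j; simp [hz, hω1]
  -- weights
  set W : ℕ → ℝ := fun j => ‖D.eval (z * ω ^ j)‖ ^ 4 with hW
  have hWs : ∑ j ∈ Finset.range (2 * n), W j = Z := by
    have := parseval (2 * n) (2 * n) le_rfl hM ω z hω hz c
    rw [hZ, hS]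
    push_cast at this
    rw [← this]
    apply Finset.sum_congr rfl
    intro j _
    rw [← hE, norm_pow, hW]; ring
  have hVs : ∑ j ∈ Finset.range (2 * n), ‖D.eval (z * ω ^ j)‖ ^ 2 = 2 * n * n := by
    have := parseval (2 * n) n (by omega) hM ω z hω hz (fun _ => 1)
    simp only [one_mul, ← hDe] at this
    rw [this]; simp
  have hdist : ∀ j, ‖z - ζ j‖ = ‖z * ω ^ j - 1‖ := by
    intro j
    have h1 : conj (ω ^ j) * ω ^ j = 1 := conj_mul_self_of_norm (by simp [hω1])
    have : z * ω ^ j - 1 = (z - ζ j) * ω ^ j := by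
      rw [sub_mul, hζ]; simp only; rw [h1]
    rw [this, norm_mul, norm_pow, hω1, one_pow, mul_one]
  have hWd : ∀ j, W j * ‖z - ζ j‖ ^ 2 ≤ 4 * ‖D.eval (z * ω ^ j)‖ ^ 2 := by
    intro j
    have h1 : ‖D.eval (z * ω ^ j)‖ * ‖z - ζ j‖ ≤ 2 := by
      rw [hdist, ← norm_mul, hDe, geom_sum_mul]
      refine (norm_sub_le _ _).trans ?_
      rw [norm_pow, hx1]; norm_num
    calc W j * ‖z - ζ j‖ ^ 2 = ‖D.eval (z * ω ^ j)‖ ^ 2 * (‖D.eval (z * ω ^ j)‖ * ‖z - ζ j‖) ^ 2 := by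
          rw [hW]; ring
      _ ≤ ‖D.eval (z * ω ^ j)‖ ^ 2 * 2 ^ 2 := by gcongr
      _ = _ := by ring
  have hconjD : ∀ x : ℂ, ‖x‖ = 1 → conj x ^ (2 * (n - 1)) * D.eval x ^ 4 = ((‖D.eval x‖ ^ 4 : ℝ) : ℂ) := by
    intro x hx
    have hxx := conj_mul_self_of_norm hx
    have h1 : conj (D.eval x) = conj x ^ (n - 1) * D.eval x := by
      rw [hDe, map_sum, Finset.mul_sum, ← Finset.sum_range_reflect]
      apply Finset.sum_congr rfl
      intro k hk
      have hk' := Finset.mem_range.1 hk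
      have : conj x ^ (n - 1) = conj x ^ (n - 1 - k) * conj x ^ k := by rw [← pow_add]; congr 1; omega
      rw [this, map_pow, mul_assoc, ← mul_pow, hxx, one_pow, mul_one]
    have h2 : ((‖D.eval x‖ ^ 4 : ℝ) : ℂ) = (D.eval x * conj (D.eval x)) ^ 2 := by
      rw [Complex.mul_conj, Complex.normSq_eq_norm_sq]; push_cast; ring
    rw [h2, h1]; ring
  have hg : conj z ^ (2 * (n - 1)) * eval z (∑ j ∈ Finset.range (2 * n), C ((F (ζ j) : ℂ) * ζ j ^ (2 * (n - 1)) / (Z : ℂ)) * (D.comp (C (ω ^ j) * X)) ^ 4) = ((∑ j ∈ Finset.range (2 * n), F (ζ j) * W j / Z : ℝ) : ℂ) := by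
    rw [eval_finsetSum, Finset.mul_sum, Complex.ofReal_sum]
    apply Finset.sum_congr rfl
    intro j _
    simp only [eval_mul, eval_C, eval_pow, eval_comp, eval_X]
    have := hconjD (z * ω ^ j) (hx1 j)
    rw [mul_comm (ω ^ j) z]
    rw [map_mul, mul_pow] at this
    push_cast at this
    rw [hW]
    push_cast
    rw [← this]
    ring
  rw [hg, ← Complex.ofReal_sub, Complex.norm_real, Real.norm_eq_abs]
  have hFz : F z - ∑ j ∈ Finset.range (2 * n), F (ζ j) * W j / Z = ∑ j ∈ Finset.range (2 * n), (F z - F (ζ j)) * (W j / Z) := by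
    simp_rw [sub_mul]
    have h1 : ∑ j ∈ Finset.range (2 * n), W j / Z = 1 := by
      rw [← Finset.sum_div, hWs, div_self hZ0.ne']
    rw [Finset.sum_sub_distrib, ← Finset.mul_sum, h1, mul_one]
    simp_rw [mul_div_assoc]
  rw [hFz]
  have hterm : ∀ j, |(F z - F (ζ j)) * (W j / Z)| ≤ L * (n:ℝ) ^ (-α) / Z * (W j + n ^ 2 * (4 * ‖D.eval (z * ω ^ j)‖ ^ 2)) := by
    intro j
    have hW0 : 0 ≤ W j := by rw [hW]; positivity
    rw [abs_mul, abs_of_nonneg (a := W j / Z) (by positivity)]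
    have h1 := hF z (ζ j) hz (hζ1 j)
    have h2 := rpow_aux α (n * ‖z - ζ j‖) hα0 hα1 (by positivity)
    rw [Real.mul_rpow (by positivity) (by positivity)] at h2
    have h3 : ‖z - ζ j‖ ^ α ≤ (n:ℝ) ^ (-α) * (1 + (n * ‖z - ζ j‖) ^ 2) := by
      calc ‖z - ζ j‖ ^ α = (n:ℝ) ^ (-α) * ((n:ℝ) ^ α * ‖z - ζ j‖ ^ α) := by
            rw [← mul_assoc, ← Real.rpow_add hn0]; simp
        _ ≤ _ := by gcongr
    calc |F z - F (ζ j)| * (W j / Z) ≤ (L * ((n:ℝ) ^ (-α) * (1 + (n * ‖z - ζ j‖) ^ 2))) * (W j / Z) := by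
          gcongr
          exact h1.trans (by gcongr)
      _ = L * (n:ℝ) ^ (-α) / Z * (W j + n ^ 2 * (W j * ‖z - ζ j‖ ^ 2)) := by ring
      _ ≤ _ := by
        apply mul_le_mul_of_nonneg_left _ (by positivity)
        have h5 := mul_le_mul_of_nonneg_left (hWd j) (by positivity : (0:ℝ) ≤ (n:ℝ) ^ 2)
        linarith
  refine (Finset.abs_sum_le_sum_abs _ _).trans ((Finset.sum_le_sum fun j _ => hterm j).trans ?_)
  rw [← Finset.mul_sum, Finset.sum_add_distrib, hWs, ← Finset.mul_sum, ← Finset.mul_sum, hVs]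
  have : (n:ℝ) ^ 2 * (4 * (2 * n * n)) ≤ 8 * Z := by
    rw [hZ]
    nlinarith [mul_le_mul_of_nonneg_left hS2 hn0.le]
  calc L * (n:ℝ) ^ (-α) / Z * (Z + n ^ 2 * (4 * (2 * n * n))) ≤ L * (n:ℝ) ^ (-α) / Z * (Z + 8 * Z) := by gcongr
    _ = _ := by field_simp; ring

end SHE


namespace SHE

lemma hardy_step (p : ℝ) (hp : 1 < p) (a b s j : ℝ) (ha : 0 ≤ a) (hb : 0 ≤ b) (hs : 0 ≤ s) (hj : 0 ≤ j)
    (h : s = (j + 1) * a - j * b) :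
    a ^ p ≤ (p / (p - 1)) ^ p * s ^ p + (p / (p - 1)) * (j * b ^ p - (j + 1) * a ^ p) := by
  have hp1 : 0 < p - 1 := by linarith
  have hp0 : 0 < p := by linarith
  have hpq : Real.HolderConjugate (p / (p - 1)) p := by
    rw [Real.holderConjugate_iff]
    refine ⟨by rw [lt_div_iff₀ hp1]; linarith, by field_simp; ring⟩
  have Y : ∀ y, 0 ≤ y → a ^ (p - 1) * y ≤ (p - 1) / p * a ^ p + y ^ p / p := by
    intro y hy
    have := Real.young_inequality_of_nonneg (a := a ^ (p - 1)) (b := y) (by positivity) hy hpq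
    rw [← Real.rpow_mul ha, show (p - 1) * (p / (p - 1)) = p by field_simp] at this
    refine this.trans (le_of_eq ?_)
    field_simp
  have e : a ^ p = a ^ (p - 1) * a := by
    rcases ha.eq_or_lt with h0 | h0
    · rw [← h0]; simp [hp0.ne']
    · rw [← Real.rpow_add_one h0.ne']; congr 1; ring
  have y1 := Y b hb
  have y2 := Y (p / (p - 1) * s) (by positivity)
  rw [Real.mul_rpow (by positivity) hs] at y2
  set q := p / (p - 1) with hq
  set A := a ^ p
  set Q := q ^ p * s ^ p
  set G := a ^ (p - 1)
  have hq1 : q * (p - 1) = p := by rw [hq]; field_simp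
  have hq0 : 0 < q := by positivity
  -- multiply
  have y1' : p * (G * b) ≤ (p - 1) * A + b ^ p := by
    have := mul_le_mul_of_nonneg_left y1 hp0.le
    refine this.trans (le_of_eq ?_); field_simp
  have y2' : p * (G * (q * s)) ≤ (p - 1) * A + Q := by
    have := mul_le_mul_of_nonneg_left y2 hp0.le
    refine this.trans (le_of_eq ?_); field_simp
  have y1j := mul_le_mul_of_nonneg_left y1' (mul_nonneg hq0.le hj)
  have e2 : G * s = (j + 1) * A - j * (G * b) := by rw [h, e]; ring
  have e3 : p * (G * (q * s)) = p * q * ((j + 1) * A) - q * j * (p * (G * b)) := by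
    rw [show p * (G * (q * s)) = p * q * (G * s) by ring, e2]; ring
  have e4 : p * q * ((j + 1) * A) - q * j * ((p - 1) * A) = q * (j + 1) * A + p * A := by
    have : p * q * ((j + 1) * A) - q * j * ((p - 1) * A) = (q * (p - 1)) * A + q * (j + 1) * A := by ring
    rw [this, hq1]; ring
  nlinarith

lemma hardy (p : ℝ) (hp : 1 < p) (s : ℕ → ℝ) (hs : ∀ i, 0 ≤ s i) (n : ℕ) :
    ∑ j ∈ Finset.range n, ((∑ m ∈ Finset.range (j + 1), s m) / (j + 1)) ^ p ≤ 
      (p / (p - 1)) ^ p * ∑ j ∈ Finset.range n, s j ^ p := by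
  have hp1 : 0 < p - 1 := by linarith
  set σ : ℕ → ℝ := fun j => (∑ m ∈ Finset.range (j + 1), s m) / (j + 1) with hσ
  have hσ0 : ∀ j, 0 ≤ σ j := fun j => div_nonneg (Finset.sum_nonneg fun i _ => hs i) (by positivity)
  have hσe : ∀ j : ℕ, ((j:ℝ) + 1) * σ j = ∑ m ∈ Finset.range (j + 1), s m := by
    intro j; rw [hσ]; field_simp
  suffices h : ∑ j ∈ Finset.range n, σ j ^ p ≤ 
      (p / (p - 1)) ^ p * ∑ j ∈ Finset.range n, s j ^ p - (p / (p - 1)) * (n * σ (n - 1) ^ p) by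
    have h2 : 0 ≤ (p / (p - 1)) * (n * σ (n - 1) ^ p) := by
      have := hσ0 (n - 1); positivity
    linarith
  induction n with
  | zero => simp
  | succ n ih =>
    rw [Finset.sum_range_succ, Finset.sum_range_succ]
    have := hardy_step p hp (σ n) (σ (n - 1)) (s n) n (hσ0 _) (hσ0 _) (hs _) (by positivity) (by
      rw [hσe, Finset.sum_range_succ]
      rcases n with _ | n
      · simp
      · have := hσe n
        push_cast
        linarith)
    rw [Nat.add_sub_cancel]
    push_cast
    linarith

end SHE


namespace SHE
open Polynomial ComplexConjugate
open scoped InnerProductSpace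

section Op
variable {H : Type*} [NormedAddCommGroup H] [InnerProductSpace ℂ H] [CompleteSpace H]

lemma unit_spec {U : H →L[ℂ] H} (hU : U ∈ unitary (H →L[ℂ] H)) {z : ℂ} (hz : z ∈ spectrum ℂ U) : ‖z‖ = 1 := by
  have := spectrum.subset_circle_of_unitary hU hz
  simpa using this

lemma unit_normal {U : H →L[ℂ] H} (hU : U ∈ unitary (H →L[ℂ] H)) : IsStarNormal U :=
  ⟨by rw [Commute, SemiconjBy, (Unitary.mem_iff.1 hU).1, (Unitary.mem_iff.1 hU).2]⟩

lemma lau_eq {U : H →L[ℂ] H} (hU : U ∈ unitary (H →L[ℂ] H)) (m : ℕ) (P : ℂ[X]) : 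
    star U ^ m * aeval U P = cfc (fun z : ℂ => conj z ^ m * P.eval z) U := by
  have := unit_normal hU
  rw [cfc_mul (fun z : ℂ => conj z ^ m) (fun z => P.eval z) U (by fun_prop) (by fun_prop), cfc_polynomial P U, 
    cfc_pow (fun z : ℂ => conj z) m U (by fun_prop)]
  congr 2
  exact (cfc_star_id (R := ℂ) (a := U)).symm

lemma lau_norm {U : H →L[ℂ] H} (hU : U ∈ unitary (H →L[ℂ] H)) (m : ℕ) (P : ℂ[X]) (M : ℝ) (hM0 : 0 ≤ M)
    (hM : ∀ z : ℂ, ‖z‖ = 1 → ‖P.eval z‖ ≤ M) : ‖star U ^ m * aeval U P‖ ≤ M := by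
  rw [lau_eq hU]
  apply norm_cfc_le hM0
  intro z hz
  have hz1 := unit_spec hU hz
  rw [norm_mul, norm_pow, RCLike.norm_conj, hz1, one_pow, one_mul]
  exact hM z hz1

lemma aeval_norm {U : H →L[ℂ] H} (hU : U ∈ unitary (H →L[ℂ] H)) (P : ℂ[X]) (M : ℝ) (hM0 : 0 ≤ M)
    (hM : ∀ z : ℂ, ‖z‖ = 1 → ‖P.eval z‖ ≤ M) : ‖aeval U P‖ ≤ M := by
  simpa using lau_norm hU 0 P M hM0 hM

lemma sumsq {ι : Type*} (s : Finset ι) (u : ι → (H →L[ℂ] H)) (K : ℝ) (hK : ‖∑ l ∈ s, star (u l) * u l‖ ≤ K) (x : H) :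
    ∑ l ∈ s, ‖u l x‖ ^ 2 ≤ K * ‖x‖ ^ 2 := by
  have h1 : ∀ l, ‖u l x‖ ^ 2 = RCLike.re ⟪x, (star (u l) * u l) x⟫_ℂ := by
    intro l
    rw [ContinuousLinearMap.mul_apply, ContinuousLinearMap.star_eq_adjoint, ContinuousLinearMap.adjoint_inner_right,
      inner_self_eq_norm_sq]
  simp_rw [h1]
  rw [← map_sum, ← inner_sum, ← ContinuousLinearMap.sum_apply]
  calc _ ≤ ‖⟪x, (∑ l ∈ s, star (u l) * u l) x⟫_ℂ‖ := RCLike.re_le_norm _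
    _ ≤ ‖x‖ * ‖(∑ l ∈ s, star (u l) * u l) x‖ := norm_inner_le_norm _ _
    _ ≤ ‖x‖ * (K * ‖x‖) := by gcongr; exact ContinuousLinearMap.le_of_opNorm_le _ hK x
    _ = _ := by ring

lemma bern_op {U V : H →L[ℂ] H} (hU : U ∈ unitary (H →L[ℂ] H)) (hV : V ∈ unitary (H →L[ℂ] H)) (N : ℕ) (P : ℂ[X])
    (hP : P.natDegree ≤ N) (M : ℝ) (hM0 : 0 ≤ M) (hM : ∀ z : ℂ, ‖z‖ = 1 → ‖P.eval z‖ ≤ M) {j : ℕ} {κ : ℝ} 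
    (h : KF j (U - V) κ) : KF j (aeval U P - aeval V P) (N * M * κ) := by
  rw [telescope U V N P hP]
  have hUn := unit_normal hU
  have hcomm : ∀ q : ℂ[X], star (aeval U q) * aeval U q = cfc (fun z : ℂ => conj (q.eval z) * q.eval z) U := by
    intro q
    rw [cfc_mul (fun z : ℂ => conj (q.eval z)) (fun z => q.eval z) U (by fun_prop) (by fun_prop), 
      ← cfc_polynomial q U]
    congr 1
    exact (cfc_star (fun z => q.eval z) U).symm
  have hcomm' : ∀ q : ℂ[X], star (star (aeval U q)) * star (aeval U q) = star (aeval U q) * aeval U q := by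
    intro q
    rw [star_star, ← cfc_polynomial q U, ← cfc_star, ← cfc_mul _ _ U (by fun_prop) (by fun_prop), ← cfc_mul _ _ U (by fun_prop) (by fun_prop)]
    congr 1; ext z; ring
  have hb : ‖∑ l ∈ Finset.range N, star (aeval U (divX^[l + 1] P)) * aeval U (divX^[l + 1] P)‖ ≤ M ^ 2 * N := by
    simp_rw [hcomm]
    rw [← cfc_sum _ U _ (fun i _ => by fun_prop)]
    apply norm_cfc_le (by positivity)
    intro z hz
    refine le_trans ?_ (bern_scalar N P hP M hM z (unit_spec hU hz))
    rw [Finset.sum_apply]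
    refine (norm_sum_le _ _).trans (Finset.sum_le_sum fun l _ => ?_)
    rw [norm_mul, RCLike.norm_conj, sq]
  have hVl : ∀ l, V ^ l ∈ unitary (H →L[ℂ] H) := fun l => pow_mem hV l
  have key := h.schur (Finset.range N) (fun l => aeval U (divX^[l + 1] P)) (fun l => V ^ l) (M * √N) (√N) (by positivity) (by positivity)
    (fun x => by
      refine (sumsq _ _ _ hb x).trans (le_of_eq ?_)
      rw [mul_pow, mul_pow, Real.sq_sqrt (by positivity)])
    (fun x => by
      refine (sumsq _ (fun l => star (aeval U (divX^[l + 1] P))) _ (by simp_rw [hcomm']; exact hb) x).trans (le_of_eq ?_)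
      rw [mul_pow, mul_pow, Real.sq_sqrt (by positivity)])
    (fun x => by
      refine (sumsq _ _ N ?_ x).trans (le_of_eq ?_)
      · simp_rw [(Unitary.mem_iff.1 (hVl _)).1]
        refine (norm_sum_le _ _).trans ?_
        refine (Finset.sum_le_sum (g := fun _ => (1:ℝ)) fun l _ => ContinuousLinearMap.norm_id_le).trans ?_
        simp
      rw [mul_pow, Real.sq_sqrt (by positivity)])
    (fun x => by
      refine (sumsq _ (fun l => star (V ^ l)) N ?_ x).trans (le_of_eq ?_)
      · simp_rw [star_star, (Unitary.mem_iff.1 (hVl _)).2]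
        refine (norm_sum_le _ _).trans ?_
        refine (Finset.sum_le_sum (g := fun _ => (1:ℝ)) fun l _ => ContinuousLinearMap.norm_id_le).trans ?_
        simp
      rw [mul_pow, Real.sq_sqrt (by positivity)])
  refine key.mono (le_of_eq ?_)
  have : √(N:ℝ) * √N = N := Real.mul_self_sqrt (by positivity)
  calc M * √N * √N * κ = M * (√N * √N) * κ := by ring
    _ = _ := by rw [this]; ring

lemma unit_norm_le {U : H →L[ℂ] H} (hU : U ∈ unitary (H →L[ℂ] H)) : ‖U‖ ≤ 1 := by
  simpa using aeval_norm hU X 1 zero_le_one (fun z hz => by simp [hz])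

lemma star_pow_op {U V : H →L[ℂ] H} (hU : U ∈ unitary (H →L[ℂ] H)) (hV : V ∈ unitary (H →L[ℂ] H)) (m : ℕ) {j : ℕ} {κ : ℝ} 
    (h : KF j (U - V) κ) : KF j (star U ^ m - star V ^ m) (m * κ) := by
  have hU' := Unitary.star_mem hU
  have hV' := Unitary.star_mem hV
  have h1 : KF j (star U - star V) κ := by
    have := h.mul (- star U) (star V) 1 1 (by rw [norm_neg]; exact unit_norm_le hU') (unit_norm_le hV')
    have e : - star U * (U - V) * star V = star U - star V := by
      rw [mul_sub, sub_mul, neg_mul, neg_mul, neg_mul, (Unitary.mem_iff.1 hU).1, neg_mul, mul_assoc, 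
        (Unitary.mem_iff.1 hV).2]
      simp; abel
    rw [e] at this
    simpa using this
  have := bern_op hU' hV' m (X ^ m) (by simp) 1 zero_le_one (fun z hz => by simp [hz]) h1
  simpa using this

lemma lau_op {U V : H →L[ℂ] H} (hU : U ∈ unitary (H →L[ℂ] H)) (hV : V ∈ unitary (H →L[ℂ] H)) (m : ℕ) (P : ℂ[X])
    (hP : P.natDegree ≤ 2 * m) (M : ℝ) (hM0 : 0 ≤ M) (hM : ∀ z : ℂ, ‖z‖ = 1 → ‖P.eval z‖ ≤ M) {j : ℕ} {κ : ℝ} 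
    (h : KF j (U - V) κ) : KF j (star U ^ m * aeval U P - star V ^ m * aeval V P) (3 * m * M * κ) := by
  have h1 := (bern_op hU hV _ P hP M hM0 hM h).mul (star U ^ m) 1 1 1 
    (unit_norm_le (pow_mem (Unitary.star_mem hU) m)) ContinuousLinearMap.norm_id_le
  have h2 := (star_pow_op hU hV m h).mul 1 (aeval V P) 1 M ContinuousLinearMap.norm_id_le (aeval_norm hV P M hM0 hM)
  have := KF.add _ _ _ _ h1 h2
  have e : star U ^ m * aeval U P - star V ^ m * aeval V P = star U ^ m * (aeval U P - aeval V P) * 1 + 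
      1 * (star U ^ m - star V ^ m) * aeval V P := by noncomm_ring
  rw [e]
  refine this.mono (le_of_eq ?_)
  push_cast; ring

end Op
end SHE


namespace SHE
open Polynomial ComplexConjugate
open scoped InnerProductSpace

section Op2
variable {H : Type*} [NormedAddCommGroup H] [InnerProductSpace ℂ H] [CompleteSpace H]

lemma hold_cont (F : ℂ → ℝ) (L α : ℝ) (hα0 : 0 < α) 
    (hF : ∀ z w : ℂ, ‖z‖ = 1 → ‖w‖ = 1 → |F z - F w| ≤ L * ‖z - w‖ ^ α) : 
    ContinuousOn (fun z => (F z : ℂ)) (Metric.sphere 0 1) := by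
  intro w hw
  have hw' : ‖w‖ = 1 := by simpa using hw
  apply Complex.continuous_ofReal.continuousAt.comp_continuousWithinAt
  rw [ContinuousWithinAt, tendsto_iff_norm_sub_tendsto_zero]
  have h1 : Filter.Tendsto (fun z : ℂ => L * ‖z - w‖ ^ α) (nhdsWithin w (Metric.sphere 0 1)) (nhds 0) := by
    have : ContinuousAt (fun z : ℂ => L * ‖z - w‖ ^ α) w := by
      apply ContinuousAt.mul continuousAt_const
      apply ContinuousAt.rpow_const (by fun_prop) (Or.inr hα0.le)
    have h2 := this.tendsto
    simp only [sub_self, norm_zero, Real.zero_rpow hα0.ne', mul_zero] at h2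
    exact h2.mono_left nhdsWithin_le_nhds
  refine squeeze_zero' (Filter.Eventually.of_forall fun _ => norm_nonneg _) ?_ h1
  filter_upwards [self_mem_nhdsWithin] with z hz
  exact hF z w (by simpa using hz) hw'

lemma sv_unit {U V : H →L[ℂ] H} (hU : U ∈ unitary (H →L[ℂ] H)) (hV : V ∈ unitary (H →L[ℂ] H)) 
    (F : ℂ → ℝ) (L α : ℝ) (hα0 : 0 < α) (hα1 : α < 1) (hL : 0 ≤ L) 
    (hF : ∀ z w : ℂ, ‖z‖ = 1 → ‖w‖ = 1 → |F z - F w| ≤ L * ‖z - w‖ ^ α) {j : ℕ} {κ : ℝ} 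
    (h : KF j (U - V) κ) (K : ℕ) :
    singularValue (cfc (fun z => (F z : ℂ)) U - cfc (fun z => (F z : ℂ)) V) j ≤ 
      18 * L * ((2:ℝ) ^ K) ^ (-α) + 2 * (216 * L * κ * (((2:ℝ) ^ K) ^ (1 - α) / ((2:ℝ) ^ (1 - α) - 1))) / (j + 1) := by
  have hκ := h.nonneg
  have hJ := fun k : ℕ => jackson F L α hα0 hα1 hL hF (2 ^ k) Nat.one_le_two_pow
  choose P hPd hPe using hJ
  set b : ℝ := (2:ℝ) ^ (1 - α) with hb
  have hb1 : 1 < b := Real.one_lt_rpow (by norm_num) (by linarith)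
  have hbk : ∀ k : ℕ, ((2:ℝ) ^ k) ^ (1 - α) = b ^ k := by
    intro k
    rw [hb, ← Real.rpow_natCast, ← Real.rpow_natCast, ← Real.rpow_mul (by norm_num), ← Real.rpow_mul (by norm_num), mul_comm]
  set g : ℕ → (H →L[ℂ] H) → (H →L[ℂ] H) := fun k W => star W ^ (2 * (2 ^ k - 1)) * aeval W (P k) with hg
  have hgk : ∀ K, KF j (g K U - g K V) (216 * L * κ * ∑ k ∈ Finset.range K, b ^ k) := by
    intro K
    induction K with
    | zero =>
      have h0 : (P 0).natDegree ≤ 0 := by simpa using hPd 0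
      rw [hg]
      simp only
      rw [eq_C_of_natDegree_le_zero h0]
      simpa using KF.zero j
    | succ k ih =>
      have hk1 : 1 ≤ 2 ^ k := Nat.one_le_two_pow
      have hk2 : 2 ^ (k + 1) = 2 * 2 ^ k := by ring
      set Q : ℂ[X] := P (k + 1) - X ^ (2 * 2 ^ k) * P k with hQ
      have hm : 2 * (2 ^ (k + 1) - 1) = 2 * (2 ^ k - 1) + 2 * 2 ^ k := by omega
      have hW : ∀ W : H →L[ℂ] H, W ∈ unitary (H →L[ℂ] H) → 
          g (k + 1) W - g k W = star W ^ (2 * (2 ^ (k + 1) - 1)) * aeval W Q := by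
        intro W hW
        have h1 : star W ^ (2 * 2 ^ k) * W ^ (2 * 2 ^ k) = 1 := by
          rw [← star_pow]; exact (Unitary.mem_iff.1 (pow_mem hW _)).1
        rw [hQ, map_sub, mul_sub, hg]
        simp only
        rw [map_mul, map_pow, aeval_X]
        congr 1
        rw [hm, pow_add, mul_assoc, ← mul_assoc (star W ^ (2 * 2 ^ k)), h1, one_mul]
      have hQd : Q.natDegree ≤ 2 * (2 * (2 ^ (k + 1) - 1)) := by
        refine (natDegree_sub_le _ _).trans (max_le ?_ ?_)
        · have := hPd (k + 1); omega
        · refine natDegree_mul_le.trans ?_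
          rw [natDegree_X_pow]
          have := hPd k
          omega
      have hQM : ∀ z : ℂ, ‖z‖ = 1 → ‖Q.eval z‖ ≤ 18 * L * ((2:ℝ) ^ k) ^ (-α) := by
        intro z hz
        have h1 := hPe k z hz
        have h2 := hPe (k + 1) z hz
        push_cast at h1 h2
        have h3 : ((2:ℝ) ^ (k + 1)) ^ (-α) ≤ ((2:ℝ) ^ k) ^ (-α) := by
          apply Real.rpow_le_rpow_of_nonpos (by positivity) _ (by linarith)
          gcongr <;> simp
        have hzz := conj_mul_self_of_norm hz
        have e : conj z ^ (2 * (2 ^ (k + 1) - 1)) * Q.eval z = 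
            ((F z : ℂ) - conj z ^ (2 * (2 ^ k - 1)) * (P k).eval z) - ((F z : ℂ) - conj z ^ (2 * (2 ^ (k + 1) - 1)) * (P (k + 1)).eval z) := by
          rw [hQ]
          simp only [eval_sub, eval_mul, eval_pow, eval_X]
          have : conj z ^ (2 * (2 ^ (k + 1) - 1)) * z ^ (2 * 2 ^ k) = conj z ^ (2 * (2 ^ k - 1)) := by
            rw [hm, pow_add, mul_assoc, ← mul_pow, hzz, one_pow, mul_one]
          rw [mul_sub, ← mul_assoc, this]; ring
        have e2 : ‖Q.eval z‖ = ‖conj z ^ (2 * (2 ^ (k + 1) - 1)) * Q.eval z‖ := by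
          rw [norm_mul, norm_pow, RCLike.norm_conj, hz, one_pow, one_mul]
        rw [e2, e]
        refine (norm_sub_le _ _).trans ?_
        have : 9 * L * ((2:ℝ) ^ (k + 1)) ^ (-α) ≤ 9 * L * ((2:ℝ) ^ k) ^ (-α) := by gcongr
        linarith
      have h1 := lau_op hU hV _ Q hQd _ (by positivity) hQM h
      have h2 := KF.add _ _ _ _ ih h1
      have e : g (k + 1) U - g (k + 1) V = g k U - g k V + (star U ^ (2 * (2 ^ (k + 1) - 1)) * aeval U Q - star V ^ (2 * (2 ^ (k + 1) - 1)) * aeval V Q) := by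
        rw [← hW U hU, ← hW V hV]; abel
      rw [e]
      refine h2.mono ?_
      rw [Finset.sum_range_succ, mul_add]
      refine add_le_add le_rfl ?_
      have h4 : ((2 * (2 ^ (k + 1) - 1) : ℕ) : ℝ) ≤ 4 * 2 ^ k := by
        have : 2 * (2 ^ (k + 1) - 1) ≤ 4 * 2 ^ k := by omega
        exact_mod_cast this
      have h5 : (2:ℝ) ^ k * ((2:ℝ) ^ k) ^ (-α) = b ^ k := by
        rw [← hbk, sub_eq_add_neg, Real.rpow_add (by positivity), Real.rpow_one]
      calc 3 * ((2 * (2 ^ (k + 1) - 1) : ℕ) : ℝ) * (18 * L * ((2:ℝ) ^ k) ^ (-α)) * κ 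
          ≤ 3 * (4 * 2 ^ k) * (18 * L * ((2:ℝ) ^ k) ^ (-α)) * κ := by gcongr
        _ = 216 * L * κ * (2 ^ k * ((2:ℝ) ^ k) ^ (-α)) := by ring
        _ = _ := by rw [h5]
  have hnear : ∀ W : H →L[ℂ] H, W ∈ unitary (H →L[ℂ] H) → ‖cfc (fun z => (F z : ℂ)) W - g K W‖ ≤ 9 * L * ((2:ℝ) ^ K) ^ (-α) := by
    intro W hW
    rw [hg]
    simp only
    rw [lau_eq hW, ← cfc_sub _ _ W ((hold_cont F L α hα0 hF).mono (spectrum.subset_circle_of_unitary hW)) (by fun_prop)]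
    apply norm_cfc_le (by positivity)
    intro z hz
    have := hPe K z (unit_spec hW hz)
    push_cast at this
    exact this
  have e : cfc (fun z => (F z : ℂ)) U - cfc (fun z => (F z : ℂ)) V = (g K U - g K V) + 
      ((cfc (fun z => (F z : ℂ)) U - g K U) - (cfc (fun z => (F z : ℂ)) V - g K V)) := by abel
  rw [e]
  refine (sv_add_le _ _ _).trans ?_
  have h1 := (hgk K).sv
  have h2 := norm_sub_le (cfc (fun z => (F z : ℂ)) U - g K U) (cfc (fun z => (F z : ℂ)) V - g K V)
  have h3 := hnear U hU
  have h4 := hnear V hV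
  have h5 : ∑ k ∈ Finset.range K, b ^ k ≤ ((2:ℝ) ^ K) ^ (1 - α) / (b - 1) := by
    rw [geom_sum_eq hb1.ne', hbk]
    have : 0 < b - 1 := by linarith
    gcongr
    linarith
  have h6 : 2 * (216 * L * κ * ∑ k ∈ Finset.range K, b ^ k) / (j + 1) ≤ 2 * (216 * L * κ * (((2:ℝ) ^ K) ^ (1 - α) / (b - 1))) / (j + 1) := by
    gcongr
  linarith

/-- resolvent -/
noncomputable def res (l : ℝ) (A : H →L[ℂ] H) : H →L[ℂ] H := cfc (fun x : ℂ => (x + l * Complex.I)⁻¹) A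

/-- Cayley -/
noncomputable def cay (l : ℝ) (x : ℂ) : ℂ := (x - l * Complex.I) * (x + l * Complex.I)⁻¹

lemma spec_ne {A : H →L[ℂ] H} (hA : IsSelfAdjoint A) {l : ℝ} (hl : 0 < l) {z : ℂ} (hz : z ∈ spectrum ℂ A) :
    z + l * Complex.I ≠ 0 := by
  have := hA.im_eq_zero_of_mem_spectrum hz
  intro h
  have h2 := congrArg Complex.im h
  simp [this] at h2
  linarith

lemma res_cont {A : H →L[ℂ] H} (hA : IsSelfAdjoint A) {l : ℝ} (hl : 0 < l) :
    ContinuousOn (fun x : ℂ => (x + l * Complex.I)⁻¹) (spectrum ℂ A) := by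
  apply ContinuousOn.inv₀ (by fun_prop)
  intro z hz
  exact spec_ne hA hl hz

lemma res_mul {A : H →L[ℂ] H} (hA : IsSelfAdjoint A) {l : ℝ} (hl : 0 < l) : 
    res l A * A = 1 - (l * Complex.I) • res l A ∧ A * res l A = 1 - (l * Complex.I) • res l A := by
  have hn : IsStarNormal A := hA.isStarNormal
  have hc := res_cont hA hl
  have e : cfc (fun x : ℂ => 1 - (l * Complex.I) * (x + l * Complex.I)⁻¹) A = 1 - (l * Complex.I) • res l A := by
    rw [cfc_sub _ _ A (by fun_prop) (by fun_prop), cfc_const_mul _ _ A hc, cfc_const_one ℂ A]; rfl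
  rw [← e]
  constructor
  · conv_lhs => rw [← cfc_id ℂ A]
    rw [cfc_id ℂ A, res]
    conv_lhs => enter [2]; rw [← cfc_id ℂ A]
    rw [← cfc_mul _ _ A hc (by fun_prop)]
    apply cfc_congr
    intro z hz
    have := spec_ne hA hl hz
    simp only [id]
    field_simp; ring
  · rw [res]
    conv_lhs => enter [1]; rw [← cfc_id ℂ A]
    rw [← cfc_mul _ _ A (by fun_prop) hc]
    apply cfc_congr
    intro z hz
    have := spec_ne hA hl hz
    simp only [id]
    field_simp; ring

lemma res_norm {A : H →L[ℂ] H} (hA : IsSelfAdjoint A) {l : ℝ} (hl : 0 < l) : ‖res l A‖ ≤ 1 / l := by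
  apply norm_cfc_le (by positivity)
  intro z hz
  rw [norm_inv, one_div]
  apply inv_anti₀ hl
  have h1 := Complex.abs_im_le_norm (z + l * Complex.I)
  simp only [Complex.add_im, hA.im_eq_zero_of_mem_spectrum hz, Complex.mul_im, Complex.ofReal_re, Complex.I_im, Complex.ofReal_im, Complex.I_re] at h1
  have h2 := le_abs_self (0 + (l * 1 + 0 * 0))
  linarith

lemma cay_eq {A : H →L[ℂ] H} (hA : IsSelfAdjoint A) {l : ℝ} (hl : 0 < l) : 
    cfc (cay l) A = 1 - (2 * l * Complex.I) • res l A := by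
  have hn : IsStarNormal A := hA.isStarNormal
  have hc := res_cont hA hl
  have e : cfc (fun x : ℂ => 1 - (2 * l * Complex.I) * (x + l * Complex.I)⁻¹) A = 1 - (2 * l * Complex.I) • res l A := by
    rw [cfc_sub _ _ A (by fun_prop) (by fun_prop), cfc_const_mul _ _ A hc, cfc_const_one ℂ A]; rfl
  rw [← e]
  apply cfc_congr
  intro z hz
  have := spec_ne hA hl hz
  simp only [cay]
  field_simp; ring

lemma cay_cont {A : H →L[ℂ] H} (hA : IsSelfAdjoint A) {l : ℝ} (hl : 0 < l) :
    ContinuousOn (cay l) (spectrum ℂ A) := by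
  have hc := res_cont hA hl
  unfold cay
  fun_prop

lemma cay_norm {A : H →L[ℂ] H} (hA : IsSelfAdjoint A) {l : ℝ} (hl : 0 < l) {z : ℂ} (hz : z ∈ spectrum ℂ A) : ‖cay l z‖ = 1 := by
  have h1 := spec_ne hA hl hz
  have h2 : z - l * Complex.I = conj (z + l * Complex.I) := by
    rw [map_add, map_mul, Complex.conj_I, Complex.conj_ofReal]
    have : conj z = z := Complex.conj_eq_iff_im.2 (hA.im_eq_zero_of_mem_spectrum hz)
    rw [this]; ring
  rw [cay, h2, norm_mul, RCLike.norm_conj, norm_inv, mul_inv_cancel₀ (by simpa using h1)]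

lemma cay_unitary {A : H →L[ℂ] H} (hA : IsSelfAdjoint A) {l : ℝ} (hl : 0 < l) : cfc (cay l) A ∈ unitary (H →L[ℂ] H) := by
  have hn : IsStarNormal A := hA.isStarNormal
  rw [cfc_unitary_iff (cay l) A hn (cay_cont hA hl)]
  intro z hz
  exact conj_mul_self_of_norm (cay_norm hA hl hz)

lemma cay_KF {A B : H →L[ℂ] H} (hA : IsSelfAdjoint A) (hB : IsSelfAdjoint B) {l : ℝ} (hl : 0 < l) {j : ℕ} {κ : ℝ} 
    (h : KF j (A - B) κ) : KF j (cfc (cay l) A - cfc (cay l) B) (2 * κ / l) := by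
  have h1 := h.mul ((2 * l * Complex.I) • res l A) (res l B) 2 (1 / l) (by
    rw [norm_smul]
    have := res_norm hA hl
    simp only [norm_mul, Complex.norm_I, mul_one, Complex.norm_real, Complex.norm_ofNat, Real.norm_eq_abs, abs_of_pos hl]
    calc 2 * l * ‖res l A‖ ≤ 2 * l * (1 / l) := by gcongr
      _ = 2 := by field_simp) (res_norm hB hl)
  have e : cfc (cay l) A - cfc (cay l) B = ((2 * l * Complex.I) • res l A) * (A - B) * res l B := by
    rw [cay_eq hA hl, cay_eq hB hl, smul_mul_assoc, smul_mul_assoc, mul_sub, sub_mul, (res_mul hA hl).1, mul_assoc (res l A) B, (res_mul hB hl).2, sub_mul, mul_sub, one_mul, mul_one, smul_mul_assoc, mul_smul_comm]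
    simp only [smul_sub]
    abel
  rw [e]
  refine h1.mono (le_of_eq ?_)
  ring

/-- inverse Cayley, truncated -/
noncomputable def tau (z : ℂ) : ℝ := - z.im / max (1 - z.re) 1

lemma tau_lip (z w : ℂ) (hz : ‖z‖ = 1) (hw : ‖w‖ = 1) : |tau z - tau w| ≤ 2 * ‖z - w‖ := by
  unfold tau
  set m := max (1 - z.re) 1
  set n := max (1 - w.re) 1
  have hm : 1 ≤ m := le_max_right _ _
  have hn : 1 ≤ n := le_max_right _ _
  have hmn : |n - m| ≤ ‖z - w‖ := by
    refine (abs_max_sub_max_le_abs _ _ _).trans ?_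
    have := Complex.abs_re_le_norm (z - w)
    rw [Complex.sub_re] at this
    rwa [show 1 - w.re - (1 - z.re) = z.re - w.re by ring]
  have him : |z.im - w.im| ≤ ‖z - w‖ := by simpa using Complex.abs_im_le_norm (z - w)
  have hwi : |w.im| ≤ 1 := hw ▸ Complex.abs_im_le_norm w
  have e : - z.im / m - - w.im / n = (-(z.im - w.im) + w.im / n * (m - n)) / m := by
    field_simp; ring
  rw [e, abs_div, abs_of_pos (by linarith : 0 < m)]
  refine (div_le_self (abs_nonneg _) hm).trans ?_
  refine (abs_add_le _ _).trans ?_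
  rw [abs_neg, abs_mul, abs_div, abs_of_pos (by linarith : 0 < n), abs_sub_comm m n]
  have h1 : |w.im| / n ≤ 1 := (div_le_self (abs_nonneg _) hn).trans hwi
  have := mul_le_mul h1 hmn (abs_nonneg _) zero_le_one
  linarith

lemma tau_cay {l x : ℝ} (hl : 0 < l) (hx : |x| ≤ l) : l * tau (cay l x) = x := by
  have hd : 0 < x ^ 2 + l ^ 2 := by positivity
  have hx2 : x ^ 2 ≤ l ^ 2 := sq_le_sq' (by linarith [abs_le.1 hx]) (abs_le.1 hx).2
  have h1 : (cay l x).re = (x ^ 2 - l ^ 2) / (x ^ 2 + l ^ 2) := by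
    simp [cay, Complex.inv_re, Complex.inv_im, Complex.normSq_apply]
    field_simp; ring
  have h2 : (cay l x).im = - (2 * l * x) / (x ^ 2 + l ^ 2) := by
    simp [cay, Complex.inv_re, Complex.inv_im, Complex.normSq_apply]
    field_simp; ring
  have h3 : 1 - (cay l x).re = 2 * l ^ 2 / (x ^ 2 + l ^ 2) := by rw [h1]; field_simp; ring
  have h4 : 1 ≤ 1 - (cay l x).re := by rw [h3, le_div_iff₀ hd]; linarith
  rw [tau, max_eq_left h4, h3, h2]
  field_simp

end Op2
end SHE


namespace SHE
open Polynomial ComplexConjugate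

section Fin
variable {H : Type*} [NormedAddCommGroup H] [InnerProductSpace ℂ H] [CompleteSpace H]

lemma sv_main (α : ℝ) (hα0 : 0 < α) (hα1 : α < 1) (f : ℝ → ℝ) (C : ℝ) (hC : 0 ≤ C)
    (hf : ∀ x y : ℝ, |f x - f y| ≤ C * |x - y| ^ α) (A B : H →L[ℂ] H) (hA : IsSelfAdjoint A) (hB : IsSelfAdjoint B)
    (hAB : A ≠ B) (j : ℕ) :
    singularValue (cfc f A - cfc f B) j ≤ (72 + 41472 / ((2:ℝ) ^ (1 - α) - 1)) * C * 
      ((∑ m ∈ Finset.range (j + 1), singularValue (A - B) m) / (j + 1)) ^ α := by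
  have hT : 0 < ‖A - B‖ := norm_pos_iff.2 (sub_ne_zero.2 hAB)
  set l : ℝ := ‖A‖ + ‖B‖ with hl
  have hTl : ‖A - B‖ ≤ l := norm_sub_le _ _
  have hl0 : 0 < l := hT.trans_le hTl
  set σ : ℝ := (∑ m ∈ Finset.range (j + 1), singularValue (A - B) m) / (j + 1) with hσ
  have hj : (0:ℝ) < j + 1 := by positivity
  have hσl : σ ≤ l := by
    rw [hσ, div_le_iff₀ hj]
    calc _ ≤ ∑ m ∈ Finset.range (j + 1), l := Finset.sum_le_sum fun m _ => (sv_le_norm _ _).trans hTl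
      _ = _ := by simp; ring
  have hσ0 : 0 < σ := by
    apply div_pos _ hj
    refine hT.trans_le ?_
    rw [← sv_zero (A - B)]
    exact Finset.single_le_sum (f := fun m => singularValue (A - B) m) (fun i _ => sv_nonneg _ _) (by simp)
  have hinit := KF.init (A - B) j
  have hsum : ∑ m ∈ Finset.range (j + 1), singularValue (A - B) m = (j + 1) * σ := by
    rw [hσ]; field_simp
  rw [hsum] at hinit
  have hK := cay_KF hA hB hl0 hinit
  set F : ℂ → ℝ := fun z => f (l * tau z) with hFd
  set L : ℝ := 2 * C * l ^ α with hLd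
  have hL : 0 ≤ L := by positivity
  have hF : ∀ z w : ℂ, ‖z‖ = 1 → ‖w‖ = 1 → |F z - F w| ≤ L * ‖z - w‖ ^ α := by
    intro z w hz hw
    refine (hf _ _).trans ?_
    rw [← mul_sub, abs_mul, abs_of_pos hl0]
    calc C * (l * |tau z - tau w|) ^ α ≤ C * (l * (2 * ‖z - w‖)) ^ α := by
          gcongr; exact tau_lip z w hz hw
      _ = C * (l ^ α * ((2:ℝ) ^ α * ‖z - w‖ ^ α)) := by
          rw [Real.mul_rpow hl0.le (by positivity), Real.mul_rpow (by norm_num) (by positivity)]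
      _ ≤ C * (l ^ α * ((2:ℝ) ^ (1:ℝ) * ‖z - w‖ ^ α)) := by gcongr; norm_num
      _ = _ := by rw [Real.rpow_one]; ring
  have hcf : ∀ T : H →L[ℂ] H, IsSelfAdjoint T → ‖T‖ ≤ l → cfc f T = cfc (fun z => (F z : ℂ)) (cfc (cay l) T) := by
    intro T hTs hTn
    have hn : IsStarNormal T := hTs.isStarNormal
    rw [cfc_real_eq_complex f hTs, ← cfc_comp (fun z => (F z : ℂ)) (cay l) T hn ?_ (cay_cont hTs hl0)]
    · apply cfc_congr
      intro z hz
      have h1 := hTs.mem_spectrum_eq_re hz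
      have h2 : ‖z‖ ≤ l := by
        have h4 := spectrum.norm_le_norm_mul_of_mem hz
        have h5 : ‖(1 : H →L[ℂ] H)‖ ≤ 1 := ContinuousLinearMap.norm_id_le
        calc _ ≤ _ := h4
          _ ≤ ‖T‖ * 1 := by gcongr
          _ ≤ l := by linarith
      have h3 : |z.re| ≤ l := (Complex.abs_re_le_norm z).trans h2
      simp only [Function.comp, hFd]
      conv_rhs => rw [h1]
      rw [tau_cay hl0 h3]
    · apply (hold_cont F L α hα0 hF).mono
      rintro _ ⟨z, hz, rfl⟩
      simpa using cay_norm hTs hl0 hz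
  rw [hcf A hA (by rw [hl]; linarith [norm_nonneg B]), hcf B hB (by rw [hl]; linarith [norm_nonneg A])]
  set r : ℝ := σ / l with hr
  have hr0 : 0 < r := by positivity
  have hr1 : r ≤ 1 := by rw [hr, div_le_one hl0]; exact hσl
  obtain ⟨K, hK1, hK2⟩ := exists_nat_pow_near (x := 1 / r) (y := (2:ℝ)) (by rw [le_div_iff₀ hr0]; linarith) (by norm_num)
  refine (sv_unit (cay_unitary hA hl0) (cay_unitary hB hl0) F L α hα0 hα1 hL hF hK K).trans ?_
  have hb1 : 0 < (2:ℝ) ^ (1 - α) - 1 := by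
    have : 1 < (2:ℝ) ^ (1 - α) := Real.one_lt_rpow (by norm_num) (by linarith)
    linarith
  have t1 : ((2:ℝ) ^ K) ^ (-α) ≤ 2 * r ^ α := by
    have h1 : 1 / (2 * r) ≤ (2:ℝ) ^ K := by
      rw [pow_succ] at hK2
      rw [div_lt_iff₀ hr0] at hK2
      rw [div_le_iff₀ (by positivity)]
      linarith
    calc ((2:ℝ) ^ K) ^ (-α) ≤ (1 / (2 * r)) ^ (-α) := Real.rpow_le_rpow_of_nonpos (by positivity) h1 (by linarith)
      _ = (2 * r) ^ α := by rw [one_div, Real.inv_rpow (by positivity), Real.rpow_neg (by positivity), inv_inv]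
      _ = 2 ^ α * r ^ α := Real.mul_rpow (by norm_num) hr0.le
      _ ≤ 2 ^ (1:ℝ) * r ^ α := by gcongr; norm_num
      _ = _ := by rw [Real.rpow_one]
  have t2 : r * ((2:ℝ) ^ K) ^ (1 - α) ≤ r ^ α := by
    calc r * ((2:ℝ) ^ K) ^ (1 - α) ≤ r * (1 / r) ^ (1 - α) := by
          gcongr
      _ = r ^ (1:ℝ) * r ^ (-(1 - α)) := by rw [one_div, Real.inv_rpow hr0.le, Real.rpow_neg hr0.le, Real.rpow_one]
      _ = r ^ α := by rw [← Real.rpow_add hr0]; congr 1; ring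
  have t3 : L * r ^ α = 2 * C * σ ^ α := by
    have : l ^ α ≠ 0 := (Real.rpow_pos_of_pos hl0 α).ne'
    rw [hLd, hr, Real.div_rpow hσ0.le hl0.le]; field_simp
  have e1 : 2 * (216 * L * (2 * (24 * ((j + 1) * σ)) / l) * (((2:ℝ) ^ K) ^ (1 - α) / ((2:ℝ) ^ (1 - α) - 1))) / (j + 1) = 
      20736 / ((2:ℝ) ^ (1 - α) - 1) * L * (r * ((2:ℝ) ^ K) ^ (1 - α)) := by
    rw [hr]; field_simp; ring
  rw [e1]
  calc 18 * L * ((2:ℝ) ^ K) ^ (-α) + 20736 / ((2:ℝ) ^ (1 - α) - 1) * L * (r * ((2:ℝ) ^ K) ^ (1 - α)) 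
      ≤ 18 * L * (2 * r ^ α) + 20736 / ((2:ℝ) ^ (1 - α) - 1) * L * r ^ α := by
        apply add_le_add <;> gcongr
    _ = (36 + 20736 / ((2:ℝ) ^ (1 - α) - 1)) * (L * r ^ α) := by ring
    _ = _ := by rw [t3]; ring

lemma final (α p : ℝ) (hα0 : 0 < α) (hα1 : α < 1) (hp1 : 1 < p) (f : ℝ → ℝ) (C : ℝ) 
    (hf : ∀ x y : ℝ, |f x - f y| ≤ C * |x - y| ^ α) (A B : H →L[ℂ] H) (hA : IsSelfAdjoint A) (hB : IsSelfAdjoint B)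
    (hS : Summable (fun j : ℕ => singularValue (A - B) j ^ p)) :
    Summable (fun j : ℕ => singularValue (cfc f A - cfc f B) j ^ (p / α)) ∧
        (∑' j : ℕ, singularValue (cfc f A - cfc f B) j ^ (p / α)) ^ (α / p)
          ≤ ((72 + 41472 / ((2:ℝ) ^ (1 - α) - 1)) * ((p / (p - 1)) ^ p) ^ (α / p)) * C * (∑' j : ℕ, singularValue (A - B) j ^ p) ^ (α / p) := by
  have hC : 0 ≤ C := by
    have := (abs_nonneg _).trans (hf 1 0)
    simpa using this
  have hp0 : 0 < p := by linarith
  have hpp : 0 < p - 1 := by linarith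
  have hb1 : 0 < (2:ℝ) ^ (1 - α) - 1 := by
    have : 1 < (2:ℝ) ^ (1 - α) := Real.one_lt_rpow (by norm_num) (by linarith)
    linarith
  set D : ℝ := 72 + 41472 / ((2:ℝ) ^ (1 - α) - 1) with hD
  have hD0 : 0 < D := by positivity
  have hpa : p / α ≠ 0 := by positivity
  have hap : α / p ≠ 0 := by positivity
  set s : ℕ → ℝ := fun m => singularValue (A - B) m with hs
  have hs0 : ∀ m, 0 ≤ s m := fun m => sv_nonneg _ _
  set t : ℕ → ℝ := fun m => singularValue (cfc f A - cfc f B) m with ht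
  have ht0 : ∀ m, 0 ≤ t m := fun m => sv_nonneg _ _
  set S : ℝ := ∑' j, s j ^ p with hSd
  have hS0 : 0 ≤ S := tsum_nonneg fun j => Real.rpow_nonneg (hs0 j) _
  set σ : ℕ → ℝ := fun j => (∑ m ∈ Finset.range (j + 1), s m) / (j + 1) with hσ
  have hσ0 : ∀ j, 0 ≤ σ j := fun j => div_nonneg (Finset.sum_nonneg fun i _ => hs0 i) (by positivity)
  have key : ∀ j, t j ≤ D * C * σ j ^ α := by
    intro j
    by_cases hAB : A = B
    · have h0 : t j ≤ 0 := by
        have := sv_le_norm (cfc f A - cfc f B) j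
        rw [hAB, sub_self, norm_zero] at this
        simpa [ht, hAB] using this
      exact h0.trans (mul_nonneg (mul_nonneg hD0.le hC) (Real.rpow_nonneg (hσ0 j) _))
    · exact sv_main α hα0 hα1 f C hC hf A B hA hB hAB j
  have key2 : ∀ j, t j ^ (p / α) ≤ (D * C) ^ (p / α) * σ j ^ p := by
    intro j
    have h1 := hσ0 j
    calc t j ^ (p / α) ≤ (D * C * σ j ^ α) ^ (p / α) := Real.rpow_le_rpow (ht0 j) (key j) (by positivity)
      _ = (D * C) ^ (p / α) * σ j ^ p := by
        rw [Real.mul_rpow (by positivity) (by positivity), ← Real.rpow_mul h1]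
        congr 2; field_simp
  have key3 : ∀ n, ∑ j ∈ Finset.range n, t j ^ (p / α) ≤ (D * C) ^ (p / α) * ((p / (p - 1)) ^ p * S) := by
    intro n
    refine (Finset.sum_le_sum fun j _ => key2 j).trans ?_
    rw [← Finset.mul_sum]
    have h1 := hardy p hp1 s hs0 n
    have h2 : ∑ j ∈ Finset.range n, s j ^ p ≤ S := hS.sum_le_tsum _ fun j _ => Real.rpow_nonneg (hs0 j) _
    have h3 : (p / (p - 1)) ^ p * ∑ j ∈ Finset.range n, s j ^ p ≤ (p / (p - 1)) ^ p * S := by gcongr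
    exact mul_le_mul_of_nonneg_left (h1.trans h3) (by positivity)
  have hnn : ∀ j, 0 ≤ t j ^ (p / α) := fun j => Real.rpow_nonneg (ht0 j) _
  have hsm : Summable fun j => t j ^ (p / α) := summable_of_sum_range_le hnn key3
  refine ⟨hsm, ?_⟩
  have h1 : ∑' j, t j ^ (p / α) ≤ (D * C) ^ (p / α) * ((p / (p - 1)) ^ p * S) := Real.tsum_le_of_sum_range_le hnn key3
  calc (∑' j, t j ^ (p / α)) ^ (α / p) ≤ ((D * C) ^ (p / α) * ((p / (p - 1)) ^ p * S)) ^ (α / p) :=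
        Real.rpow_le_rpow (tsum_nonneg hnn) h1 (by positivity)
    _ = D * C * (((p / (p - 1)) ^ p) ^ (α / p) * S ^ (α / p)) := by
        rw [Real.mul_rpow (by positivity) (by positivity), Real.mul_rpow (by positivity) hS0, ← Real.rpow_mul (by positivity)]
        rw [show p / α * (α / p) = 1 by field_simp, Real.rpow_one]
    _ = _ := by ring

end Fin
end SHE

/-- Aleksandrov–Peller: for `0 < α < 1`, `1 < p < ∞` and `f` in the Hölder class `Λ_α`
with seminorm at most `C`, if `A − B ∈ S_p` then `f(A) − f(B) ∈ S_{p/α}` and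
`‖f(A) − f(B)‖_{S_{p/α}} ≤ c·C·‖A − B‖_{S_p}^α` with `c = c(α, p)`. -/
theorem schatten_holder_estimate
    (α p : ℝ) (hα0 : 0 < α) (hα1 : α < 1) (hp1 : 1 < p) :
    ∃ c : ℝ, 0 < c ∧
      ∀ (H : Type*) [NormedAddCommGroup H] [InnerProductSpace ℂ H] [CompleteSpace H],
      ∀ (f : ℝ → ℝ) (C : ℝ), (∀ x y : ℝ, |f x - f y| ≤ C * |x - y| ^ α) →
      ∀ (A B : H →L[ℂ] H), IsSelfAdjoint A → IsSelfAdjoint B →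
        Summable (fun j : ℕ => singularValue (A - B) j ^ p) →
        Summable (fun j : ℕ => singularValue (cfc f A - cfc f B) j ^ (p / α)) ∧
        (∑' j : ℕ, singularValue (cfc f A - cfc f B) j ^ (p / α)) ^ (α / p)
          ≤ c * C * (∑' j : ℕ, singularValue (A - B) j ^ p) ^ (α / p) := by
  have hb1 : 0 < (2:ℝ) ^ (1 - α) - 1 := by
    have : 1 < (2:ℝ) ^ (1 - α) := Real.one_lt_rpow (by norm_num) (by linarith)
    linarith
  have hpp : 0 < p - 1 := by linarith
  refine ⟨(72 + 41472 / ((2:ℝ) ^ (1 - α) - 1)) * ((p / (p - 1)) ^ p) ^ (α / p), by positivity, ?_⟩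
  intro H _ _ _ f C hf A B hA hB hS
  exact SHE.final α p hα0 hα1 hp1 f C hf A B hA hB hS
end
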